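/- (Statistical error of the Euler–Maruyama integrator, strong order p = 1, q = 1.) Assume A1, A2 and A3. Consider the Euler–Maruyama chain (X_n,V_n) with time step h and damping rate γ, started from initial data with E(|X₀|+|V₀|+1)² < ∞. There exists γ₀ > 0 such that whenever γ ≥ γ₀, there exist constants C, h₀ > 0 depending on γ such that for every 0 < h ≤ h₀ and every integer N ≥ 1: E[((1/N)·Σ_{n=0}^{N−1} f(X_n,V_n) − π(f))²] ≤ C·(h + 1/(Nh))·E(|X₀|+|V₀|+1)². -/

import Mathlib

open MeasureTheory ProbabilityTheory
open scoped ENNReal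

set_option linter.unusedSectionVars false



namespace EM

section Gauss

variable {E : Type*} [NormedAddCommGroup E] [InnerProductSpace ℝ E] [FiniteDimensional ℝ E]
  [MeasurableSpace E] [BorelSpace E]

/-- Cauchy–Schwarz for real integrals. -/
lemma cs_integral {Ω : Type*} [MeasurableSpace Ω] {μ : Measure Ω} {k r : Ω → ℝ}
    (hk : Integrable (fun x => k x ^ 2) μ) (hr : Integrable (fun x => r x ^ 2) μ)
    (hkr : Integrable (fun x => k x * r x) μ) :
    (∫ x, k x * r x ∂μ) ^ 2 ≤ (∫ x, k x ^ 2 ∂μ) * ∫ x, r x ^ 2 ∂μ := by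
  have key : ∀ s : ℝ, 0 ≤ (∫ x, k x ^ 2 ∂μ) - 2 * s * (∫ x, k x * r x ∂μ)
      + s ^ 2 * ∫ x, r x ^ 2 ∂μ := by
    intro s
    have h0 : 0 ≤ ∫ x, (k x - s * r x) ^ 2 ∂μ := integral_nonneg fun x => sq_nonneg _
    have h1 : ∫ x, (k x - s * r x) ^ 2 ∂μ = (∫ x, k x ^ 2 ∂μ) - 2 * s * (∫ x, k x * r x ∂μ)
      + s ^ 2 * ∫ x, r x ^ 2 ∂μ := by
      have i1 : Integrable (fun x => k x ^ 2 - 2 * s * (k x * r x)) μ := hk.sub (hkr.const_mul _)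
      rw [← integral_const_mul, ← integral_const_mul, ← integral_sub hk (hkr.const_mul _),
        ← integral_add i1 (hr.const_mul _)]
      refine integral_congr_ae (Filter.Eventually.of_forall fun x => ?_)
      simp only
      ring
    linarith
  set A := ∫ x, k x ^ 2 ∂μ
  set B := ∫ x, k x * r x ∂μ
  set D := ∫ x, r x ^ 2 ∂μ with hD
  have hD0 : 0 ≤ D := integral_nonneg fun x => sq_nonneg _
  rcases hD0.eq_or_lt with h | h
  · rw [← h] at key ⊢
    by_contra hc
    push Not at hc
    have hB : 0 < B ^ 2 := by linarith
    have hB0 : B ≠ 0 := by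
      rintro h0; simp [h0] at hB
    have := key ((A + 1) / (2 * B))
    have e : 2 * ((A + 1) / (2 * B)) * B = A + 1 := by field_simp
    rw [e] at this
    linarith
  · have := key (B / D)
    have e : A - 2 * (B / D) * B + (B / D) ^ 2 * D = (A * D - B ^ 2) / D := by
      field_simp; ring
    rw [e] at this
    have := mul_nonneg this h.le
    rw [div_mul_cancel₀ _ h.ne'] at this
    linarith

variable (E) in
lemma integrable_gauss : Integrable (fun x : E => Real.exp (-(‖x‖ ^ 2 / 2))) := by
  have h := GaussianFourier.integrable_cexp_neg_mul_sq_norm_add (V := E) (b := (1/2 : ℂ))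
    (by norm_num) 0 0
  have := h.norm
  refine this.congr (Filter.Eventually.of_forall fun x => ?_)
  simp only [Complex.norm_exp]
  congr 1
  simp
  norm_cast
  try simp
  try ring

variable (E) in
lemma gauss_pos : 0 < ∫ x : E, Real.exp (-(‖x‖ ^ 2 / 2)) := by
  have := GaussianFourier.integral_rexp_neg_mul_sq_norm (V := E) (b := 1/2) (by norm_num)
  have e : (fun x : E => Real.exp (-(‖x‖ ^ 2 / 2))) = fun x => Real.exp (-(1/2) * ‖x‖^2) := by
    funext x; congr 1; ring
  rw [e, this]
  positivity

variable (E) in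
/-- normalising constant. -/
noncomputable def gc : ℝ := (∫ x : E, Real.exp (-(‖x‖ ^ 2 / 2)))⁻¹

variable (E) in
lemma gc_pos : 0 < gc E := inv_pos.2 (gauss_pos E)

lemma stdGaussian_eq : stdGaussian E =
    (volume : Measure E).withDensity
      (fun x => ENNReal.ofReal (gc E * Real.exp (-(‖x‖ ^ 2 / 2)))) := by
  have hitg : Integrable (fun x : E => gc E * Real.exp (-(‖x‖ ^ 2 / 2))) :=
    (integrable_gauss E).const_mul _
  have : IsFiniteMeasure ((volume : Measure E).withDensity
      (fun x => ENNReal.ofReal (gc E * Real.exp (-(‖x‖ ^ 2 / 2))))) :=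
    isFiniteMeasure_withDensity_ofReal hitg.2
  apply Measure.ext_of_charFun
  ext t
  rw [charFun_stdGaussian, charFun_apply, integral_withDensity_eq_integral_toReal_smul (by fun_prop)
    (by simp)]
  have h1 := GaussianFourier.integral_cexp_neg_mul_sq_norm_add (V := E) (b := (1/2 : ℂ))
    (by norm_num) Complex.I t
  have h0 := GaussianFourier.integral_cexp_neg_mul_sq_norm_add (V := E) (b := (1/2 : ℂ))
    (by norm_num) 0 t
  have hZ : ((∫ x : E, Real.exp (-(‖x‖ ^ 2 / 2)) : ℝ) : ℂ)
      = (Real.pi / (1/2 : ℂ)) ^ (Module.finrank ℝ E / 2 : ℂ) := by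
    rw [← integral_complex_ofReal]
    simp only [zero_mul, add_zero] at h0
    rw [zero_pow two_ne_zero, zero_mul, zero_div, Complex.exp_zero, mul_one] at h0
    rw [← h0]
    congr 1
    funext x
    push_cast
    congr 1
    ring
  have hpos := gauss_pos E
  have e : ∀ x : E, (ENNReal.ofReal (gc E * Real.exp (-(‖x‖ ^ 2 / 2)))).toReal •
      Complex.exp ((inner ℝ x t : ℝ) * Complex.I) =
      (gc E : ℂ) * Complex.exp (-(1/2 : ℂ) * ‖x‖ ^ 2 + Complex.I * (inner ℝ t x : ℝ)) := by
    intro x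
    rw [ENNReal.toReal_ofReal (mul_nonneg (gc_pos E).le (Real.exp_nonneg _)), Complex.real_smul,
      real_inner_comm x t, Complex.exp_add]
    push_cast
    rw [mul_assoc]
    congr 2
    · congr 1; ring
    · congr 1; ring
  simp_rw [e]
  rw [integral_const_mul, h1, ← hZ, gc]
  push_cast
  rw [← mul_assoc, inv_mul_cancel₀ (by exact_mod_cast hpos.ne'), one_mul]
  congr 1
  simp
  ring

lemma integral_stdGaussian (g : E → ℝ) :
    ∫ x, g x ∂(stdGaussian E) = gc E * ∫ x, g x * Real.exp (-(‖x‖ ^ 2 / 2)) := by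
  rw [stdGaussian_eq, integral_withDensity_eq_integral_toReal_smul (by fun_prop) (by simp),
    ← integral_const_mul]
  congr 1
  funext x
  rw [ENNReal.toReal_ofReal (mul_nonneg (gc_pos E).le (Real.exp_nonneg _)), smul_eq_mul]
  ring

lemma integrable_stdGaussian_iff (g : E → ℝ) :
    Integrable g (stdGaussian E) ↔ Integrable (fun x => g x * Real.exp (-(‖x‖ ^ 2 / 2))) := by
  rw [stdGaussian_eq, integrable_withDensity_iff_integrable_smul' (by fun_prop) (by simp)]
  have : (fun x : E => (ENNReal.ofReal (gc E * Real.exp (-(‖x‖ ^ 2 / 2)))).toReal • g x)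
      = fun x => gc E * (g x * Real.exp (-(‖x‖ ^ 2 / 2))) := by
    funext x
    rw [ENNReal.toReal_ofReal (mul_nonneg (gc_pos E).le (Real.exp_nonneg _)), smul_eq_mul]
    ring
  rw [this]
  exact integrable_const_mul_iff (isUnit_iff_ne_zero.2 (gc_pos E).ne') _

lemma integrable_pow_norm_std (k : ℕ) : Integrable (fun x : E => ‖x‖ ^ k) (stdGaussian E) :=
  (IsGaussian.memLp_id (stdGaussian E) k (by simp)).integrable_norm_pow'

/-- Cameron–Martin shift inequality. -/
lemma cm_shift (k : E → ℝ) (hk : Measurable k)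
    (hk2 : Integrable (fun x => k x ^ 2) (stdGaussian E)) (u : E) :
    Integrable (fun x => k (x + u)) (stdGaussian E) ∧
    (∫ x, k (x + u) ∂(stdGaussian E)) ^ 2
      ≤ Real.exp (‖u‖ ^ 2) * ∫ x, k x ^ 2 ∂(stdGaussian E) := by
  set ρ : E → ℝ := fun x => Real.exp (inner ℝ x u - ‖u‖ ^ 2 / 2) with hρ
  have hρm : Measurable ρ := by fun_prop
  have hexp : ∀ x : E, Real.exp (-(‖x - u‖ ^ 2 / 2)) = ρ x * Real.exp (-(‖x‖ ^ 2 / 2)) := by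
    intro x
    rw [hρ, ← Real.exp_add, norm_sub_sq_real]
    congr 1; ring
  have hexp2 : ∀ x : E, ρ x ^ 2 * Real.exp (-(‖x‖ ^ 2 / 2))
      = Real.exp (‖u‖^2) * Real.exp (-(‖x - (2:ℝ) • u‖ ^ 2 / 2)) := by
    intro x
    rw [hρ, ← Real.exp_nat_mul, ← Real.exp_add, ← Real.exp_add, norm_sub_sq_real, norm_smul,
      inner_smul_right]
    congr 1
    simp
    ring
  have hρ2 : Integrable (fun x => ρ x ^ 2) (stdGaussian E) := by
    rw [integrable_stdGaussian_iff]
    simp_rw [hexp2]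
    exact ((integrable_gauss E).comp_sub_right _).const_mul _
  have hρ2v : ∫ x, ρ x ^ 2 ∂(stdGaussian E) = Real.exp (‖u‖ ^ 2) := by
    rw [integral_stdGaussian]
    simp_rw [hexp2]
    rw [integral_const_mul, integral_sub_right_eq_self
      (fun x : E => Real.exp (-(‖x‖ ^ 2 / 2))) ((2:ℝ) • u), gc]
    field_simp [(gauss_pos E).ne']
  have hkr : Integrable (fun x => k x * ρ x) (stdGaussian E) := by
    refine Integrable.mono' (hk2.add hρ2) (hk.mul hρm).aestronglyMeasurable
      (Filter.Eventually.of_forall fun x => ?_)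
    simp only [Real.norm_eq_abs, Pi.add_apply]
    rw [abs_le]
    constructor <;> nlinarith [sq_nonneg (k x - ρ x), sq_nonneg (k x + ρ x)]
  have hfun : (fun x : E => k (x + u) * Real.exp (-(‖x‖ ^ 2 / 2)))
      = fun x => (fun y => k y * ρ y * Real.exp (-(‖y‖ ^ 2 / 2))) (x + u) := by
    funext x
    have := hexp (x + u)
    simp only [add_sub_cancel_right] at this
    simp only [this]
    ring
  have hitg : ∫ x, k (x + u) ∂(stdGaussian E) = ∫ x, k x * ρ x ∂(stdGaussian E) := by
    rw [integral_stdGaussian, integral_stdGaussian, hfun, integral_add_right_eq_self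
      (fun y : E => k y * ρ y * Real.exp (-(‖y‖ ^ 2 / 2))) u]
  constructor
  · rw [integrable_stdGaussian_iff, hfun]
    rw [integrable_stdGaussian_iff] at hkr
    exact hkr.comp_add_right u
  · rw [hitg]
    refine (cs_integral hk2 hρ2 hkr).trans ?_
    rw [hρ2v, mul_comm]

/-- rotation invariance of the Gaussian. -/
lemma gauss_conv (c s : ℝ) (hcs : c ^ 2 + s ^ 2 = 1) :
    ((stdGaussian E).prod (stdGaussian E)).map (fun p : E × E => c • p.1 + s • p.2)
      = stdGaussian E := by
  have h : ((stdGaussian E).map (c • ·)).conv ((stdGaussian E).map (s • ·)) = stdGaussian E := by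
    have i1 : IsProbabilityMeasure ((stdGaussian E).map (c • ·)) :=
      Measure.isProbabilityMeasure_map (by fun_prop)
    have i2 : IsProbabilityMeasure ((stdGaussian E).map (s • ·)) :=
      Measure.isProbabilityMeasure_map (by fun_prop)
    apply Measure.ext_of_charFun
    ext t
    rw [charFun_conv, charFun_map_smul, charFun_map_smul, charFun_stdGaussian,
      charFun_stdGaussian, charFun_stdGaussian, ← Complex.exp_add]
    congr 1
    simp only [norm_smul, Real.norm_eq_abs, Complex.ofReal_mul, mul_pow]
    have a1 : ((|c| : ℝ) : ℂ) ^ 2 = (c:ℂ) ^ 2 := by norm_cast; exact sq_abs c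
    have a2 : ((|s| : ℝ) : ℂ) ^ 2 = (s:ℂ) ^ 2 := by norm_cast; exact sq_abs s
    have a3 : (c:ℂ) ^ 2 + (s:ℂ) ^ 2 = 1 := by exact_mod_cast hcs
    rw [a1, a2]
    linear_combination (-(‖t‖:ℂ)^2/2) * a3
  rw [Measure.conv, Measure.map_prod_map _ _ (by fun_prop) (by fun_prop),
    Measure.map_map (by fun_prop) (by fun_prop)] at h
  exact h

end Gauss

end EM



namespace EM

section Harris

variable {S : Type*} [NormedAddCommGroup S] [MeasurableSpace S]

/-- measurable functions of at most quadratic growth. -/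
def Cls (g : S → ℝ) : Prop := Measurable g ∧ ∃ A : ℝ, ∀ z, |g z| ≤ A * (1 + ‖z‖ ^ 2)

/-- positive unital linear operators on the class `Cls`. -/
structure MkOp (P : (S → ℝ) → (S → ℝ)) : Prop where
  cls : ∀ g, Cls g → Cls (P g)
  lin : ∀ f g, Cls f → Cls g → ∀ a b : ℝ, ∀ z,
    P (fun y => a * f y + b * g y) z = a * P f z + b * P g z
  mono : ∀ f g, Cls f → Cls g → (∀ z, f z ≤ g z) → ∀ z, P f z ≤ P g z
  const : ∀ (c : ℝ) (z : S), P (fun _ => c) z = c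

lemma Cls.const (c : ℝ) : Cls (fun _ : S => c) :=
  ⟨measurable_const, |c|, fun z => by nlinarith [abs_nonneg c, sq_nonneg ‖z‖]⟩

lemma Cls.lin {f g : S → ℝ} (hf : Cls f) (hg : Cls g) (a b : ℝ) :
    Cls (fun y => a * f y + b * g y) := by
  obtain ⟨mf, A, hA⟩ := hf
  obtain ⟨mg, B, hB⟩ := hg
  refine ⟨by fun_prop, |a| * A + |b| * B, fun z => ?_⟩
  calc |a * f z + b * g z| ≤ |a * f z| + |b * g z| := abs_add_le _ _
    _ = |a| * |f z| + |b| * |g z| := by rw [abs_mul, abs_mul]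
    _ ≤ |a| * (A * (1 + ‖z‖ ^ 2)) + |b| * (B * (1 + ‖z‖ ^ 2)) := by
        gcongr
        · exact hA z
        · exact hB z
    _ = _ := by ring

lemma Cls.sub {f g : S → ℝ} (hf : Cls f) (hg : Cls g) : Cls (fun y => f y - g y) := by
  have := hf.lin hg 1 (-1)
  simpa [sub_eq_add_neg] using this

lemma Cls.add {f g : S → ℝ} (hf : Cls f) (hg : Cls g) : Cls (fun y => f y + g y) := by
  have := hf.lin hg 1 1
  simpa using this

lemma Cls.smul {f : S → ℝ} (hf : Cls f) (a : ℝ) : Cls (fun y => a * f y) := by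
  have := hf.lin hf a 0
  simpa using this

lemma Cls.of_le {f g : S → ℝ} (hf : Measurable f) (hg : Cls g) (h : ∀ z, |f z| ≤ g z) :
    Cls f := by
  obtain ⟨_, B, hB⟩ := hg
  exact ⟨hf, B, fun z => (h z).trans ((le_abs_self _).trans (hB z))⟩

lemma Cls.of_sq {f : S → ℝ} (hf : Measurable f) (h : Cls (fun z => f z ^ 2)) : Cls f := by
  refine Cls.of_le hf ((Cls.const 1).add h) fun z => ?_
  rw [abs_le]
  constructor <;> nlinarith [sq_nonneg (f z - 1), sq_nonneg (f z + 1)]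

lemma Cls.sum {ι : Type*} (s : Finset ι) {f : ι → S → ℝ} (hf : ∀ i ∈ s, Cls (f i)) :
    Cls (fun y => ∑ i ∈ s, f i y) := by
  classical
  induction s using Finset.induction_on with
  | empty => simpa using Cls.const (S := S) 0
  | insert a s ha ih =>
    simp only [Finset.sum_insert ha]
    exact (hf a (by simp)).add (ih fun i hi => hf i (by simp [hi]))

namespace MkOp

variable {P : (S → ℝ) → (S → ℝ)}

lemma add (hP : MkOp P) {f g : S → ℝ} (hf : Cls f) (hg : Cls g) (z : S) :
    P (fun y => f y + g y) z = P f z + P g z := by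
  have := hP.lin f g hf hg 1 1 z
  simpa using this

lemma sub (hP : MkOp P) {f g : S → ℝ} (hf : Cls f) (hg : Cls g) (z : S) :
    P (fun y => f y - g y) z = P f z - P g z := by
  have := hP.lin f g hf hg 1 (-1) z
  simpa [sub_eq_add_neg] using this

lemma smul (hP : MkOp P) {f : S → ℝ} (hf : Cls f) (a : ℝ) (z : S) :
    P (fun y => a * f y) z = a * P f z := by
  have := hP.lin f f hf hf a 0 z
  simpa using this

lemma affine (hP : MkOp P) {f : S → ℝ} (hf : Cls f) (a b : ℝ) (z : S) :
    P (fun y => a * f y + b) z = a * P f z + b := by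
  rw [hP.add (hf.smul a) (Cls.const b), hP.smul hf, hP.const]

lemma sum (hP : MkOp P) {ι : Type*} (s : Finset ι) {f : ι → S → ℝ} (hf : ∀ i ∈ s, Cls (f i))
    (z : S) : P (fun y => ∑ i ∈ s, f i y) z = ∑ i ∈ s, P (f i) z := by
  classical
  induction s using Finset.induction_on with
  | empty => simpa using hP.const 0 z
  | insert a s ha ih =>
    simp only [Finset.sum_insert ha]
    rw [hP.add (hf a (by simp)) (Cls.sum s fun i hi => hf i (by simp [hi])),
      ih fun i hi => hf i (by simp [hi])]

lemma cs (hP : MkOp P) {g : S → ℝ} (hg : Measurable g) (hg2 : Cls (fun z => g z ^ 2)) (z : S) :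
    (P g z) ^ 2 ≤ P (fun y => g y ^ 2) z := by
  have hgc := Cls.of_sq hg hg2
  set c := P g z
  have h1 : (0:ℝ) ≤ P (fun y => 1 * g y ^ 2 + (-2 * c) * g y + c ^ 2) z := by
    rw [← hP.const 0 z]
    refine hP.mono _ _ (Cls.const 0) ((hg2.lin hgc _ _).add (Cls.const _)) (fun y => ?_) z
    nlinarith [sq_nonneg (g y - c)]
  rw [hP.add (hg2.lin hgc _ _) (Cls.const _), hP.lin _ _ hg2 hgc, hP.const] at h1
  nlinarith

lemma abs_le (hP : MkOp P) {f g : S → ℝ} (hf : Cls f) (hg : Cls g) (h : ∀ z, |f z| ≤ g z) (z : S) :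
    |P f z| ≤ P g z := by
  rw [_root_.abs_le]
  constructor
  · have := hP.mono (fun y => (-1) * g y) f (hg.smul _) hf
      (fun y => by have := (_root_.abs_le.1 (h y)).1; linarith) z
    rw [hP.smul hg] at this
    linarith
  · exact hP.mono f g hf hg (fun y => (_root_.abs_le.1 (h y)).2) z

lemma id : MkOp (fun g : S → ℝ => g) :=
  ⟨fun _ h => h, fun _ _ _ _ _ _ _ => rfl, fun _ _ _ _ h => h, fun _ _ => rfl⟩

lemma iter (hP : MkOp P) (n : ℕ) : MkOp (P^[n]) := by
  induction n with
  | zero => exact id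
  | succ n ih =>
    refine ⟨fun g hg => ?_, fun f g hf hg a b z => ?_, fun f g hf hg h z => ?_, fun c z => ?_⟩
    · rw [Function.iterate_succ_apply']
      exact hP.cls _ (ih.cls g hg)
    · rw [Function.iterate_succ_apply', Function.iterate_succ_apply', Function.iterate_succ_apply']
      rw [← hP.lin _ _ (ih.cls f hf) (ih.cls g hg)]
      congr 1
      funext y
      exact ih.lin f g hf hg a b y
    · rw [Function.iterate_succ_apply', Function.iterate_succ_apply']
      exact hP.mono _ _ (ih.cls f hf) (ih.cls g hg) (ih.mono f g hf hg h) z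
    · rw [Function.iterate_succ_apply']
      have : P^[n] (fun _ => c) = fun _ => c := funext (ih.const c)
      rw [this, hP.const]

end MkOp

/-- Harris contraction factor. -/
noncomputable def harB (kap ε : ℝ) : ℝ := ε / (2 * kap)

/-- Harris contraction factor. -/
noncomputable def harA (lam kap ε : ℝ) : ℝ :=
  max (max (1 - ε / 2) lam)
    ((2 + harB kap ε * ((1 + lam) / 2) * (4 * kap / (1 - lam))) /
      (2 + harB kap ε * (4 * kap / (1 - lam))))

lemma harB_pos {kap ε : ℝ} (hk : 0 < kap) (he : 0 < ε) : 0 < harB kap ε := by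
  unfold harB; positivity

lemma harA_lt {lam kap ε : ℝ} (h1 : lam < 1) (hk : 0 < kap) (he : 0 < ε) :
    harA lam kap ε < 1 := by
  have hB := harB_pos hk he
  have h3 : 0 < 1 - lam := by linarith
  have hρ : 0 < 4 * kap / (1 - lam) := by positivity
  unfold harA
  refine max_lt (max_lt (by linarith) h1) ?_
  rw [div_lt_one (by positivity)]
  have : harB kap ε * ((1 + lam) / 2) * (4 * kap / (1 - lam))
    < harB kap ε * 1 * (4 * kap / (1 - lam)) := by
    gcongr
    linarith
  linarith

lemma harA_nonneg {lam kap ε : ℝ} (h0 : 0 ≤ lam) : 0 ≤ harA lam kap ε :=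
  h0.trans ((le_max_right _ _).trans (le_max_left _ _))

lemma harris_step {Q : (S → ℝ) → (S → ℝ)} (hQ : MkOp Q) {w : S → ℝ} (hw : Cls w)
    (hw0 : ∀ z, 0 ≤ w z) {lam kap ε : ℝ} (hlam0 : 0 ≤ lam) (hlam : lam < 1) (hkap : 0 < kap)
    (hε : 0 < ε) (hLy : ∀ z, Q w z ≤ lam * w z + kap)
    (hmin : ∀ z z', w z + w z' ≤ 4 * kap / (1 - lam) → ∀ g, Cls g → (∀ y, 0 ≤ g y) →
      (∀ y, g y ≤ 1) → Q g z - Q g z' ≤ 1 - ε)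
    {g : S → ℝ} (hg : Cls g) {c : ℝ} (hc : 0 < c)
    (hgc : ∀ z z', g z - g z' ≤ c * (2 + harB kap ε * (w z + w z'))) (z z' : S) :
    Q g z - Q g z' ≤ harA lam kap ε * (c * (2 + harB kap ε * (w z + w z'))) := by
  set β := harB kap ε with hβ
  have hβ0 : 0 < β := harB_pos hkap hε
  set ρ := 4 * kap / (1 - lam) with hρ
  have h1l : 0 < 1 - lam := by linarith
  have hρ0 : 0 < ρ := by positivity
  set α := harA lam kap ε with hα
  -- the centering constant
  set c0 : ℝ := ⨆ y, (g y / c - 1 - β * w y) with hc0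
  have hpt : ∀ y y', g y / c - g y' / c ≤ 2 + β * (w y + w y') := by
    intro y y'
    rw [← sub_div, div_le_iff₀ hc]
    linarith [hgc y y']
  have hbdd : BddAbove (Set.range fun y => (g y / c - 1 - β * w y)) := by
    refine ⟨g 0 / c + 1 + β * w 0, ?_⟩
    rintro _ ⟨y, rfl⟩
    have := hpt y 0
    linarith
  have hup : ∀ y, g y / c - c0 ≤ 1 + β * w y := by
    intro y
    have := le_ciSup hbdd y
    linarith
  have hlo : ∀ y, -(1 + β * w y) ≤ g y / c - c0 := by
    intro y
    have : c0 ≤ g y / c + 1 + β * w y := by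
      refine ciSup_le fun y' => ?_
      have := hpt y' y
      linarith
    linarith
  set φ : S → ℝ := fun y => (1 / c) * g y + (-c0) with hφ
  have hφc : Cls φ := (hg.smul _).add (Cls.const _)
  have hφe : ∀ y, φ y = g y / c - c0 := fun y => by simp [hφ]; ring
  have hQφ : ∀ y, Q φ y = (1 / c) * Q g y + (-c0) := fun y => hQ.affine hg _ _ y
  have hdiff : Q g z - Q g z' = c * (Q φ z - Q φ z') := by
    rw [hQφ, hQφ]; field_simp; ring
  rw [hdiff]
  have hcore : Q φ z - Q φ z' ≤ α * (2 + β * (w z + w z')) := by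
    set s := w z + w z' with hs
    have hs0 : 0 ≤ s := add_nonneg (hw0 _) (hw0 _)
    have hLs : Q w z + Q w z' ≤ lam * s + 2 * kap := by
      have := hLy z
      have := hLy z'
      simp only [hs]; linarith
    by_cases hcase : s ≤ ρ
    · -- small set
      set φ1 : S → ℝ := fun y => max (-1) (min 1 (φ y)) with hφ1
      have hφ1m : Measurable φ1 := measurable_const.max (measurable_const.min hφc.1)
      have hφ1c : Cls φ1 := by
        refine Cls.of_le hφ1m (Cls.const 1) fun y => ?_
        rw [abs_le]
        exact ⟨le_max_left _ _, max_le (by norm_num) (min_le_left _ _)⟩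
      have hφ2c : Cls (fun y => φ y - φ1 y) := hφc.sub hφ1c
      have hφ2 : ∀ y, |φ y - φ1 y| ≤ β * w y := by
        intro y
        have a := hup y
        have b := hlo y
        rw [← hφe] at a b
        have hw' := mul_nonneg hβ0.le (hw0 y)
        simp only [hφ1]
        rw [abs_le]
        rcases le_total 1 (φ y) with h | h
        · rw [min_eq_left h, max_eq_right (by norm_num)]
          constructor <;> linarith
        · rw [min_eq_right h]
          rcases le_total (-1) (φ y) with h' | h'
          · rw [max_eq_right h']
            constructor <;> linarith
          · rw [max_eq_left h']
            constructor <;> linarith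
      have e1 : ∀ y, Q φ y = Q φ1 y + Q (fun y => φ y - φ1 y) y := by
        intro y
        rw [hQ.sub hφc hφ1c]; ring
      have h2 : ∀ y, |Q (fun y => φ y - φ1 y) y| ≤ β * Q w y := by
        intro y
        have := hQ.abs_le hφ2c (hw.smul β) hφ2 y
        rwa [hQ.smul hw] at this
      have h3 := hmin z z' hcase (fun y => (1/2) * φ1 y + 1/2)
        ((hφ1c.smul _).add (Cls.const _))
        (fun y => by
          have : -1 ≤ φ1 y := le_max_left _ _
          linarith)
        (fun y => by
          have : φ1 y ≤ 1 := max_le (by norm_num) (min_le_left _ _)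
          linarith)
      rw [hQ.affine hφ1c, hQ.affine hφ1c] at h3
      have h4 : Q φ z - Q φ z' ≤ 2 * (1 - ε) + β * (lam * s + 2 * kap) := by
        rw [e1 z, e1 z']
        have a := (abs_le.1 (h2 z)).2
        have b := (abs_le.1 (h2 z')).1
        have : β * (Q w z + Q w z') ≤ β * (lam * s + 2 * kap) := by gcongr
        linarith
      have hbk : β * (2 * kap) = ε := by
        rw [hβ, harB]; field_simp
      have a1 : 1 - ε / 2 ≤ α := (le_max_left _ _).trans (le_max_left _ _)
      have a2 : lam ≤ α := (le_max_right _ _).trans (le_max_left _ _)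
      have a3 : lam * (β * s) ≤ α * (β * s) := by gcongr
      linarith
    · push Not at hcase
      have h2 : ∀ y, |Q φ y| ≤ 1 + β * Q w y := by
        intro y
        have hc' : Cls (fun y => β * w y + 1) := (hw.smul β).add (Cls.const 1)
        have := hQ.abs_le hφc hc' (fun y => by
          rw [hφe, abs_le]
          constructor
          · linarith [hlo y]
          · linarith [hup y]) y
        rw [hQ.affine hw] at this
        linarith
      have h4 : Q φ z - Q φ z' ≤ 2 + β * (lam * s + 2 * kap) := by
        have a := (abs_le.1 (h2 z)).2
        have b := (abs_le.1 (h2 z')).1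
        have : β * (Q w z + Q w z') ≤ β * (lam * s + 2 * kap) := by gcongr
        linarith
      have hk2 : 2 * kap ≤ (1 - lam) / 2 * s := by
        have : (1 - lam) / 2 * ρ = 2 * kap := by rw [hρ]; field_simp; norm_num
        rw [← this]
        gcongr
      have h5 : Q φ z - Q φ z' ≤ 2 + β * ((1 + lam) / 2) * s := by
        have : β * (lam * s + 2 * kap) ≤ β * (lam * s + (1 - lam) / 2 * s) := by gcongr
        linarith
      refine h5.trans ?_
      have a3 : (2 + β * ((1 + lam) / 2) * ρ) / (2 + β * ρ) ≤ α := le_max_right _ _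
      refine le_trans ?_ (mul_le_mul_of_nonneg_right a3 (by positivity))
      rw [div_mul_eq_mul_div, le_div_iff₀ (by positivity)]
      have : 0 ≤ β * (s - ρ) * (1 - lam) := by
        have : 0 ≤ s - ρ := by linarith
        positivity
      nlinarith
  calc c * (Q φ z - Q φ z') ≤ c * (α * (2 + β * (w z + w z'))) := by gcongr
    _ = _ := by ring

lemma harris_iter {Q : (S → ℝ) → (S → ℝ)} (hQ : MkOp Q) {w : S → ℝ} (hw : Cls w)
    (hw0 : ∀ z, 0 ≤ w z) {lam kap ε : ℝ} (hlam0 : 0 ≤ lam) (hlam : lam < 1) (hkap : 0 < kap)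
    (hε : 0 < ε) (hLy : ∀ z, Q w z ≤ lam * w z + kap)
    (hmin : ∀ z z', w z + w z' ≤ 4 * kap / (1 - lam) → ∀ g, Cls g → (∀ y, 0 ≤ g y) →
      (∀ y, g y ≤ 1) → Q g z - Q g z' ≤ 1 - ε)
    {α : ℝ} (hα : harA lam kap ε ≤ α) (hα0 : 0 < α)
    {g : S → ℝ} (hg : Cls g) {c : ℝ} (hc : 0 < c)
    (hgc : ∀ z z', g z - g z' ≤ c * (2 + harB kap ε * (w z + w z'))) (n : ℕ) :
    ∀ z z', Q^[n] g z - Q^[n] g z' ≤ α ^ n * (c * (2 + harB kap ε * (w z + w z'))) := by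
  induction n with
  | zero => simpa using hgc
  | succ n ih =>
    intro z z'
    rw [Function.iterate_succ_apply']
    have := harris_step hQ hw hw0 hlam0 hlam hkap hε hLy hmin ((hQ.iter n).cls g hg)
      (c := α ^ n * c) (by positivity) (fun z z' => (ih z z').trans_eq (by ring)) z z'
    refine this.trans ?_
    have hβ0 : 0 < harB kap ε := harB_pos hkap hε
    have hs : 0 ≤ w z + w z' := add_nonneg (hw0 _) (hw0 _)
    calc _ ≤ α * (α ^ n * c * (2 + harB kap ε * (w z + w z'))) := by gcongr
      _ = _ := by ring

end Harris

end EM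



namespace EM

section Chain

variable {E : Type*} [NormedAddCommGroup E] [InnerProductSpace ℝ E] [FiniteDimensional ℝ E]
  [MeasurableSpace E] [BorelSpace E]

/-- the properties of the gradient field used in the proof. -/
structure Good (gU : E → E) (L m B : ℝ) : Prop where
  lip : ∀ x y, ‖gU x - gU y‖ ≤ L * ‖x - y‖
  gr : ∀ x, ‖gU x‖ ≤ L * (‖x‖ + 1)
  dis : ∀ x, m * ‖x‖ ^ 2 - B * ‖x‖ ≤ inner ℝ x (gU x)
  Lpos : 0 < L
  mpos : 0 < m
  Bpos : 0 < B

lemma Good.cont {gU : E → E} {L m B : ℝ} (hG : Good gU L m B) : Continuous gU := by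
  have : LipschitzWith (Real.toNNReal L) gU := LipschitzWith.of_dist_le_mul fun x y => by
    rw [dist_eq_norm, dist_eq_norm, Real.coe_toNNReal _ hG.Lpos.le]
    exact hG.lip x y
  exact this.continuous

/-- one Euler–Maruyama step. -/
noncomputable def stp (gU : E → E) (γ h : ℝ) (z : E × E) (ξ : E) : E × E :=
  (z.1 + h • z.2, z.2 - h • gU z.1 - (γ * h) • z.2 + Real.sqrt (2 * γ * h) • ξ)

/-- the Markov operator. -/
noncomputable def Pop (gU : E → E) (γ h : ℝ) (g : E × E → ℝ) (z : E × E) : ℝ :=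
  ∫ ξ, g (stp gU γ h z ξ) ∂(stdGaussian E)

variable {gU : E → E} {L m B γ h : ℝ}

lemma stp_meas (hG : Good gU L m B) :
    Measurable (fun p : (E × E) × E => stp gU γ h p.1 p.2) := by
  have := hG.cont.measurable
  unfold stp
  fun_prop

lemma stp_meas' (hG : Good gU L m B) (z : E × E) :
    Measurable (fun ξ : E => stp gU γ h z ξ) :=
  (stp_meas hG).comp (measurable_const.prodMk measurable_id)

lemma stp_sub_zero (z : E × E) (ξ : E) :
    stp gU γ h z ξ - stp gU γ h z 0 = (0, Real.sqrt (2 * γ * h) • ξ) := by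
  simp [stp]

lemma stp_norm_sub_zero (z : E × E) (ξ : E) :
    ‖stp gU γ h z ξ - stp gU γ h z 0‖ = Real.sqrt (2 * γ * h) * ‖ξ‖ := by
  rw [stp_sub_zero]
  simp [Prod.norm_def, norm_smul, abs_of_nonneg (Real.sqrt_nonneg _)]
  positivity

lemma stp_zero_sub (hG : Good gU L m B) (hγ : 0 < γ) (hh : 0 < h) (z : E × E) :
    ‖stp gU γ h z 0 - z‖ ≤ h * ((1 + L + γ) * (1 + ‖z‖)) := by
  have h1 := norm_fst_le z
  have h2 := norm_snd_le z
  have hL := hG.Lpos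
  have e : stp gU γ h z 0 - z = (h • z.2, -(h • gU z.1) - (γ * h) • z.2) := by
    ext1
    · simp [stp]
    · simp [stp]; abel
  rw [e, Prod.norm_def]
  refine max_le ?_ ?_
  · simp only [norm_smul, Real.norm_eq_abs, abs_of_pos hh]
    have := norm_nonneg z
    gcongr
    nlinarith
  · calc ‖-(h • gU z.1) - (γ * h) • z.2‖ ≤ ‖-(h • gU z.1)‖ + ‖(γ * h) • z.2‖ := norm_sub_le _ _
      _ = h * ‖gU z.1‖ + γ * h * ‖z.2‖ := by
          rw [norm_neg, norm_smul, norm_smul, Real.norm_eq_abs, Real.norm_eq_abs, abs_of_pos hh,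
            abs_of_pos (mul_pos hγ hh)]
      _ ≤ h * (L * (‖z‖ + 1)) + γ * h * ‖z‖ := by
          gcongr
          exact (hG.gr _).trans (by gcongr)
      _ ≤ h * ((1 + L + γ) * (1 + ‖z‖)) := by
          have := norm_nonneg z
          nlinarith [mul_pos hh hγ]

lemma stp_norm (hG : Good gU L m B) (hγ : 0 < γ) (hh : 0 < h) (hh1 : h ≤ 1) (z : E × E) (ξ : E) :
    1 + ‖stp gU γ h z ξ‖ ≤ (2 + L + γ) * (1 + ‖z‖) + Real.sqrt (2 * γ) * ‖ξ‖ := by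
  have a := stp_norm_sub_zero (gU := gU) (γ := γ) (h := h) z ξ
  have b := stp_zero_sub hG hγ hh z
  have c : ‖stp gU γ h z ξ‖ ≤ ‖stp gU γ h z ξ - stp gU γ h z 0‖ + ‖stp gU γ h z 0 - z‖ + ‖z‖ := by
    calc ‖stp gU γ h z ξ‖ = ‖(stp gU γ h z ξ - stp gU γ h z 0) + (stp gU γ h z 0 - z) + z‖ := by
          congr 1; abel
      _ ≤ _ := norm_add₃_le
  have d : Real.sqrt (2 * γ * h) ≤ Real.sqrt (2 * γ) := by
    apply Real.sqrt_le_sqrt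
    nlinarith
  have e : h * ((1 + L + γ) * (1 + ‖z‖)) ≤ 1 * ((1 + L + γ) * (1 + ‖z‖)) := by
    have := hG.Lpos
    gcongr
  have f : Real.sqrt (2 * γ * h) * ‖ξ‖ ≤ Real.sqrt (2 * γ) * ‖ξ‖ := by gcongr
  linarith

lemma stp_norm_sq (hG : Good gU L m B) (hγ : 0 < γ) (hh : 0 < h) (hh1 : h ≤ 1) (z : E × E) (ξ : E) :
    1 + ‖stp gU γ h z ξ‖ ^ 2 ≤ (4 * (2 + L + γ) ^ 2 + 4 * γ) * (1 + ‖z‖ ^ 2) * (1 + ‖ξ‖ ^ 2) := by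
  have a := stp_norm hG hγ hh hh1 z ξ
  set s := ‖stp gU γ h z ξ‖
  have hs : 0 ≤ s := norm_nonneg _
  have hz := norm_nonneg z
  have hL := hG.Lpos
  have hq : Real.sqrt (2 * γ) ^ 2 = 2 * γ := Real.sq_sqrt (by positivity)
  set q := Real.sqrt (2 * γ)
  have hq0 : 0 ≤ q := Real.sqrt_nonneg _
  set K := 2 + L + γ
  have hξ := norm_nonneg ξ
  calc 1 + s ^ 2 ≤ (1 + s) ^ 2 := by nlinarith
    _ ≤ (K * (1 + ‖z‖) + q * ‖ξ‖) ^ 2 := by gcongr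
    _ ≤ 2 * (K * (1 + ‖z‖)) ^ 2 + 2 * (q * ‖ξ‖) ^ 2 := by
        nlinarith [sq_nonneg (K * (1 + ‖z‖) - q * ‖ξ‖)]
    _ = 2 * K ^ 2 * (1 + ‖z‖) ^ 2 + 4 * γ * ‖ξ‖ ^ 2 := by rw [mul_pow, mul_pow, hq]; ring
    _ ≤ 2 * K ^ 2 * (2 * (1 + ‖z‖ ^ 2)) + 4 * γ * ‖ξ‖ ^ 2 := by
        gcongr
        nlinarith [sq_nonneg (1 - ‖z‖)]
    _ ≤ (4 * K ^ 2 + 4 * γ) * (1 + ‖z‖ ^ 2) * (1 + ‖ξ‖ ^ 2) := by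
        have h1 : 0 ≤ K ^ 2 * (1 + ‖z‖ ^ 2) * ‖ξ‖ ^ 2 := by positivity
        have h2 : 0 ≤ γ * (1 + ‖z‖ ^ 2) := by positivity
        have h3 : 0 ≤ γ * ‖z‖ ^ 2 * ‖ξ‖ ^ 2 := by positivity
        nlinarith

lemma integrable_one_add_sq : Integrable (fun ξ : E => 1 + ‖ξ‖ ^ 2) (stdGaussian E) :=
  (integrable_const 1).add (integrable_pow_norm_std 2)

lemma Cls.bd {S : Type*} [NormedAddCommGroup S] [MeasurableSpace S] {g : S → ℝ} (hg : Cls g) :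
    ∃ A : ℝ, 0 ≤ A ∧ ∀ z, |g z| ≤ A * (1 + ‖z‖ ^ 2) := by
  obtain ⟨_, A, hA⟩ := hg
  exact ⟨|A|, abs_nonneg A, fun z => (hA z).trans (by gcongr; exact le_abs_self A)⟩

lemma Cls.integrable_stp {g : E × E → ℝ} (hg : Cls g) (hG : Good gU L m B) (hγ : 0 < γ) (hh : 0 < h)
    (hh1 : h ≤ 1) (z : E × E) :
    Integrable (fun ξ => g (stp gU γ h z ξ)) (stdGaussian E) := by
  obtain ⟨A, hA0, hA⟩ := hg.bd
  refine Integrable.mono' (integrable_one_add_sq.const_mul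
    (A * ((4 * (2 + L + γ) ^ 2 + 4 * γ) * (1 + ‖z‖ ^ 2))))
    (hg.1.comp (stp_meas' hG z)).aestronglyMeasurable (Filter.Eventually.of_forall fun ξ => ?_)
  rw [Real.norm_eq_abs]
  refine (hA _).trans ?_
  rw [mul_assoc]
  gcongr
  exact stp_norm_sq hG hγ hh hh1 z ξ

lemma Pop_mk (hG : Good gU L m B) (hγ : 0 < γ) (hh : 0 < h) (hh1 : h ≤ 1) :
    MkOp (Pop gU γ h) := by
  refine ⟨fun g hg => ⟨?_, ?_⟩, fun f g hf hg a b z => ?_, fun f g hf hg hfg z => ?_, fun c z => ?_⟩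
  · have : StronglyMeasurable (fun p : (E × E) × E => g (stp gU γ h p.1 p.2)) :=
      (hg.1.comp (stp_meas hG)).stronglyMeasurable
    exact this.integral_prod_right.measurable
  · obtain ⟨A, hA0, hA⟩ := hg.bd
    refine ⟨A * (4 * (2 + L + γ) ^ 2 + 4 * γ) * ∫ ξ : E, (1 + ‖ξ‖ ^ 2) ∂(stdGaussian E),
      fun z => ?_⟩
    calc |Pop gU γ h g z| ≤ ∫ ξ, |g (stp gU γ h z ξ)| ∂(stdGaussian E) := abs_integral_le_integral_abs
      _ ≤ ∫ ξ : E, (A * ((4 * (2 + L + γ) ^ 2 + 4 * γ) * (1 + ‖z‖ ^ 2))) * (1 + ‖ξ‖ ^ 2)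
          ∂(stdGaussian E) := by
          refine integral_mono (hg.integrable_stp hG hγ hh hh1 z).abs
            (integrable_one_add_sq.const_mul _) fun ξ => ?_
          refine (hA _).trans ?_
          rw [mul_assoc]
          gcongr
          exact stp_norm_sq hG hγ hh hh1 z ξ
      _ = _ := by rw [integral_const_mul]; ring
  · unfold Pop
    rw [integral_add ((hf.integrable_stp hG hγ hh hh1 z).const_mul a)
      ((hg.integrable_stp hG hγ hh hh1 z).const_mul b), integral_const_mul, integral_const_mul]
  · exact integral_mono (hf.integrable_stp hG hγ hh hh1 z) (hg.integrable_stp hG hγ hh hh1 z)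
      fun ξ => hfg _
  · simp [Pop]

/-- quadratic Lyapunov function. -/
noncomputable def lyV (γ : ℝ) (z : E × E) : ℝ :=
  1 + (γ * ‖z.1‖ ^ 2 + 2 * inner ℝ z.1 z.2 + (2 / γ) * ‖z.2‖ ^ 2)

lemma lyV_lower (hγ : 0 < γ) (z : E × E) :
    1 + min (γ / 3) (1 / (2 * γ)) * ‖z‖ ^ 2 ≤ lyV γ z := by
  have hi := abs_le.1 (abs_real_inner_le_norm z.1 z.2)
  have key : γ / 3 * ‖z.1‖ ^ 2 + 1 / (2 * γ) * ‖z.2‖ ^ 2 + 1 ≤ lyV γ z := by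
    have : 0 ≤ (2 / (3 * γ)) * (γ * ‖z.1‖ - 3 / 2 * ‖z.2‖) ^ 2 := by positivity
    have e : (2 / (3 * γ)) * (γ * ‖z.1‖ - 3 / 2 * ‖z.2‖) ^ 2 = 2 / 3 * γ * ‖z.1‖ ^ 2
      - 2 * (‖z.1‖ * ‖z.2‖) + (3 / (2 * γ)) * ‖z.2‖ ^ 2 := by
      field_simp; ring
    have e2 : 2 / γ = 1 / (2 * γ) + 3 / (2 * γ) := by field_simp; norm_num
    rw [e] at this
    rw [lyV, e2]
    nlinarith
  have hz : ‖z‖ ^ 2 ≤ ‖z.1‖ ^ 2 + ‖z.2‖ ^ 2 := by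
    rw [Prod.norm_def]
    rcases max_cases ‖z.1‖ ‖z.2‖ with h | h <;> rw [h.1] <;> nlinarith [norm_nonneg z.1, norm_nonneg z.2]
  have m1 := min_le_left (γ / 3) (1 / (2 * γ))
  have m2 := min_le_right (γ / 3) (1 / (2 * γ))
  have m0 : 0 < min (γ / 3) (1 / (2 * γ)) := by positivity
  calc 1 + min (γ / 3) (1 / (2 * γ)) * ‖z‖ ^ 2
      ≤ 1 + min (γ / 3) (1 / (2 * γ)) * (‖z.1‖ ^ 2 + ‖z.2‖ ^ 2) := by gcongr
    _ = 1 + (min (γ / 3) (1 / (2 * γ)) * ‖z.1‖ ^ 2 + min (γ / 3) (1 / (2 * γ)) * ‖z.2‖ ^ 2) := by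
        ring
    _ ≤ 1 + (γ / 3 * ‖z.1‖ ^ 2 + 1 / (2 * γ) * ‖z.2‖ ^ 2) := by gcongr
    _ ≤ _ := by linarith

lemma lyV_upper' (hγ : 0 < γ) (z : E × E) :
    lyV γ z ≤ 1 + (2 * γ + 3 / γ) * (‖z.1‖ ^ 2 + ‖z.2‖ ^ 2) := by
  have hi := abs_le.1 (abs_real_inner_le_norm z.1 z.2)
  have : 0 ≤ (1 / γ) * (γ * ‖z.1‖ - ‖z.2‖) ^ 2 := by positivity
  have e : (1 / γ) * (γ * ‖z.1‖ - ‖z.2‖) ^ 2 = γ * ‖z.1‖ ^ 2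
      - 2 * (‖z.1‖ * ‖z.2‖) + (1 / γ) * ‖z.2‖ ^ 2 := by
      field_simp
      ring
  have e2 : 2 / γ = 2 * (1 / γ) := by field_simp
  have e3 : 3 / γ = 3 * (1 / γ) := by field_simp
  have hg : 0 < 1 / γ := by positivity
  rw [e] at this
  rw [lyV, e2, e3]
  nlinarith [sq_nonneg ‖z.1‖, sq_nonneg ‖z.2‖, mul_nonneg hγ.le (sq_nonneg ‖z.2‖),
    mul_nonneg hg.le (sq_nonneg ‖z.1‖)]

lemma lyV_upper (hγ : 0 < γ) (z : E × E) :
    lyV γ z ≤ (1 + 2 * (2 * γ + 3 / γ)) * (1 + ‖z‖ ^ 2) := by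
  refine (lyV_upper' hγ z).trans ?_
  have h1 := norm_fst_le z
  have h2 := norm_snd_le z
  have : ‖z.1‖ ^ 2 + ‖z.2‖ ^ 2 ≤ 2 * ‖z‖ ^ 2 := by
    nlinarith [norm_nonneg z.1, norm_nonneg z.2]
  have hk : 0 < 2 * γ + 3 / γ := by positivity
  nlinarith [sq_nonneg ‖z‖, mul_le_mul_of_nonneg_left this hk.le]

lemma lyV_one_le (hγ : 0 < γ) (z : E × E) : 1 ≤ lyV γ z := by
  have := lyV_lower hγ z
  have : 0 ≤ min (γ / 3) (1 / (2 * γ)) * ‖z‖ ^ 2 := by positivity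
  linarith

lemma lyV_meas : Measurable (lyV γ : E × E → ℝ) := by
  unfold lyV; fun_prop

lemma lyV_cls (hγ : 0 < γ) : Cls (lyV γ : E × E → ℝ) := by
  refine ⟨lyV_meas, (1 + 2 * (2 * γ + 3 / γ)), fun z => ?_⟩
  rw [abs_of_nonneg (by linarith [lyV_one_le hγ z])]
  exact lyV_upper hγ z

lemma integral_inner_std (a : E) : ∫ ξ : E, inner ℝ a ξ ∂(stdGaussian E) = 0 := by
  have := integral_strongDual_stdGaussian (innerSL ℝ a)
  simpa using this

lemma integrable_inner_std (a : E) : Integrable (fun ξ : E => inner ℝ a ξ) (stdGaussian E) := by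
  refine Integrable.mono' ((integrable_pow_norm_std (E := E) 1).const_mul ‖a‖)
    (by fun_prop) (Filter.Eventually.of_forall fun ξ => ?_)
  simpa using norm_inner_le_norm (𝕜 := ℝ) a ξ

lemma Pop_lyV (hγ : 0 < γ) (hh : 0 < h) (z : E × E) :
    Pop gU γ h (lyV γ) z = lyV γ (stp gU γ h z 0)
      + 4 * h * ∫ ξ : E, ‖ξ‖ ^ 2 ∂(stdGaussian E) := by
  set σ := Real.sqrt (2 * γ * h) with hσ
  have hσ2 : σ ^ 2 = 2 * γ * h := Real.sq_sqrt (by positivity)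
  set F := stp gU γ h z 0 with hF
  have e : ∀ ξ : E, lyV γ (stp gU γ h z ξ) = lyV γ F
      + inner ℝ ((2 * σ) • F.1 + (4 / γ * σ) • F.2) ξ + 4 * h * ‖ξ‖ ^ 2 := by
    intro ξ
    have hs : stp gU γ h z ξ = F + (0, σ • ξ) := by
      rw [← stp_sub_zero (gU := gU) (γ := γ) (h := h) z ξ]; abel
    rw [hs]
    simp only [lyV, Prod.fst_add, Prod.snd_add, add_zero, inner_add_left, inner_add_right,
      norm_add_sq_real, inner_smul_left, inner_smul_right, norm_smul, mul_pow, Real.norm_eq_abs,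
      sq_abs, hσ2]
    simp
    field_simp
    ring
  unfold Pop
  simp_rw [e]
  have i1 : Integrable (fun ξ : E => lyV γ F
      + inner ℝ ((2 * σ) • F.1 + (4 / γ * σ) • F.2) ξ) (stdGaussian E) :=
    (integrable_const _).add (integrable_inner_std _)
  rw [integral_add i1 ((integrable_pow_norm_std 2).const_mul _), integral_add (integrable_const _)
    (integrable_inner_std _), integral_inner_std, integral_const_mul]
  simp

lemma lyV_stp_zero (hγ : 0 < γ) (x v : E) :
    lyV γ (stp gU γ h (x, v) 0) = lyV γ (x, v)
      + h * (-2 * ‖v‖ ^ 2 - 2 * inner ℝ x (gU x) - (4 / γ) * inner ℝ v (gU x))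
      + h ^ 2 * (γ * ‖v‖ ^ 2 - 2 * inner ℝ v (gU x + γ • v) + (2 / γ) * ‖gU x + γ • v‖ ^ 2) := by
  set g := gU x with hg
  have hs : stp gU γ h (x, v) 0 = (x + h • v, v - h • (g + γ • v)) := by
    simp only [stp, smul_zero, add_zero, smul_add, smul_smul]
    rw [mul_comm h γ, sub_sub]
  rw [hs]
  simp only [lyV, inner_add_left, inner_sub_right, inner_add_right, norm_sub_sq_real,
    norm_add_sq_real, inner_smul_left, inner_smul_right, norm_smul, mul_pow, Real.norm_eq_abs,
    sq_abs]
  simp only [conj_trivial, real_inner_self_eq_norm_sq, real_inner_comm v g]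
  field_simp
  ring

lemma lyap_drift {L m B γ a b xg vg : ℝ} (hL : 0 < L) (hm : 0 < m) (hB : 0 < B) (hγ : 0 < γ)
    (h1 : 4 * L ≤ γ) (h2 : 4 * L ≤ γ * m) (ha0 : 0 ≤ a) (hb0 : 0 ≤ b)
    (hdis : m * a ^ 2 - B * a ≤ xg) (hvg : |vg| ≤ b * (L * (a + 1))) :
    -2 * b ^ 2 - 2 * xg - (4 / γ) * vg
      ≤ -(min 1 m) * (a ^ 2 + b ^ 2) + (1 / 2 + 2 * B ^ 2 / m) := by
  have t0 : ∃ κ, κ = 4 * L / γ := ⟨_, rfl⟩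
  obtain ⟨κ, hκ⟩ := t0
  have hκ1 : κ ≤ 1 := by rw [hκ, div_le_one hγ]; exact h1
  have hκm : κ ≤ m := by rw [hκ, div_le_iff₀ hγ]; linarith
  have hκ0 : 0 ≤ κ := by rw [hκ]; positivity
  have t1 : -((4 / γ) * vg) ≤ κ * (b * (a + 1)) := by
    have h3 : -vg ≤ b * (L * (a + 1)) := by linarith [(abs_le.1 hvg).1]
    have h4 : (0:ℝ) ≤ 4 / γ := by positivity
    have h5 := mul_le_mul_of_nonneg_left h3 h4
    have h6 : (4 / γ) * (b * (L * (a + 1))) = κ * (b * (a + 1)) := by rw [hκ]; ring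
    linarith
  have t2 : κ * (b * a) ≤ m * a ^ 2 / 2 + b ^ 2 / 2 := by
    have u1 : κ * (b * a) ≤ κ * ((a ^ 2 + b ^ 2) / 2) :=
      mul_le_mul_of_nonneg_left (by nlinarith [sq_nonneg (a - b)]) hκ0
    have u2 : κ * a ^ 2 ≤ m * a ^ 2 := mul_le_mul_of_nonneg_right hκm (sq_nonneg a)
    have u3 : κ * b ^ 2 ≤ 1 * b ^ 2 := mul_le_mul_of_nonneg_right hκ1 (sq_nonneg b)
    linarith
  have t3 : κ * b ≤ b ^ 2 / 2 + 1 / 2 := by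
    have : κ * b ≤ 1 * b := mul_le_mul_of_nonneg_right hκ1 hb0
    nlinarith [sq_nonneg (b - 1)]
  have t4 : 2 * B * a ≤ m * a ^ 2 / 2 + 2 * B ^ 2 / m := by
    have : 0 ≤ (1 / (2 * m)) * (m * a - 2 * B) ^ 2 := by positivity
    have e : (1 / (2 * m)) * (m * a - 2 * B) ^ 2
      = m * a ^ 2 / 2 + 2 * B ^ 2 / m - 2 * B * a := by field_simp; ring
    linarith
  have t5 : min 1 m * (a ^ 2 + b ^ 2) ≤ m * a ^ 2 + b ^ 2 := by
    have u1 : min 1 m * a ^ 2 ≤ m * a ^ 2 :=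
      mul_le_mul_of_nonneg_right (min_le_right _ _) (sq_nonneg a)
    have u2 : min 1 m * b ^ 2 ≤ 1 * b ^ 2 :=
      mul_le_mul_of_nonneg_right (min_le_left _ _) (sq_nonneg b)
    linarith
  have t6 : κ * (b * (a + 1)) = κ * (b * a) + κ * b := by ring
  linarith

lemma lyap_sec {L γ a b r vr : ℝ} (hL : 0 < L) (hγ : 0 < γ)
    (ha0 : 0 ≤ a) (hr0 : 0 ≤ r) (hr : r ≤ L * (a + 1) + γ * b) (hvr : |vr| ≤ b * r) :
    γ * b ^ 2 - 2 * vr + (2 / γ) * r ^ 2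
      ≤ (γ + 1 + (1 + 2 / γ) * (4 * L ^ 2 + 2 * γ ^ 2)) * (1 + (a ^ 2 + b ^ 2)) := by
  have hr2 : r ^ 2 ≤ (4 * L ^ 2 + 2 * γ ^ 2) * (1 + (a ^ 2 + b ^ 2)) := by
    calc r ^ 2 ≤ (L * (a + 1) + γ * b) ^ 2 := pow_le_pow_left₀ hr0 hr 2
      _ ≤ 2 * (L * (a + 1)) ^ 2 + 2 * (γ * b) ^ 2 := by
          nlinarith [sq_nonneg (L * (a + 1) - γ * b)]
      _ = L ^ 2 * (2 * (a + 1) ^ 2) + 2 * γ ^ 2 * b ^ 2 := by ring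
      _ ≤ L ^ 2 * (4 * (1 + a ^ 2)) + 2 * γ ^ 2 * b ^ 2 := by
          have : 2 * (a + 1) ^ 2 ≤ 4 * (1 + a ^ 2) := by nlinarith [sq_nonneg (a - 1)]
          have := mul_le_mul_of_nonneg_left this (sq_nonneg L)
          linarith
      _ ≤ _ := by
          have t1 : 0 ≤ L ^ 2 * b ^ 2 := by positivity
          have t2 : 0 ≤ γ ^ 2 * (1 + a ^ 2) := by positivity
          nlinarith
  have u1 : -vr ≤ b * r := by linarith [(abs_le.1 hvr).1]
  have u2 : 2 * (b * r) ≤ b ^ 2 + r ^ 2 := by nlinarith [sq_nonneg (b - r)]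
  have hg : (0:ℝ) ≤ 1 + 2 / γ := by positivity
  have u3 := mul_le_mul_of_nonneg_left hr2 hg
  have u4 : (γ + 1) * b ^ 2 ≤ (γ + 1) * (1 + (a ^ 2 + b ^ 2)) :=
    mul_le_mul_of_nonneg_left (by nlinarith [sq_nonneg a]) (by linarith)
  linarith

lemma lyap_det (hG : Good gU L m B) (hγ : 0 < γ) (h1 : 4 * L ≤ γ) (h2 : 4 * L ≤ γ * m)
    (hh : 0 < h) (z : E × E) :
    lyV γ (stp gU γ h z 0) ≤ lyV γ z
      + h * (-(min 1 m) * (‖z.1‖ ^ 2 + ‖z.2‖ ^ 2) + (1 / 2 + 2 * B ^ 2 / m))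
      + h ^ 2 * ((γ + 1 + (1 + 2 / γ) * (4 * L ^ 2 + 2 * γ ^ 2))
        * (1 + (‖z.1‖ ^ 2 + ‖z.2‖ ^ 2))) := by
  obtain ⟨x, v⟩ := z
  rw [lyV_stp_zero hγ x v]
  have hgr : ‖gU x‖ ≤ L * (‖x‖ + 1) := hG.gr x
  have hdis := hG.dis x
  have hvg : |inner ℝ v (gU x)| ≤ ‖v‖ * (L * (‖x‖ + 1)) :=
    (abs_real_inner_le_norm v (gU x)).trans (mul_le_mul_of_nonneg_left hgr (norm_nonneg _))
  have hr : ‖gU x + γ • v‖ ≤ L * (‖x‖ + 1) + γ * ‖v‖ := by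
    have := norm_add_le (gU x) (γ • v)
    rw [norm_smul, Real.norm_eq_abs, abs_of_pos hγ] at this
    linarith
  have hvr : |inner ℝ v (gU x + γ • v)| ≤ ‖v‖ * ‖gU x + γ • v‖ := abs_real_inner_le_norm _ _
  have hdrift := lyap_drift hG.Lpos hG.mpos hG.Bpos hγ h1 h2 (norm_nonneg x) (norm_nonneg v)
    hdis hvg
  have hsec := lyap_sec hG.Lpos hγ (norm_nonneg x) (norm_nonneg _) hr hvr
  exact add_le_add (add_le_add le_rfl (mul_le_mul_of_nonneg_left hdrift hh.le))
    (mul_le_mul_of_nonneg_left hsec (sq_nonneg h))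

lemma lyap (hG : Good gU L m B) (hγ : 0 < γ) (h1 : 4 * L ≤ γ) (h2 : 4 * L ≤ γ * m) :
    ∃ c > 0, ∃ K > 0, ∃ h₀ > 0, h₀ ≤ 1 ∧ ∀ h, 0 < h → h ≤ h₀ → c * h ≤ 1 ∧
      ∀ z, Pop gU γ h (lyV γ) z ≤ (1 - c * h) * lyV γ z + K * h := by
  have hL := hG.Lpos
  have hm := hG.mpos
  have hB := hG.Bpos
  set p := min 1 m with hp
  have hp0 : 0 < p := by positivity
  set K2 := γ + 1 + (1 + 2 / γ) * (4 * L ^ 2 + 2 * γ ^ 2) with hK2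
  have hK20 : 0 < K2 := by positivity
  set K3 := 1 / 2 + 2 * B ^ 2 / m with hK3
  have hK30 : 0 < K3 := by positivity
  set Ku := 2 * γ + 3 / γ with hKu
  have hKu0 : 0 < Ku := by positivity
  set M2 := ∫ ξ : E, ‖ξ‖ ^ 2 ∂(stdGaussian E) with hM2
  have hM20 : 0 ≤ M2 := integral_nonneg fun ξ => by positivity
  set c := p / (2 * Ku) with hc
  have hc0 : 0 < c := by positivity
  refine ⟨c, hc0, K3 + p / 2 + c + 4 * M2, by positivity, min 1 (min (p / (2 * K2)) (1 / c)),
    by positivity, min_le_left _ _, fun h hh hh0 => ⟨?_, fun z => ?_⟩⟩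
  · have : h ≤ 1 / c := hh0.trans ((min_le_right _ _).trans (min_le_right _ _))
    rw [le_div_iff₀ hc0] at this
    linarith
  · have hh2 : h ≤ p / (2 * K2) := hh0.trans ((min_le_right _ _).trans (min_le_left _ _))
    rw [le_div_iff₀ (by positivity)] at hh2
    rw [Pop_lyV hγ hh]
    have hd := lyap_det hG hγ h1 h2 hh z
    rw [← hp, ← hK2, ← hK3] at hd
    have hu := lyV_upper' hγ z
    rw [← hKu] at hu
    set s := ‖z.1‖ ^ 2 + ‖z.2‖ ^ 2 with hs
    have hs0 : 0 ≤ s := by positivity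
    have t1 : h ^ 2 * (K2 * (1 + s)) ≤ h * (p / 2) * (1 + s) := by
      have : h * (h * K2) * (1 + s) ≤ h * (p / 2) * (1 + s) := by
        gcongr; linarith
      nlinarith
    have t2 : h * c * lyV γ z ≤ h * c * (1 + Ku * s) := by gcongr
    have t3 : c * Ku = p / 2 := by rw [hc]; field_simp
    have t4 : h * c * (1 + Ku * s) = h * c + h * (p / 2) * s := by rw [← t3]; ring
    rw [← hM2]
    nlinarith

lemma lyap_iter (hP : MkOp (Pop gU γ h)) (hγ : 0 < γ) {c K : ℝ} (hc : 0 < c)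
    (hch : c * h ≤ 1) (hL : ∀ z, Pop gU γ h (lyV γ) z ≤ (1 - c * h) * lyV γ z + K * h) (n : ℕ)
    (hK : 0 < K) :
    ∀ z, (Pop gU γ h)^[n] (lyV γ) z ≤ (1 - c * h) ^ n * lyV γ z + K / c := by
  induction n with
  | zero => intro z; simp; positivity
  | succ n ih =>
    intro z
    rw [Function.iterate_succ_apply]
    have h0 : 0 ≤ 1 - c * h := by linarith
    have := (hP.iter n).mono _ _ (hP.cls _ (lyV_cls hγ))
      (((lyV_cls hγ).smul (1 - c * h)).add (Cls.const (K * h))) hL z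
    rw [(hP.iter n).affine (lyV_cls hγ)] at this
    refine this.trans ?_
    have h3 := mul_le_mul_of_nonneg_left (ih z) h0
    have h4 : (1 - c * h) * (K / c) + K * h = K / c := by field_simp; ring
    have h5 : (1 - c * h) * ((1 - c * h) ^ n * lyV γ z + K / c)
      = (1 - c * h) ^ (n + 1) * lyV γ z + (1 - c * h) * (K / c) := by ring
    linarith

lemma stp_lip (hG : Good gU L m B) (hγ : 0 < γ) (hh : 0 < h) (z z' : E × E) (ξ : E) :
    ‖stp gU γ h z ξ - stp gU γ h z' ξ‖ ≤ (1 + (1 + L + γ) * h) * ‖z - z'‖ := by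
  have h1 : ‖z.1 - z'.1‖ ≤ ‖z - z'‖ := norm_fst_le (z - z')
  have h2 : ‖z.2 - z'.2‖ ≤ ‖z - z'‖ := norm_snd_le (z - z')
  have hL := hG.Lpos
  set r := ‖z - z'‖
  have hr : 0 ≤ r := norm_nonneg _
  have e : stp gU γ h z ξ - stp gU γ h z' ξ = ((z.1 - z'.1) + h • (z.2 - z'.2),
      (z.2 - z'.2) - h • (gU z.1 - gU z'.1) - (γ * h) • (z.2 - z'.2)) := by
    ext1
    · simp [stp, smul_sub]; abel
    · simp [stp, smul_sub]; abel
  rw [e, Prod.norm_def]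
  have hgh : 0 < γ * h := by positivity
  have hLh : 0 < L * h := by positivity
  refine max_le ?_ ?_
  · refine (norm_add_le _ _).trans ?_
    rw [norm_smul, Real.norm_eq_abs, abs_of_pos hh]
    have : h * ‖z.2 - z'.2‖ ≤ h * r := by gcongr
    have := mul_nonneg hLh.le hr
    have := mul_nonneg hgh.le hr
    linarith
  · have t := norm_sub_le ((z.2 - z'.2) - h • (gU z.1 - gU z'.1)) ((γ * h) • (z.2 - z'.2))
    have t' := norm_sub_le (z.2 - z'.2) (h • (gU z.1 - gU z'.1))
    rw [norm_smul, Real.norm_eq_abs, abs_of_pos hgh] at t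
    rw [norm_smul, Real.norm_eq_abs, abs_of_pos hh] at t'
    have u1 : γ * h * ‖z.2 - z'.2‖ ≤ γ * h * r := by gcongr
    have u2 : h * ‖gU z.1 - gU z'.1‖ ≤ h * (L * r) := by
      gcongr
      exact (hG.lip _ _).trans (by gcongr)
    have := mul_nonneg hh.le hr
    nlinarith

lemma Pop_lip (hG : Good gU L m B) (hγ : 0 < γ) (hh : 0 < h) (hh1 : h ≤ 1) {g : E × E → ℝ}
    (hg : Cls g) {l : ℝ} (hl : 0 ≤ l) (hgl : ∀ z z', |g z - g z'| ≤ l * ‖z - z'‖) (n : ℕ) :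
    ∀ z z', |(Pop gU γ h)^[n] g z - (Pop gU γ h)^[n] g z'|
      ≤ (1 + (1 + L + γ) * h) ^ n * l * ‖z - z'‖ := by
  have hP := Pop_mk hG hγ hh hh1
  have hL := hG.Lpos
  induction n with
  | zero => simpa using hgl
  | succ n ih =>
    intro z z'
    rw [Function.iterate_succ_apply']
    set k := (Pop gU γ h)^[n] g
    have hk : Cls k := (hP.iter n).cls g hg
    have i1 := hk.integrable_stp hG hγ hh hh1 z
    have i2 := hk.integrable_stp hG hγ hh hh1 z'
    unfold Pop
    rw [← integral_sub i1 i2]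
    refine abs_integral_le_integral_abs.trans ?_
    have : ∫ ξ : E, (1 + (1 + L + γ) * h) ^ (n + 1) * l * ‖z - z'‖ ∂(stdGaussian E)
      = (1 + (1 + L + γ) * h) ^ (n + 1) * l * ‖z - z'‖ := by simp
    rw [← this]
    refine integral_mono (i1.sub i2).abs (integrable_const _) fun ξ => ?_
    refine (ih _ _).trans ?_
    have := stp_lip hG hγ hh z z' ξ
    calc _ ≤ (1 + (1 + L + γ) * h) ^ n * l * ((1 + (1 + L + γ) * h) * ‖z - z'‖) := by gcongr
      _ = _ := by ring

end Chain

end EM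



namespace EM

section Path

variable {E : Type*} [NormedAddCommGroup E] [NormedSpace ℝ E]

/-- velocity part of the bridge. -/
noncomputable def brE (n : ℕ) (e w : E) (k : ℕ) : E :=
  (1 - (k:ℝ) / n) • e + ((k:ℝ) * (n - k)) • w

lemma sum_brE (n : ℕ) (hn : 2 ≤ n) (e w : E) (k : ℕ) :
    ∑ i ∈ Finset.range k, brE n e w i
      = ((k:ℝ) - k * (k - 1) / (2 * n)) • e
        + ((n:ℝ) * (k * (k - 1)) / 2 - (k - 1) * k * (2 * k - 1) / 6) • w := by
  have hn0 : (n:ℝ) ≠ 0 := by positivity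
  induction k with
  | zero => simp
  | succ k ih =>
    rw [Finset.sum_range_succ, ih, brE]
    push_cast
    rw [add_add_add_comm, ← add_smul, ← add_smul]
    congr 2
    · field_simp; ring
    · ring

lemma bridge (n : ℕ) (hn : 2 ≤ n) {h : ℝ} (hh : 0 < h) (h1 : 1 ≤ n * h) (h2 : n * h ≤ 2)
    (D0 E0 : E) {r : ℝ} (hD : ‖D0‖ ≤ r) (hE : ‖E0‖ ≤ r) :
    ∃ D F : ℕ → E, D 0 = D0 ∧ F 0 = E0 ∧ D n = 0 ∧ F n = 0 ∧
      (∀ k, D (k + 1) = D k + h • F k) ∧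
      (∀ k, k < n → ‖D k‖ ≤ 37 * r ∧ ‖F k‖ ≤ 37 * r ∧ ‖F (k + 1) - F k‖ ≤ h * (37 * r)) := by
  have hn2 : (2:ℝ) ≤ n := by exact_mod_cast hn
  have hn0 : (n:ℝ) ≠ 0 := by positivity
  have hr : 0 ≤ r := (norm_nonneg _).trans hD
  have hq : (0:ℝ) < (n:ℝ) ^ 2 - 1 := by nlinarith
  set w : E := (-(6 / (h * n * ((n:ℝ) ^ 2 - 1)))) • (D0 + (h * ((n:ℝ) + 1) / 2) • E0) with hw
  have hwb : ‖w‖ ≤ 36 * r / (n:ℝ) ^ 2 := by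
    rw [hw, norm_smul, norm_neg, Real.norm_eq_abs, abs_of_pos (by positivity)]
    have b1 : ‖D0 + (h * ((n:ℝ) + 1) / 2) • E0‖ ≤ 3 * r := by
      refine (norm_add_le _ _).trans ?_
      rw [norm_smul, Real.norm_eq_abs, abs_of_pos (by positivity)]
      have : h * ((n:ℝ) + 1) / 2 * ‖E0‖ ≤ 2 * r := by
        apply mul_le_mul _ hE (norm_nonneg _) (by norm_num)
        nlinarith
      linarith
    have b2 : 6 / (h * n * ((n:ℝ) ^ 2 - 1)) ≤ 12 / (n:ℝ) ^ 2 := by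
      rw [div_le_div_iff₀ (by positivity) (by positivity)]
      have : (n:ℝ) ^ 2 - 1 ≤ (n * h) * ((n:ℝ) ^ 2 - 1) := by nlinarith
      nlinarith
    calc 6 / (h * n * ((n:ℝ) ^ 2 - 1)) * ‖D0 + (h * ((n:ℝ) + 1) / 2) • E0‖
        ≤ 12 / (n:ℝ) ^ 2 * (3 * r) := by
          apply mul_le_mul b2 b1 (norm_nonneg _) (by positivity)
      _ = _ := by ring
  have hwn : (n:ℝ) ^ 2 * ‖w‖ ≤ 36 * r := by
    rw [le_div_iff₀ (by positivity)] at hwb; linarith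
  have hF : ∀ k, k ≤ n → ‖brE n E0 w k‖ ≤ 10 * r := by
    intro k hk
    have hk' : (k:ℝ) ≤ n := by exact_mod_cast hk
    have hk0 : (0:ℝ) ≤ k := by positivity
    have a1 : (k:ℝ) / n ≤ 1 := by rw [div_le_one (by positivity)]; exact hk'
    have a2 : 0 ≤ (k:ℝ) / n := by positivity
    unfold brE
    refine (norm_add_le _ _).trans ?_
    rw [norm_smul, norm_smul, Real.norm_eq_abs, Real.norm_eq_abs, abs_of_nonneg (by linarith),
      abs_of_nonneg (by nlinarith)]
    have t1 : (1 - (k:ℝ) / n) * ‖E0‖ ≤ 1 * r :=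
      mul_le_mul (by linarith) hE (norm_nonneg _) (by norm_num)
    have t2 : (k:ℝ) * (n - k) * ‖w‖ ≤ ((n:ℝ) ^ 2 / 4) * ‖w‖ := by
      apply mul_le_mul_of_nonneg_right _ (norm_nonneg _)
      nlinarith [sq_nonneg ((n:ℝ) - 2 * k)]
    linarith
  refine ⟨fun k => D0 + h • ∑ i ∈ Finset.range k, brE n E0 w i, brE n E0 w, by simp, by simp [brE],
    ?_, ?_, ?_, ?_⟩
  · show D0 + h • ∑ i ∈ Finset.range n, brE n E0 w i = 0
    rw [sum_brE n hn, hw]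
    have c1 : h * ((n:ℝ) * (n * (n - 1)) / 2 - (n - 1) * n * (2 * n - 1) / 6) *
      -(6 / (h * n * ((n:ℝ) ^ 2 - 1))) = -1 := by
      field_simp; ring
    have c2 : h * ((n:ℝ) - n * (n - 1) / (2 * n)) = h * ((n:ℝ) + 1) / 2 := by
      field_simp; ring
    rw [smul_add, smul_smul h, smul_smul h, smul_smul, c1, c2]
    simp
  · simp [brE, hn0]
  · intro k
    simp [Finset.sum_range_succ, smul_add, add_assoc]
  · intro k hk
    refine ⟨?_, (hF k hk.le).trans (by linarith), ?_⟩
    · refine (norm_add_le _ _).trans ?_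
      rw [norm_smul, Real.norm_eq_abs, abs_of_pos hh]
      have s1 : ‖∑ i ∈ Finset.range k, brE n E0 w i‖ ≤ k * (10 * r) := by
        refine (norm_sum_le _ _).trans ?_
        calc _ ≤ ∑ i ∈ Finset.range k, 10 * r := by
              apply Finset.sum_le_sum
              intro i hi
              exact hF i ((Finset.mem_range.1 hi).le.trans hk.le)
          _ = _ := by simp
      have s2 : h * ‖∑ i ∈ Finset.range k, brE n E0 w i‖ ≤ h * (n * (10 * r)) := by
        apply mul_le_mul_of_nonneg_left _ hh.le
        refine s1.trans ?_
        apply mul_le_mul_of_nonneg_right _ (by linarith)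
        exact_mod_cast hk.le
      nlinarith
    · have e : brE n E0 w (k + 1) - brE n E0 w k = (-(1 / (n:ℝ))) • E0 + ((n:ℝ) - 2 * k - 1) • w := by
        unfold brE
        rw [add_sub_add_comm, ← sub_smul, ← sub_smul]
        push_cast
        congr 2
        · field_simp; ring
        · ring
      rw [e]
      refine (norm_add_le _ _).trans ?_
      rw [norm_smul, norm_smul, norm_neg, Real.norm_eq_abs, Real.norm_eq_abs,
        abs_of_pos (by positivity)]
      have hk' : (k:ℝ) + 1 ≤ n := by exact_mod_cast hk
      have hk0 : (0:ℝ) ≤ k := by positivity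
      have a1 : |(n:ℝ) - 2 * k - 1| ≤ n := by rw [abs_le]; constructor <;> linarith
      have a2 : 1 / (n:ℝ) ≤ h := by rw [div_le_iff₀ (by positivity)]; linarith
      have t1 : 1 / (n:ℝ) * ‖E0‖ ≤ h * r := mul_le_mul a2 hE (norm_nonneg _) hh.le
      have t2 : |(n:ℝ) - 2 * k - 1| * ‖w‖ ≤ n * ‖w‖ := mul_le_mul_of_nonneg_right a1 (norm_nonneg _)
      have t3 : (n:ℝ) * ‖w‖ ≤ h * (36 * r) := by
        calc (n:ℝ) * ‖w‖ = (1 / (n:ℝ)) * ((n:ℝ) ^ 2 * ‖w‖) := by field_simp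
          _ ≤ h * (36 * r) := mul_le_mul a2 hwn (by positivity) hh.le
      linarith

end Path

section Harnack

variable {E : Type*} [NormedAddCommGroup E] [InnerProductSpace ℝ E] [FiniteDimensional ℝ E]
  [MeasurableSpace E] [BorelSpace E]

variable {gU : E → E} {L m B γ h : ℝ}

lemma harnack_one (hG : Good gU L m B) (hγ : 0 < γ) (hh : 0 < h) (hh1 : h ≤ 1)
    {g1 g2 : E × E → ℝ} (c1 : Cls g1) (c2 : Cls g2) (p1 : ∀ y, 0 ≤ g1 y) (p2 : ∀ y, 0 ≤ g2 y)
    {b b' : ℝ} (δ : E × E) (hg : ∀ y, g1 y ^ 2 ≤ Real.exp b * g2 (y + δ)) (z z' : E × E) (u : E)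
    (hu : ‖u‖ ^ 2 ≤ b') (hz : ∀ ξ, stp gU γ h z' (ξ + u) = stp gU γ h z ξ + δ) :
    (Pop gU γ h g1 z) ^ 2 ≤ Real.exp (b + b') * Pop gU γ h g2 z' := by
  set k : E → ℝ := fun x => Real.sqrt (g2 (stp gU γ h z' x)) with hk
  have hksq : ∀ x, k x ^ 2 = g2 (stp gU γ h z' x) := fun x => Real.sq_sqrt (p2 _)
  have hkm : Measurable k := (c2.1.comp (stp_meas' hG z')).sqrt
  have hk2 : Integrable (fun x => k x ^ 2) (stdGaussian E) := by
    simp_rw [hksq]; exact c2.integrable_stp hG hγ hh hh1 z'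
  obtain ⟨i1, i2⟩ := cm_shift k hkm hk2 u
  have hexp : Real.exp (b / 2) ^ 2 = Real.exp b := by
    rw [← Real.exp_nat_mul]; congr 1; push_cast; ring
  have hle : Pop gU γ h g1 z ≤ Real.exp (b / 2) * ∫ x, k (x + u) ∂(stdGaussian E) := by
    rw [← integral_const_mul]
    refine integral_mono (c1.integrable_stp hG hγ hh hh1 z) (i1.const_mul _) fun ξ => ?_
    show g1 (stp gU γ h z ξ) ≤ Real.exp (b / 2) * k (ξ + u)
    apply le_of_sq_le_sq _ (by positivity)
    rw [mul_pow, hksq, hz, hexp]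
    exact hg (stp gU γ h z ξ)
  have h0 : 0 ≤ Pop gU γ h g1 z := integral_nonneg fun ξ => p1 _
  have hP0 : 0 ≤ Pop gU γ h g2 z' := integral_nonneg fun ξ => p2 _
  calc (Pop gU γ h g1 z) ^ 2 ≤ (Real.exp (b / 2) * ∫ x, k (x + u) ∂(stdGaussian E)) ^ 2 :=
        pow_le_pow_left₀ h0 hle 2
    _ = Real.exp b * (∫ x, k (x + u) ∂(stdGaussian E)) ^ 2 := by
        rw [mul_pow, hexp]
    _ ≤ Real.exp b * (Real.exp (‖u‖ ^ 2) * ∫ x, k x ^ 2 ∂(stdGaussian E)) := by gcongr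
    _ = Real.exp b * (Real.exp (‖u‖ ^ 2) * Pop gU γ h g2 z') := by simp_rw [hksq]; rfl
    _ ≤ Real.exp b * (Real.exp b' * Pop gU γ h g2 z') := by gcongr
    _ = _ := by rw [Real.exp_add]; ring

lemma harnack_path (hG : Good gU L m B) (hγ : 0 < γ) (hh : 0 < h) (hh1 : h ≤ 1)
    {g : E × E → ℝ} (hgm : Measurable g) (c2 : Cls (fun y => g y ^ 2)) (p1 : ∀ y, 0 ≤ g y)
    (n : ℕ) (D F : ℕ → E) (hDn : D n = 0) (hFn : F n = 0)
    (hD : ∀ k, D (k + 1) = D k + h • F k) {ρ : ℝ}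
    (hb : ∀ k, k < n → ‖D k‖ ≤ ρ ∧ ‖F k‖ ≤ ρ ∧ ‖F (k + 1) - F k‖ ≤ h * ρ) (i : ℕ) (hi : i ≤ n) :
    ∀ z, ((Pop gU γ h)^[i] g z) ^ 2 ≤
      Real.exp (i * (h * ((1 + L + γ) ^ 2 / (2 * γ)) * ρ ^ 2))
        * (Pop gU γ h)^[i] (fun y => g y ^ 2) (z + (D (n - i), F (n - i))) := by
  have hP := Pop_mk hG hγ hh hh1
  have hL := hG.Lpos
  have c1 : Cls g := Cls.of_sq hgm c2
  induction i with
  | zero =>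
    intro z
    simp [hDn, hFn]
    rw [show ((0:E), (0:E)) = 0 from rfl, add_zero]
  | succ i ih =>
    intro z
    obtain ⟨j, hj⟩ : ∃ j, j = n - (i + 1) := ⟨_, rfl⟩
    have hj1 : n - i = j + 1 := by omega
    have hjn : j < n := by omega
    rw [← hj, Function.iterate_succ_apply', Function.iterate_succ_apply']
    have ih' := ih (by omega)
    rw [hj1] at ih'
    obtain ⟨b1, b2, b3⟩ := hb j hjn
    have hρ : 0 ≤ ρ := (norm_nonneg _).trans b1
    set σ := Real.sqrt (2 * γ * h) with hσ
    have hσ0 : 0 < σ := Real.sqrt_pos.2 (by positivity)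
    have hσ2 : σ ^ 2 = 2 * γ * h := Real.sq_sqrt (by positivity)
    set y : E := (F (j + 1) - F j) + h • (gU (z.1 + D j) - gU z.1) + (γ * h) • F j with hy
    have hyb : ‖y‖ ≤ h * ((1 + L + γ) * ρ) := by
      refine (norm_add₃_le).trans ?_
      rw [norm_smul, norm_smul, Real.norm_eq_abs, Real.norm_eq_abs, abs_of_pos hh,
        abs_of_pos (mul_pos hγ hh)]
      have t1 : ‖gU (z.1 + D j) - gU z.1‖ ≤ L * ρ := by
        refine (hG.lip _ _).trans ?_
        rw [add_sub_cancel_left]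
        gcongr
      have t2 : h * ‖gU (z.1 + D j) - gU z.1‖ ≤ h * (L * ρ) := by gcongr
      have t3 : γ * h * ‖F j‖ ≤ γ * h * ρ := by gcongr
      linarith
    have key := harnack_one hG hγ hh hh1 ((hP.iter i).cls g c1) ((hP.iter i).cls _ c2)
      (fun w => by
        have := (hP.iter i).mono _ _ (Cls.const 0) c1 p1 w
        rwa [(hP.iter i).const] at this)
      (fun w => by
        have := (hP.iter i).mono _ _ (Cls.const 0) c2 (fun y => sq_nonneg (g y)) w
        rwa [(hP.iter i).const] at this)
      (D (j + 1), F (j + 1)) ih' z (z + (D j, F j)) (σ⁻¹ • y)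
      (b' := h * ((1 + L + γ) ^ 2 / (2 * γ)) * ρ ^ 2) ?_ ?_
    · refine key.trans (le_of_eq ?_)
      congr 2
      push_cast; ring
    · rw [norm_smul, norm_inv, Real.norm_eq_abs, abs_of_pos hσ0, mul_pow, inv_pow, hσ2]
      calc (2 * γ * h)⁻¹ * ‖y‖ ^ 2 ≤ (2 * γ * h)⁻¹ * (h * ((1 + L + γ) * ρ)) ^ 2 := by gcongr
        _ = _ := by field_simp
    · intro ξ
      ext1
      · simp only [stp, Prod.fst_add, Prod.snd_add, hD, smul_add]
        abel
      · simp only [stp, Prod.fst_add, Prod.snd_add]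
        rw [← hσ, smul_add σ, smul_smul, mul_inv_cancel₀ hσ0.ne', one_smul, hy]
        simp only [smul_add, smul_sub]
        abel

lemma harnack (hG : Good gU L m B) (hγ : 0 < γ) :
    ∃ K > 0, ∀ h : ℝ, 0 < h → h ≤ 1 → ∀ n : ℕ, 2 ≤ n → 1 ≤ n * h → n * h ≤ 2 →
    ∀ g : E × E → ℝ, Measurable g → Cls (fun y => g y ^ 2) → (∀ y, 0 ≤ g y) → ∀ z z',
      ((Pop gU γ h)^[n] g z) ^ 2 ≤ Real.exp (K * ‖z - z'‖ ^ 2)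
        * (Pop gU γ h)^[n] (fun y => g y ^ 2) z' := by
  have hL := hG.Lpos
  refine ⟨2 * ((1 + L + γ) ^ 2 / (2 * γ)) * 37 ^ 2, by positivity,
    fun h hh hh1 n hn h1 h2 g hgm c2 p1 z z' => ?_⟩
  have hD : ‖(z' - z).1‖ ≤ ‖z - z'‖ := by rw [norm_sub_rev]; exact norm_fst_le _
  have hF : ‖(z' - z).2‖ ≤ ‖z - z'‖ := by rw [norm_sub_rev]; exact norm_snd_le _
  obtain ⟨D, F, d0, f0, dn, fn, hd, hb⟩ := bridge n hn hh h1 h2 _ _ hD hF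
  have := harnack_path hG hγ hh hh1 hgm c2 p1 n D F dn fn hd hb n le_rfl z
  rw [Nat.sub_self, d0, f0, Prod.mk.eta, add_sub_cancel] at this
  refine this.trans ?_
  have hP := (Pop_mk (gU := gU) hG hγ hh hh1).iter n
  have p2 := hP.mono _ _ (Cls.const 0) c2 (fun y => sq_nonneg (g y)) z'
  rw [hP.const] at p2
  apply mul_le_mul_of_nonneg_right _ p2
  apply Real.exp_le_exp.2
  calc n * (h * ((1 + L + γ) ^ 2 / (2 * γ)) * (37 * ‖z - z'‖) ^ 2)
      = (n * h) * (((1 + L + γ) ^ 2 / (2 * γ)) * (37 * ‖z - z'‖) ^ 2) := by ring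
    _ ≤ 2 * (((1 + L + γ) ^ 2 / (2 * γ)) * (37 * ‖z - z'‖) ^ 2) := by gcongr
    _ = _ := by ring

end Harnack

section Conseq

variable {S : Type*} [NormedAddCommGroup S] [MeasurableSpace S]

lemma minor_of_harnack {Q : (S → ℝ) → (S → ℝ)} (hQ : MkOp Q) {M : ℝ} (hM : 2 ≤ M) {z z' : S}
    (hH : ∀ g : S → ℝ, Measurable g → Cls (fun y => g y ^ 2) → (∀ y, 0 ≤ g y) →
      (Q g z) ^ 2 ≤ M * Q (fun y => g y ^ 2) z')
    {g : S → ℝ} (hg : Cls g) (h0 : ∀ y, 0 ≤ g y) (h1 : ∀ y, g y ≤ 1) :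
    Q g z - Q g z' ≤ 1 - 1 / M := by
  have c2 : Cls (fun y => g y ^ 2) := Cls.of_le (hg.1.pow_const 2) (Cls.const 1) fun y => by
    rw [abs_of_nonneg (sq_nonneg _)]
    exact pow_le_one₀ (h0 y) (h1 y)
  have a1 := hH g hg.1 c2 h0
  have a2 : Q (fun y => g y ^ 2) z' ≤ Q g z' :=
    hQ.mono _ _ c2 hg (fun y => by nlinarith [h0 y, h1 y]) z'
  have a3 := hQ.mono _ _ hg (Cls.const 1) h1 z
  rw [hQ.const] at a3
  have a4 := hQ.mono _ _ (Cls.const 0) hg h0 z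
  rw [hQ.const] at a4
  have hM0 : 0 < M := by linarith
  have a5 : (Q g z) ^ 2 / M ≤ Q g z' := by
    rw [div_le_iff₀ hM0]
    nlinarith
  have a6 : Q g z - (Q g z) ^ 2 / M ≤ 1 - 1 / M := by
    have : 1 - 1 / M - (Q g z - (Q g z) ^ 2 / M) = (1 - Q g z) * (M - 1 - Q g z) / M := by
      field_simp; ring
    have : 0 ≤ (1 - Q g z) * (M - 1 - Q g z) / M := by
      apply div_nonneg (mul_nonneg (by linarith) (by linarith)) hM0.le
    linarith
  linarith

lemma Cls.sq_add {g : S → ℝ} (hg : Measurable g) (c2 : Cls (fun y => g y ^ 2)) (t : ℝ) :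
    Cls (fun y => (g y + t) ^ 2) := by
  have := (c2.lin (Cls.of_sq hg c2) 1 (2 * t)).add (Cls.const (t ^ 2))
  convert this using 2 with y
  ring

lemma smooth_of_harnack {Q : (S → ℝ) → (S → ℝ)} (hQ : MkOp Q) {q : ℝ} (hq : 0 < q) {z z' : S}
    (hH : ∀ g : S → ℝ, Measurable g → Cls (fun y => g y ^ 2) → (∀ y, 0 ≤ g y) →
      (Q g z) ^ 2 ≤ (1 + q) * Q (fun y => g y ^ 2) z')
    {g : S → ℝ} (hg : Measurable g) (c2 : Cls (fun y => g y ^ 2)) :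
    (Q g z - Q g z') ^ 2 ≤ q * Q (fun y => g y ^ 2) z' := by
  have cg := Cls.of_sq hg c2
  have key : ∀ t : ℝ, (Q g z + t) ^ 2 ≤ (1 + q) * (Q (fun y => g y ^ 2) z' + 2 * t * Q g z' + t ^ 2) := by
    intro t
    have ct := Cls.sq_add hg c2 t
    have cabs : Cls (fun y => |g y + t| ^ 2) := by simpa only [sq_abs] using ct
    have hm : Measurable (fun y => |g y + t|) := by fun_prop
    have a := hH (fun y => |g y + t|) hm cabs (fun y => abs_nonneg _)
    simp only [sq_abs] at a
    have e1 : Q (fun y => g y + t) z = Q g z + t := by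
      rw [hQ.add cg (Cls.const t), hQ.const]
    have e2 : Q (fun y => (g y + t) ^ 2) z' = Q (fun y => g y ^ 2) z' + 2 * t * Q g z' + t ^ 2 := by
      have : (fun y => (g y + t) ^ 2) = fun y => (1 * g y ^ 2 + (2 * t) * g y) + t ^ 2 := by
        ext y; ring
      rw [this, hQ.add (c2.lin cg _ _) (Cls.const _), hQ.lin _ _ c2 cg, hQ.const]
      ring
    rw [← e2]
    refine le_trans ?_ a
    rw [← e1, ← sq_abs (Q (fun y => g y + t) z)]
    apply pow_le_pow_left₀ (abs_nonneg _)
    exact hQ.abs_le (cg.add (Cls.const t)) (Cls.of_sq hm cabs) (fun y => le_rfl) z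
  set a := Q g z
  set b := Q g z'
  set v := Q (fun y => g y ^ 2) z'
  have k1 := key ((a - b) / q - b)
  have e3 : a + ((a - b) / q - b) = (a - b) * (1 + q) / q := by field_simp; ring
  have e4 : v + 2 * ((a - b) / q - b) * b + ((a - b) / q - b) ^ 2 = v - b ^ 2 + (a - b) ^ 2 / q ^ 2 := by
    field_simp; ring
  rw [e3, e4] at k1
  have k2 : (a - b) ^ 2 * (1 + q) / q ^ 2 ≤ v - b ^ 2 + (a - b) ^ 2 / q ^ 2 := by
    have : ((a - b) * (1 + q) / q) ^ 2 = (1 + q) * ((a - b) ^ 2 * (1 + q) / q ^ 2) := by ring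
    rw [this] at k1
    exact le_of_mul_le_mul_left k1 (by linarith)
  have k3 : (a - b) ^ 2 * (1 + q) / q ^ 2 = (a - b) ^ 2 / q ^ 2 + (a - b) ^ 2 / q := by
    field_simp
  have k4 : (a - b) ^ 2 / q ≤ v - b ^ 2 := by linarith
  rw [div_le_iff₀ hq] at k4
  nlinarith [mul_nonneg hq.le (sq_nonneg b)]

end Conseq

end EM



namespace EM

section Mixing

variable {E : Type*} [NormedAddCommGroup E] [InnerProductSpace ℝ E] [FiniteDimensional ℝ E]
  [MeasurableSpace E] [BorelSpace E]

variable {gU : E → E} {L m B γ : ℝ}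

lemma w_bounds (hγ : 0 < γ) : ∃ a > 0, ∃ A > 0, ∀ z : E × E,
    a * ‖z‖ ≤ Real.sqrt (lyV γ z) ∧ Real.sqrt (lyV γ z) ≤ A * (1 + ‖z‖) := by
  refine ⟨Real.sqrt (min (γ / 3) (1 / (2 * γ))), Real.sqrt_pos.2 (by positivity),
    Real.sqrt (1 + 2 * (2 * γ + 3 / γ)), Real.sqrt_pos.2 (by positivity), fun z => ⟨?_, ?_⟩⟩
  · apply Real.le_sqrt_of_sq_le
    rw [mul_pow, Real.sq_sqrt (by positivity)]
    linarith [lyV_lower hγ z]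
  · apply Real.sqrt_le_iff.2 ⟨by positivity, ?_⟩
    rw [mul_pow, Real.sq_sqrt (by positivity)]
    refine (lyV_upper hγ z).trans ?_
    apply mul_le_mul_of_nonneg_left _ (by positivity)
    nlinarith [norm_nonneg z]

lemma w_cls (hγ : 0 < γ) : Cls (fun z : E × E => Real.sqrt (lyV γ z)) := by
  refine Cls.of_sq (lyV_meas.sqrt) ?_
  have : (fun z : E × E => Real.sqrt (lyV γ z) ^ 2) = lyV γ := by
    ext z
    exact Real.sq_sqrt (by linarith [lyV_one_le hγ z])
  rw [this]
  exact lyV_cls hγ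

lemma Q_lyap (hG : Good gU L m B) (hγ : 0 < γ) (h1 : 4 * L ≤ γ) (h2 : 4 * L ≤ γ * m) :
    ∃ c > 0, ∃ K > 0, ∃ h₀ > 0, h₀ ≤ 1 / 2 ∧ ∀ h, 0 < h → h ≤ h₀ →
      (∀ (n : ℕ) z, (Pop gU γ h)^[n] (lyV γ) z ≤ lyV γ z + K) ∧
      (∀ (n : ℕ), 1 ≤ n * h → ∀ z, (Pop gU γ h)^[n] (lyV γ) z ≤ Real.exp (-c) * lyV γ z + K) := by
  obtain ⟨c, hc, K, hK, h₀, hh₀, hh₁, H⟩ := lyap hG hγ h1 h2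
  refine ⟨c, hc, K / c, by positivity, min h₀ (1 / 2), by positivity, min_le_right _ _,
    fun h hh hle => ?_⟩
  have hle0 := hle.trans (min_le_left _ _)
  obtain ⟨hch, hL⟩ := H h hh hle0
  have hP := Pop_mk hG hγ hh (hle0.trans hh₁)
  have hch0 : 0 < c * h := by positivity
  refine ⟨fun n z => ?_, fun n hn z => ?_⟩
  · refine (lyap_iter hP hγ hc hch hL n hK z).trans ?_
    have : (1 - c * h) ^ n ≤ 1 := pow_le_one₀ (by linarith) (by linarith)
    have := mul_le_mul_of_nonneg_right this (by linarith [lyV_one_le hγ z] : 0 ≤ lyV γ z)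
    linarith
  · refine (lyap_iter hP hγ hc hch hL n hK z).trans ?_
    have h3 : 1 - c * h ≤ Real.exp (-(c * h)) := by
      have := Real.add_one_le_exp (-(c * h)); linarith
    have : (1 - c * h) ^ n ≤ Real.exp (-c) := by
      refine (pow_le_pow_left₀ (by linarith) h3 n).trans ?_
      rw [← Real.exp_nat_mul]
      apply Real.exp_le_exp.2
      nlinarith
    have := mul_le_mul_of_nonneg_right this (by linarith [lyV_one_le hγ z] : 0 ≤ lyV γ z)
    linarith

lemma harris_mix (hG : Good gU L m B) (hγ : 0 < γ) (h1 : 4 * L ≤ γ) (h2 : 4 * L ≤ γ * m) :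
    ∃ α > (0:ℝ), α < 1 ∧ ∃ C > (0:ℝ), ∃ h₀ > (0:ℝ), h₀ ≤ 1 / 2 ∧ ∀ h : ℝ, 0 < h → h ≤ h₀ →
      ∀ n : ℕ, 2 ≤ n → 1 ≤ n * h → n * h ≤ 2 → ∀ g : E × E → ℝ, Cls g → ∀ l > 0,
      (∀ z z', |g z - g z'| ≤ l * ‖z - z'‖) → ∀ (i : ℕ) z z',
      |((Pop gU γ h)^[n])^[i] g z - ((Pop gU γ h)^[n])^[i] g z'|
        ≤ C * l * α ^ i * (1 + ‖z‖ + ‖z'‖) := by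
  obtain ⟨c, hc, K, hK, h₀, hh₀, hh₁, H⟩ := Q_lyap hG hγ h1 h2
  obtain ⟨a, ha, A, hA, hw⟩ := w_bounds (E := E) hγ
  obtain ⟨KH, hKH, hH⟩ := harnack hG hγ
  obtain ⟨lam, hlam⟩ : ∃ lam, lam = Real.sqrt (Real.exp (-c)) := ⟨_, rfl⟩
  obtain ⟨kap, hkap⟩ : ∃ kap, kap = Real.sqrt K := ⟨_, rfl⟩
  have hlam0 : 0 ≤ lam := by rw [hlam]; exact Real.sqrt_nonneg _
  have hlam1 : lam < 1 := by
    rw [hlam, Real.sqrt_lt' one_pos, one_pow]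
    rw [← Real.exp_zero]; exact Real.exp_lt_exp.2 (by linarith)
  have hkap0 : 0 < kap := by rw [hkap]; exact Real.sqrt_pos.2 hK
  obtain ⟨ρ, hρ⟩ : ∃ ρ, ρ = 4 * kap / (1 - lam) := ⟨_, rfl⟩
  obtain ⟨M, hM⟩ : ∃ M, M = max 2 (Real.exp (KH * (ρ / a) ^ 2)) := ⟨_, rfl⟩
  have hM2 : 2 ≤ M := by rw [hM]; exact le_max_left _ _
  have hε : 0 < 1 / M := by positivity
  obtain ⟨β, hβ⟩ : ∃ β, β = harB kap (1 / M) := ⟨_, rfl⟩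
  have hβ0 : 0 < β := by rw [hβ]; exact harB_pos hkap0 hε
  obtain ⟨α, hα⟩ : ∃ α, α = max (1 / 2) (harA lam kap (1 / M)) := ⟨_, rfl⟩
  have hα0 : 0 < α := by rw [hα]; positivity
  have hα1 : α < 1 := by rw [hα]; exact max_lt (by norm_num) (harA_lt hlam1 hkap0 hε)
  refine ⟨α, hα0, hα1, 1 / (β * a) * (2 + 2 * (β * A)), by positivity, h₀, hh₀, hh₁, ?_⟩
  intro h hh hle n hn hn1 hn2 g hg l hl hgl i
  have hP := Pop_mk hG hγ hh (hle.trans (hh₁.trans (by norm_num)))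
  have hQ := hP.iter n
  have hLy : ∀ z, (Pop gU γ h)^[n] (fun z => Real.sqrt (lyV γ z)) z
      ≤ lam * Real.sqrt (lyV γ z) + kap := by
    intro z
    have e : (fun z : E × E => Real.sqrt (lyV γ z) ^ 2) = lyV γ := by
      ext z
      exact Real.sq_sqrt (by linarith [lyV_one_le hγ z])
    have t := hQ.cs (g := fun z => Real.sqrt (lyV γ z)) lyV_meas.sqrt (by rw [e]; exact lyV_cls hγ) z
    rw [e] at t
    have t2 := t.trans ((H h hh hle).2 n hn1 z)
    apply le_of_sq_le_sq _ (by positivity)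
    refine t2.trans ?_
    have e1 : lam ^ 2 = Real.exp (-c) := by rw [hlam]; exact Real.sq_sqrt (Real.exp_pos _).le
    have e2 : kap ^ 2 = K := by rw [hkap]; exact Real.sq_sqrt hK.le
    have e3 : Real.sqrt (lyV γ z) ^ 2 = lyV γ z := Real.sq_sqrt (by linarith [lyV_one_le hγ z])
    have : 0 ≤ lam * Real.sqrt (lyV γ z) * kap := by positivity
    rw [← e1, ← e2]
    nlinarith
  have hmin : ∀ z z', Real.sqrt (lyV γ z) + Real.sqrt (lyV γ z') ≤ 4 * kap / (1 - lam) → ∀ g, Cls g →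
      (∀ y, 0 ≤ g y) → (∀ y, g y ≤ 1) →
      (Pop gU γ h)^[n] g z - (Pop gU γ h)^[n] g z' ≤ 1 - 1 / M := by
    intro z z' hzz k hk k0 k1
    refine minor_of_harnack hQ hM2 (fun g hgm hg2 hg0 => ?_) hk k0 k1
    refine (hH h hh (hle.trans (hh₁.trans (by norm_num))) n hn hn1 hn2 g hgm hg2 hg0 z z').trans ?_
    have p2 := hQ.mono _ _ (Cls.const 0) hg2 (fun y => sq_nonneg (g y)) z'
    rw [hQ.const] at p2
    apply mul_le_mul_of_nonneg_right _ p2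
    rw [hM]
    refine le_trans (Real.exp_le_exp.2 ?_) (le_max_right _ _)
    have : ‖z - z'‖ ≤ ρ / a := by
      rw [le_div_iff₀ ha, hρ]
      have := norm_sub_le z z'
      nlinarith [(hw z).1, (hw z').1]
    gcongr
  have hgc : ∀ z z', g z - g z' ≤ l / (β * a) * (2 + harB kap (1 / M) *
      (Real.sqrt (lyV γ z) + Real.sqrt (lyV γ z'))) := by
    intro z z'
    have s1 : g z - g z' ≤ l * (‖z‖ + ‖z'‖) :=
      (le_abs_self _).trans ((hgl z z').trans
        (mul_le_mul_of_nonneg_left (norm_sub_le z z') hl.le))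
    have s2 : l * (‖z‖ + ‖z'‖) = l / (β * a) * (β * (a * ‖z‖ + a * ‖z'‖)) := by
      field_simp
    rw [s2] at s1
    refine s1.trans ?_
    apply mul_le_mul_of_nonneg_left _ (by positivity)
    rw [← hβ]
    have := mul_le_mul_of_nonneg_left (add_le_add (hw z).1 (hw z').1) hβ0.le
    linarith
  have fin : ∀ z z', ((Pop gU γ h)^[n])^[i] g z - ((Pop gU γ h)^[n])^[i] g z'
        ≤ 1 / (β * a) * (2 + 2 * (β * A)) * l * α ^ i * (1 + ‖z‖ + ‖z'‖) := by
    intro z z'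
    refine (harris_iter hQ (w_cls hγ) (fun z => Real.sqrt_nonneg _) hlam0 hlam1 hkap0 hε hLy hmin
      (hα ▸ le_max_right _ _) hα0 hg (c := l / (β * a)) (by positivity) hgc i z z').trans ?_
    rw [← hβ]
    have b : 2 + β * (Real.sqrt (lyV γ z) + Real.sqrt (lyV γ z'))
        ≤ (2 + 2 * (β * A)) * (1 + ‖z‖ + ‖z'‖) := by
      have := mul_le_mul_of_nonneg_left (add_le_add (hw z).2 (hw z').2) hβ0.le
      have q1 : 0 ≤ β * A * ‖z‖ := by positivity
      have q2 : 0 ≤ β * A * ‖z'‖ := by positivity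
      nlinarith [norm_nonneg z, norm_nonneg z']
    calc α ^ i * (l / (β * a) * (2 + β * (Real.sqrt (lyV γ z) + Real.sqrt (lyV γ z'))))
        ≤ α ^ i * (l / (β * a) * ((2 + 2 * (β * A)) * (1 + ‖z‖ + ‖z'‖))) := by gcongr
      _ = _ := by ring
  intro z z'
  rw [abs_le]
  constructor
  · have := fin z' z
    have e : 1 + ‖z'‖ + ‖z‖ = 1 + ‖z‖ + ‖z'‖ := by ring
    rw [e] at this
    linarith
  · exact fin z z'

lemma exp_sub_one_le {K r : ℝ} (hK : 0 < K) (hr0 : 0 ≤ r) (hr : r ≤ 1) :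
    Real.exp (K * r ^ 2) - 1 ≤ K * Real.exp K * r ^ 2 := by
  have h1 : Real.exp (K * r ^ 2) * (1 - K * r ^ 2) ≤ 1 := by
    have := Real.add_one_le_exp (-(K * r ^ 2))
    have h2 : Real.exp (K * r ^ 2) * Real.exp (-(K * r ^ 2)) = 1 := by
      rw [← Real.exp_add]; simp
    rw [← h2]
    gcongr
    linarith
  have h3 : Real.exp (K * r ^ 2) ≤ Real.exp K := by
    apply Real.exp_le_exp.2
    have : r ^ 2 ≤ 1 := pow_le_one₀ hr0 hr
    nlinarith
  have h4 : K * r ^ 2 * Real.exp (K * r ^ 2) ≤ K * r ^ 2 * Real.exp K := by gcongr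
  nlinarith

set_option maxHeartbeats 1000000 in
lemma smooth_mix (hG : Good gU L m B) (hγ : 0 < γ) (h1 : 4 * L ≤ γ) (h2 : 4 * L ≤ γ * m) :
    ∃ α > (0:ℝ), α < 1 ∧ ∃ C > (0:ℝ), ∃ h₀ > (0:ℝ), h₀ ≤ 1 / 2 ∧ ∀ h : ℝ, 0 < h → h ≤ h₀ →
      ∀ n : ℕ, 2 ≤ n → 1 ≤ n * h → n * h ≤ 2 → ∀ g : E × E → ℝ, Cls g → ∀ l > 0,
      (∀ z z', |g z - g z'| ≤ l * ‖z - z'‖) → ∀ (i : ℕ) z z',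
      |((Pop gU γ h)^[n])^[i] g z - ((Pop gU γ h)^[n])^[i] g z'|
        ≤ C * l * α ^ i * (1 + ‖z‖ + ‖z'‖) ∧
      |((Pop gU γ h)^[n])^[i] g z - ((Pop gU γ h)^[n])^[i] g z'|
        ≤ C * l * α ^ i * (1 + ‖z‖ + ‖z'‖) * ‖z - z'‖ := by
  obtain ⟨α, hα0, hα1, C, hC, h₁, hh₁, hh₁', H1⟩ := harris_mix hG hγ h1 h2
  obtain ⟨c, hc, K, hK, h₂, hh₂, hh₂', H2⟩ := Q_lyap hG hγ h1 h2
  obtain ⟨a, ha, A, hA, hw⟩ := w_bounds (E := E) hγ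
  obtain ⟨KH, hKH, hH⟩ := harnack hG hγ
  obtain ⟨J, hJ⟩ : ∃ J, J = Real.sqrt (KH * Real.exp KH * (2 * (1 + 1 / a ^ 2 * (A ^ 2 + K)))) :=
    ⟨_, rfl⟩
  have hJ2 : J ^ 2 = KH * Real.exp KH * (2 * (1 + 1 / a ^ 2 * (A ^ 2 + K))) := by
    rw [hJ]; exact Real.sq_sqrt (by positivity)
  have hJ0 : 0 ≤ J := by rw [hJ]; exact Real.sqrt_nonneg _
  refine ⟨α, hα0, hα1, C + 1 + C * J / α, by positivity, min h₁ h₂, by positivity,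
    (min_le_left _ _).trans hh₁', ?_⟩
  intro h hh hle n hn hn1 hn2 g hg l hl hgl i z z'
  have hle1 := hle.trans (min_le_left _ _)
  have hle2 := hle.trans (min_le_right _ _)
  have hhone : h ≤ 1 := hle1.trans (hh₁'.trans (by norm_num))
  have hP := Pop_mk hG hγ hh hhone
  have hQ := hP.iter n
  have M1 := H1 h hh hle1 n hn hn1 hn2 g hg l hl hgl
  have hpos : 0 ≤ C * J / α := by positivity
  have hs0 : 0 ≤ l * α ^ i * (1 + ‖z‖ + ‖z'‖) := by positivity
  refine ⟨(M1 i z z').trans ?_, ?_⟩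
  · nlinarith
  rcases le_or_gt 1 ‖z - z'‖ with hr | hr
  · refine (M1 i z z').trans ?_
    have : C * (l * α ^ i * (1 + ‖z‖ + ‖z'‖)) * 1
        ≤ (C + 1 + C * J / α) * (l * α ^ i * (1 + ‖z‖ + ‖z'‖)) * ‖z - z'‖ := by
      gcongr
      linarith
    linarith
  rcases Nat.eq_zero_or_pos i with hi | hi
  · subst hi
    simp only [Function.iterate_zero, id_eq, pow_zero, mul_one]
    refine (hgl z z').trans ?_
    apply mul_le_mul_of_nonneg_right _ (norm_nonneg _)
    have q1 : 0 ≤ (C + C * J / α) * l := by positivity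
    nlinarith [norm_nonneg z, norm_nonneg z', mul_nonneg hl.le (norm_nonneg z),
      mul_nonneg hl.le (norm_nonneg z'), mul_nonneg q1 (norm_nonneg z),
      mul_nonneg q1 (norm_nonneg z')]
  · obtain ⟨j, rfl⟩ : ∃ j, i = j + 1 := ⟨i - 1, by omega⟩
    rcases eq_or_ne z z' with rfl | hne
    · simp
    have hr0 : 0 < ‖z - z'‖ := norm_pos_iff.2 (sub_ne_zero.2 hne)
    set r := ‖z - z'‖ with hrdef
    rw [Function.iterate_succ_apply']
    set k0 := ((Pop gU γ h)^[n])^[j] g with hk0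
    have ck0 : Cls k0 := (hQ.iter j).cls g hg
    set k : E × E → ℝ := fun y => k0 y + (-(k0 z')) with hk
    have ck : Cls k := ck0.add (Cls.const _)
    have hkb : ∀ y, k y ^ 2 ≤ (C * l * α ^ j) ^ 2 * (2 * ((1 + ‖z'‖) ^ 2 + 1 / a ^ 2 * lyV γ y)) := by
      intro y
      have t := M1 j y z'
      have t2 : k y ^ 2 ≤ (C * l * α ^ j * (1 + ‖y‖ + ‖z'‖)) ^ 2 := by
        rw [← sq_abs]
        exact pow_le_pow_left₀ (abs_nonneg _) (by simpa [hk, sub_eq_add_neg] using t) 2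
      refine t2.trans ?_
      rw [mul_pow]
      apply mul_le_mul_of_nonneg_left _ (by positivity)
      have t3 : ‖y‖ ^ 2 ≤ 1 / a ^ 2 * lyV γ y := by
        have := (hw y).1
        have t4 : (a * ‖y‖) ^ 2 ≤ lyV γ y := by
          have := pow_le_pow_left₀ (by positivity) this 2
          rwa [Real.sq_sqrt (by linarith [lyV_one_le hγ y])] at this
        rw [one_div, inv_mul_eq_div, le_div_iff₀ (by positivity)]
        linarith
      nlinarith [sq_nonneg (1 + ‖z'‖ - ‖y‖)]
    obtain ⟨s, hs⟩ : ∃ s, s = (C * l * α ^ j) ^ 2 := ⟨_, rfl⟩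
    have hs00 : 0 ≤ s := by rw [hs]; positivity
    have cb : Cls (fun y : E × E => (s * (2 / a ^ 2)) * lyV γ y + s * 2 * (1 + ‖z'‖) ^ 2) :=
      ((lyV_cls hγ).smul _).add (Cls.const _)
    have hkb' : ∀ y, k y ^ 2 ≤ (s * (2 / a ^ 2)) * lyV γ y + s * 2 * (1 + ‖z'‖) ^ 2 := by
      intro y
      refine (hkb y).trans (le_of_eq ?_)
      rw [hs]; ring
    have ck2 : Cls (fun y => k y ^ 2) := Cls.of_le (ck.1.pow_const 2) cb fun y => by
      rw [abs_of_nonneg (sq_nonneg _)]; exact hkb' y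
    have hQk2 : (Pop gU γ h)^[n] (fun y => k y ^ 2) z'
        ≤ s * (2 * (1 + 1 / a ^ 2 * (A ^ 2 + K))) * (1 + ‖z'‖) ^ 2 := by
      refine (hQ.mono _ _ ck2 cb hkb' z').trans ?_
      rw [hQ.affine (lyV_cls hγ)]
      have u1 := (H2 h hh hle2).1 n z'
      have u2 : lyV γ z' ≤ A ^ 2 * (1 + ‖z'‖) ^ 2 := by
        have := pow_le_pow_left₀ (Real.sqrt_nonneg _) (hw z').2 2
        rwa [Real.sq_sqrt (by linarith [lyV_one_le hγ z']), mul_pow] at this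
      have u3 : K ≤ K * (1 + ‖z'‖) ^ 2 := by
        have : 1 ≤ (1 + ‖z'‖) ^ 2 := one_le_pow₀ (by linarith [norm_nonneg z'])
        exact le_mul_of_one_le_right hK.le this
      have u4 : (Pop gU γ h)^[n] (lyV γ) z' ≤ (A ^ 2 + K) * (1 + ‖z'‖) ^ 2 := by linarith
      have u5 := mul_le_mul_of_nonneg_left u4 (by positivity : 0 ≤ s * (2 / a ^ 2))
      refine (add_le_add_left u5 _).trans (le_of_eq ?_)
      ring
    have hq : 0 < Real.exp (KH * r ^ 2) - 1 := by
      have := Real.add_one_lt_exp (x := KH * r ^ 2) (by positivity)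
      have : 0 < KH * r ^ 2 := by positivity
      linarith
    have sm := smooth_of_harnack hQ hq (z := z) (z' := z') (fun g hgm hg2 hg0 => by
      have := hH h hh hhone n hn hn1 hn2 g hgm hg2 hg0 z z'
      rwa [add_sub_cancel]) ck.1 ck2
    have e1 : (Pop gU γ h)^[n] k z - (Pop gU γ h)^[n] k z'
        = (Pop gU γ h)^[n] k0 z - (Pop gU γ h)^[n] k0 z' := by
      rw [hQ.add ck0 (Cls.const _), hQ.add ck0 (Cls.const _), hQ.const, hQ.const]
      ring
    rw [e1] at sm
    have hrr := exp_sub_one_le hKH hr0.le hr.le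
    have fin : ((Pop gU γ h)^[n] k0 z - (Pop gU γ h)^[n] k0 z') ^ 2
        ≤ (C * l * α ^ j * J * (1 + ‖z'‖) * r) ^ 2 := by
      refine sm.trans ((mul_le_mul hrr hQk2 ?_ (by positivity)).trans (le_of_eq ?_))
      · have p2 := hQ.mono _ _ (Cls.const 0) ck2 (fun y => sq_nonneg (k y)) z'
        rwa [hQ.const] at p2
      · have : (C * l * α ^ j * J * (1 + ‖z'‖) * r) ^ 2
          = (C * l * α ^ j) ^ 2 * J ^ 2 * (1 + ‖z'‖) ^ 2 * r ^ 2 := by ring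
        rw [this, hJ2, hs]
        ring
    have fin2 := abs_le_of_sq_le_sq fin (by positivity)
    refine fin2.trans ?_
    have e2 : C * l * α ^ j * J * (1 + ‖z'‖) * r = (C * J / α) * l * α ^ (j + 1) * (1 + ‖z'‖) * r := by
      rw [pow_succ]; field_simp
    rw [e2]
    have hz0 := norm_nonneg z
    gcongr
    · linarith
    · linarith

end Mixing

end EM



namespace EM

section Poisson

variable {E : Type*} [NormedAddCommGroup E] [InnerProductSpace ℝ E] [FiniteDimensional ℝ E]
  [MeasurableSpace E] [BorelSpace E]

variable {gU : E → E} {L m B γ : ℝ}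

lemma iter_lin_sub {S : Type*} [NormedAddCommGroup S] [MeasurableSpace S]
    {P : (S → ℝ) → (S → ℝ)} (hP : MkOp P) {f : S → ℝ} (hf : Cls f) (h : ℝ) (n : ℕ) (z : S) :
    h * (∑ r ∈ Finset.range n, P^[r] f z) - P (fun y => h * ∑ r ∈ Finset.range n, P^[r] f y) z
      = h * (f z - P^[n] f z) := by
  have hc : ∀ r ∈ Finset.range n, Cls (P^[r] f) := fun r _ => (hP.iter r).cls f hf
  rw [hP.smul (Cls.sum _ hc), hP.sum _ hc, ← mul_sub, ← Finset.sum_sub_distrib]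
  congr 1
  simp_rw [← Function.iterate_succ_apply' P]
  have := Finset.sum_range_sub' (fun r => P^[r] f z) n
  simpa using this

lemma poisson_eq {S : Type*} [NormedAddCommGroup S] [MeasurableSpace S]
    {P : (S → ℝ) → (S → ℝ)} (hP : MkOp P) {f : S → ℝ} (hf : Cls f) (h : ℝ) (n : ℕ) (k : ℕ)
    {fb : S → ℝ} (hfb : fb = fun y => h * ∑ r ∈ Finset.range n, P^[r] f y) (z : S) :
    (∑ i ∈ Finset.range k, (P^[n])^[i] fb z) - P (fun y => ∑ i ∈ Finset.range k, (P^[n])^[i] fb y) z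
      = h * (f z - (P^[n])^[k] f z) := by
  have hQ := hP.iter n
  have cfb : Cls fb := by
    rw [hfb]
    exact (Cls.sum _ fun r _ => (hP.iter r).cls f hf).smul h
  have hc : ∀ r ∈ Finset.range k, Cls ((P^[n])^[r] fb) := fun r _ => (hQ.iter r).cls fb cfb
  rw [hP.sum _ hc, ← Finset.sum_sub_distrib]
  have e : ∀ i, (P^[n])^[i] fb z - P ((P^[n])^[i] fb) z
      = h * ((P^[n])^[i] f z - (P^[n])^[i + 1] f z) := by
    intro i
    have comm : P ((P^[n])^[i] fb) = (P^[n])^[i] (P fb) := by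
      rw [← Function.iterate_mul]
      rw [← Function.iterate_succ_apply' P, ← Function.iterate_succ_apply P]
    rw [comm, ← (hQ.iter i).sub cfb (hP.cls _ cfb)]
    have : (fun y => fb y - P fb y) = fun y => h * (f y - P^[n] f y) := by
      ext y
      have := iter_lin_sub hP hf h n y
      rw [← this, hfb]
    rw [this, (hQ.iter i).smul (hf.sub (hQ.cls f hf)), (hQ.iter i).sub hf (hQ.cls f hf),
      Function.iterate_succ_apply]
  rw [Finset.sum_congr rfl fun i _ => e i, ← Finset.mul_sum]
  congr 1
  have := Finset.sum_range_sub' (fun r => (P^[n])^[r] f z) k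
  simpa using this

lemma geom_le {α : ℝ} (h0 : 0 < α) (h1 : α < 1) (k : ℕ) :
    ∑ i ∈ Finset.range k, α ^ i ≤ 1 / (1 - α) := by
  rw [geom_sum_eq h1.ne, ← neg_div_neg_eq]
  have : 0 < α ^ k := by positivity
  have h3 : (0:ℝ) < 1 - α := by linarith
  rw [neg_sub, neg_sub]
  gcongr
  linarith

lemma poisson (hG : Good gU L m B) (hγ : 0 < γ) (h1 : 4 * L ≤ γ) (h2 : 4 * L ≤ γ * m)
    {f : E × E → ℝ} (hf : Cls f) {l : ℝ} (hl : 0 < l)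
    (hfl : ∀ z z', |f z - f z'| ≤ l * ‖z - z'‖) :
    ∃ C > (0:ℝ), ∃ h₀ > (0:ℝ), h₀ ≤ 1 / 2 ∧ ∀ h : ℝ, 0 < h → h ≤ h₀ →
      ∃ ψ e : E × E → ℝ, Cls ψ ∧ Cls e ∧
        (∀ z, ψ z - Pop gU γ h ψ z = h * (f z - e z)) ∧
        (∀ z z', |ψ z - ψ z'| ≤ C * (1 + ‖z‖ + ‖z'‖)) ∧
        (∀ z z', |ψ z - ψ z'| ≤ C * (1 + ‖z‖ + ‖z'‖) * ‖z - z'‖) ∧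
        (∀ z z', |e z - e z'| ≤ C * h * (1 + ‖z‖ + ‖z'‖)) := by
  obtain ⟨α, hα0, hα1, C, hC, h₀, hh₀, hh₁, H⟩ := smooth_mix hG hγ h1 h2
  have hL := hG.Lpos
  obtain ⟨κ, hκ⟩ : ∃ κ, κ = 1 + L + γ := ⟨_, rfl⟩
  have hκ0 : 0 < κ := by rw [hκ]; positivity
  obtain ⟨lb, hlb⟩ : ∃ lb, lb = 2 * Real.exp (2 * κ) * l := ⟨_, rfl⟩
  have hlb0 : 0 < lb := by rw [hlb]; positivity
  have h1α : 0 < 1 - α := by linarith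
  refine ⟨C * lb * (1 / (1 - α)) + C * l, by positivity, h₀, hh₀, hh₁, fun h hh hle => ?_⟩
  have hhone : h ≤ 1 := hle.trans (hh₁.trans (by norm_num))
  have hh2 : h ≤ 1 / 2 := hle.trans hh₁
  have hP := Pop_mk hG hγ hh hhone
  obtain ⟨n, hn⟩ : ∃ n, n = ⌈1 / h⌉₊ := ⟨_, rfl⟩
  have hinv : 2 ≤ 1 / h := by rw [le_div_iff₀ hh]; linarith
  have hn1 : 1 ≤ n * h := by
    have := Nat.le_ceil (1 / h)
    rw [← hn, div_le_iff₀ hh] at this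
    exact this
  have hn2 : 2 ≤ n := by
    have : (2:ℝ) ≤ n := by rw [hn]; exact hinv.trans (Nat.le_ceil _)
    exact_mod_cast this
  have hn3 : n * h ≤ 2 := by
    have := Nat.ceil_lt_add_one (a := 1 / h) (by positivity)
    rw [← hn] at this
    have h5 : (n:ℝ) * h < (1 / h + 1) * h := by gcongr
    have h6 : (1 / h + 1) * h = 1 + h := by field_simp
    linarith
  obtain ⟨k, hk⟩ := exists_pow_lt_of_lt_one hh hα1
  have hQ := hP.iter n
  set fb : E × E → ℝ := fun y => h * ∑ r ∈ Finset.range n, (Pop gU γ h)^[r] f y with hfb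
  have cfb : Cls fb := (Cls.sum _ fun r _ => (hP.iter r).cls f hf).smul h
  have lfb : ∀ z z', |fb z - fb z'| ≤ lb * ‖z - z'‖ := by
    intro z z'
    rw [hfb]
    dsimp only
    rw [← mul_sub, ← Finset.sum_sub_distrib, abs_mul, abs_of_pos hh]
    have s1 : |∑ r ∈ Finset.range n, ((Pop gU γ h)^[r] f z - (Pop gU γ h)^[r] f z')|
        ≤ ∑ r ∈ Finset.range n, Real.exp (2 * κ) * l * ‖z - z'‖ := by
      refine (Finset.abs_sum_le_sum_abs _ _).trans (Finset.sum_le_sum fun r hr => ?_)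
      refine (Pop_lip hG hγ hh hhone hf hl.le hfl r z z').trans ?_
      rw [← hκ]
      gcongr
      have q1 : 1 + κ * h ≤ Real.exp (κ * h) := by
        have := Real.add_one_le_exp (κ * h); linarith
      refine (pow_le_pow_left₀ (by positivity) q1 r).trans ?_
      rw [← Real.exp_nat_mul]
      apply Real.exp_le_exp.2
      have hrn : (r:ℝ) ≤ n := by exact_mod_cast (Finset.mem_range.1 hr).le
      have : (r:ℝ) * h ≤ 2 := le_trans (by gcongr) hn3
      nlinarith
    have s2 := mul_le_mul_of_nonneg_left s1 hh.le
    refine s2.trans ?_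
    rw [Finset.sum_const, Finset.card_range, nsmul_eq_mul]
    calc h * (n * (Real.exp (2 * κ) * l * ‖z - z'‖)) = (n * h) * (Real.exp (2 * κ) * l * ‖z - z'‖) := by
          ring
      _ ≤ 2 * (Real.exp (2 * κ) * l * ‖z - z'‖) := by gcongr
      _ = lb * ‖z - z'‖ := by rw [hlb]; ring
  have Mfb := H h hh hle n hn2 hn1 hn3 fb cfb lb hlb0 lfb
  have Mf := H h hh hle n hn2 hn1 hn3 f hf l hl hfl
  have hCl : 0 < C * l := by positivity
  have hg := geom_le hα0 hα1 k
  refine ⟨fun z => ∑ i ∈ Finset.range k, ((Pop gU γ h)^[n])^[i] fb z, ((Pop gU γ h)^[n])^[k] f,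
    Cls.sum _ fun i _ => (hQ.iter i).cls fb cfb, (hQ.iter k).cls f hf,
    fun z => poisson_eq hP hf h n k hfb z, fun z z' => ?_, fun z z' => ?_, fun z z' => ?_⟩
  · dsimp only
    rw [← Finset.sum_sub_distrib]
    calc |∑ i ∈ Finset.range k, (((Pop gU γ h)^[n])^[i] fb z - ((Pop gU γ h)^[n])^[i] fb z')|
        ≤ ∑ i ∈ Finset.range k, α ^ i * (C * lb * (1 + ‖z‖ + ‖z'‖)) := by
          refine (Finset.abs_sum_le_sum_abs _ _).trans (Finset.sum_le_sum fun i hi => ?_)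
          exact (Mfb i z z').1.trans (le_of_eq (by ring))
      _ = (∑ i ∈ Finset.range k, α ^ i) * (C * lb * (1 + ‖z‖ + ‖z'‖)) := by rw [Finset.sum_mul]
      _ ≤ 1 / (1 - α) * (C * lb * (1 + ‖z‖ + ‖z'‖)) := by gcongr
      _ = (C * lb * (1 / (1 - α))) * (1 + ‖z‖ + ‖z'‖) := by ring
      _ ≤ _ := by gcongr; linarith
  · dsimp only
    rw [← Finset.sum_sub_distrib]
    calc |∑ i ∈ Finset.range k, (((Pop gU γ h)^[n])^[i] fb z - ((Pop gU γ h)^[n])^[i] fb z')|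
        ≤ ∑ i ∈ Finset.range k, α ^ i * (C * lb * (1 + ‖z‖ + ‖z'‖) * ‖z - z'‖) := by
          refine (Finset.abs_sum_le_sum_abs _ _).trans (Finset.sum_le_sum fun i hi => ?_)
          exact (Mfb i z z').2.trans (le_of_eq (by ring))
      _ = (∑ i ∈ Finset.range k, α ^ i) * (C * lb * (1 + ‖z‖ + ‖z'‖) * ‖z - z'‖) := by
          rw [Finset.sum_mul]
      _ ≤ 1 / (1 - α) * (C * lb * (1 + ‖z‖ + ‖z'‖) * ‖z - z'‖) := by gcongr
      _ = (C * lb * (1 / (1 - α))) * (1 + ‖z‖ + ‖z'‖) * ‖z - z'‖ := by ring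
      _ ≤ _ := by gcongr; linarith
  · refine (Mf k z z').1.trans ?_
    have q : C * l * α ^ k ≤ (C * lb * (1 / (1 - α)) + C * l) * h := by
      have q1 : C * l * α ^ k ≤ C * l * h := by gcongr
      have q2 : 0 ≤ (C * lb * (1 / (1 - α))) * h := by positivity
      linarith
    gcongr

end Poisson

end EM




namespace EM

section Bias

variable {E : Type*} [NormedAddCommGroup E] [InnerProductSpace ℝ E] [FiniteDimensional ℝ E]
  [MeasurableSpace E] [BorelSpace E]

/-- what is needed of the potential itself. -/
structure GoodU (U : E → ℝ) (gU : E → E) (L m B : ℝ) : Prop where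
  cont : Continuous U
  tay : ∀ x y, |U y - U x - inner ℝ (gU y) (y - x)| ≤ L * ‖y - x‖ ^ 2
  low : ∀ x, U 0 + m / 2 * ‖x‖ ^ 2 - B * ‖x‖ ≤ U x

/-- unnormalised Boltzmann density. -/
noncomputable def rho (U : E → ℝ) (z : E × E) : ℝ := Real.exp (-(‖z.2‖ ^ 2 / 2 + U z.1))

/-- Boltzmann measure, normalised in the velocity only. -/
noncomputable def bol (U : E → ℝ) : Measure (E × E) :=
  ((volume : Measure E).withDensity (fun x => ENNReal.ofReal (Real.exp (-U x)))).prod (stdGaussian E)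

variable {U : E → ℝ} {gU : E → E} {L m B γ h : ℝ}

lemma rho_pos (z : E × E) : 0 < rho U z := Real.exp_pos _

lemma rho_cont (hU : GoodU U gU L m B) : Continuous (rho U) := by
  have := hU.cont
  unfold rho
  fun_prop

lemma bol_eq (hU : GoodU U gU L m B) :
    bol U = (volume : Measure (E × E)).withDensity (fun z => ENNReal.ofReal (gc E * rho U z)) := by
  have := hU.cont.measurable
  rw [bol, stdGaussian_eq, prod_withDensity (by fun_prop) (by fun_prop), ← Measure.volume_eq_prod]
  congr 1
  funext z
  rw [← ENNReal.ofReal_mul (Real.exp_nonneg _)]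
  congr 1
  unfold rho
  rw [neg_add, Real.exp_add]
  ring

lemma integral_bol (hU : GoodU U gU L m B) (g : E × E → ℝ) :
    ∫ z, g z ∂(bol U) = gc E * ∫ z, g z * rho U z := by
  have := (rho_cont hU).measurable
  rw [bol_eq hU, integral_withDensity_eq_integral_toReal_smul (by fun_prop) (by simp),
    ← integral_const_mul]
  congr 1
  funext x
  rw [ENNReal.toReal_ofReal (mul_nonneg (gc_pos E).le (rho_pos _).le), smul_eq_mul]
  ring

lemma integrable_bol_iff (hU : GoodU U gU L m B) (g : E × E → ℝ) :
    Integrable g (bol U) ↔ Integrable (fun z => g z * rho U z) := by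
  have := (rho_cont hU).measurable
  rw [bol_eq hU, integrable_withDensity_iff_integrable_smul' (by fun_prop) (by simp)]
  have : (fun x : E × E => (ENNReal.ofReal (gc E * rho U x)).toReal • g x)
      = fun x => gc E * (g x * rho U x) := by
    funext x
    rw [ENNReal.toReal_ofReal (mul_nonneg (gc_pos E).le (rho_pos _).le), smul_eq_mul]
    ring
  rw [this]
  exact integrable_const_mul_iff (isUnit_iff_ne_zero.2 (gc_pos E).ne') _

lemma integrable_gauss' {b : ℝ} (hb : 0 < b) : Integrable (fun x : E => Real.exp (-(b * ‖x‖ ^ 2))) := by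
  have hs : Real.sqrt (2 * b) ≠ 0 := by positivity
  have := (integrable_gauss E).comp_smul hs
  refine this.congr (Filter.Eventually.of_forall fun x => ?_)
  dsimp only
  rw [norm_smul, mul_pow, Real.norm_eq_abs, sq_abs, Real.sq_sqrt (by positivity)]
  congr 2
  ring

lemma poly_le_exp {δ t : ℝ} (hδ : 0 < δ) (ht : 0 ≤ t) :
    (1 + t) ^ 4 ≤ 8 / δ ^ 2 * Real.exp (δ * (1 + t ^ 2)) := by
  have h1 : (1 + t) ^ 2 ≤ 2 * (1 + t ^ 2) := by nlinarith [sq_nonneg (1 - t)]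
  have h2 := Real.quadratic_le_exp_of_nonneg (x := δ * (1 + t ^ 2)) (by positivity)
  have h3 : 0 ≤ δ * (1 + t ^ 2) := by positivity
  calc (1 + t) ^ 4 = ((1 + t) ^ 2) ^ 2 := by ring
    _ ≤ (2 * (1 + t ^ 2)) ^ 2 := by gcongr
    _ = 8 / δ ^ 2 * ((δ * (1 + t ^ 2)) ^ 2 / 2) := by field_simp; ring
    _ ≤ _ := by gcongr; linarith

lemma dom (hU : GoodU U gU L m B) (hm : 0 < m) :
    ∃ δ > (0 : ℝ), Integrable (fun z : E × E =>
      (1 + ‖z‖) ^ 4 * Real.exp (δ * (1 + ‖z‖ ^ 2)) * rho U z) := by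
  obtain ⟨δ, hδ, h1, h2⟩ : ∃ δ > (0 : ℝ), 2 * δ ≤ 1 / 4 ∧ 2 * δ ≤ m / 8 :=
    ⟨min (1 / 8) (m / 16), by positivity, by linarith [min_le_left (1 / 8) (m / 16)],
      by linarith [min_le_right (1 / 8) (m / 16)]⟩
  refine ⟨δ, hδ, ?_⟩
  have q := ((integrable_gauss' (E := E) (b := m / 8) (by positivity)).mul_prod
    (integrable_gauss' (E := E) (b := 1 / 4) (by positivity))).const_mul
      (8 / δ ^ 2 * Real.exp (2 * δ - U 0 + B ^ 2 / m))
  rw [← Measure.volume_eq_prod] at q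
  have := rho_cont hU
  refine q.mono' (Continuous.aestronglyMeasurable (by fun_prop)) (Filter.Eventually.of_forall fun z => ?_)
  have hr := rho_pos (U := U) z
  rw [Real.norm_eq_abs, abs_of_nonneg (by positivity)]
  calc (1 + ‖z‖) ^ 4 * Real.exp (δ * (1 + ‖z‖ ^ 2)) * rho U z
      ≤ (8 / δ ^ 2 * Real.exp (δ * (1 + ‖z‖ ^ 2))) * Real.exp (δ * (1 + ‖z‖ ^ 2)) * rho U z := by
        gcongr
        exact poly_le_exp hδ (norm_nonneg z)
    _ = 8 / δ ^ 2 * Real.exp (δ * (1 + ‖z‖ ^ 2) + δ * (1 + ‖z‖ ^ 2) + -(‖z.2‖ ^ 2 / 2 + U z.1)) := by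
        rw [rho, Real.exp_add, Real.exp_add]; ring
    _ ≤ 8 / δ ^ 2 * Real.exp ((2 * δ - U 0 + B ^ 2 / m) + -(m / 8 * ‖z.1‖ ^ 2) + -(1 / 4 * ‖z.2‖ ^ 2)) := by
        gcongr ?_ * Real.exp ?_
        have l := hU.low z.1
        have a : ‖z‖ ^ 2 ≤ ‖z.1‖ ^ 2 + ‖z.2‖ ^ 2 := by
          rw [Prod.norm_def]
          rcases max_choice ‖z.1‖ ‖z.2‖ with h | h <;> rw [h] <;> nlinarith [sq_nonneg ‖z.1‖, sq_nonneg ‖z.2‖]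
        have b : B * ‖z.1‖ ≤ m / 4 * ‖z.1‖ ^ 2 + B ^ 2 / m := by
          have : m / 4 * ‖z.1‖ ^ 2 + B ^ 2 / m - B * ‖z.1‖ = (m * ‖z.1‖ / 2 - B) ^ 2 / m := by
            field_simp; ring
          have : 0 ≤ (m * ‖z.1‖ / 2 - B) ^ 2 / m := by positivity
          linarith
        have c : 2 * δ * ‖z‖ ^ 2 ≤ m / 8 * ‖z.1‖ ^ 2 + 1 / 4 * ‖z.2‖ ^ 2 := by
          have c1 : 2 * δ * ‖z.1‖ ^ 2 ≤ m / 8 * ‖z.1‖ ^ 2 := by gcongr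
          have c2 : 2 * δ * ‖z.2‖ ^ 2 ≤ 1 / 4 * ‖z.2‖ ^ 2 := by gcongr
          have c3 : 2 * δ * ‖z‖ ^ 2 ≤ 2 * δ * (‖z.1‖ ^ 2 + ‖z.2‖ ^ 2) := by gcongr
          linarith
        linarith
    _ = _ := by rw [Real.exp_add, Real.exp_add]; ring

/-- the symplectic Euler map. -/
def sym (gU : E → E) (h : ℝ) (z : E × E) : E × E := (z.1 + h • z.2, z.2 - h • gU (z.1 + h • z.2))

lemma sym_mp (hg : Continuous gU) : MeasurePreserving (sym gU h) (volume : Measure (E × E)) volume := by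
  have hgm := hg.measurable
  rw [Measure.volume_eq_prod]
  have a : MeasurePreserving (fun p : E × E => (p.1, p.2 - h • gU p.1))
      ((volume : Measure E).prod volume) (volume.prod volume) := by
    refine (MeasurePreserving.id _).skew_product (g := fun x v => v - h • gU x) ?_ ?_
    · exact measurable_snd.sub ((hgm.comp measurable_fst).const_smul h)
    · exact Filter.Eventually.of_forall fun x => (measurePreserving_sub_right volume (h • gU x)).map_eq
  have b : MeasurePreserving (fun p : E × E => (p.1, p.2 + h • p.1))
      ((volume : Measure E).prod volume) (volume.prod volume) := by
    refine (MeasurePreserving.id _).skew_product (g := fun x v => v + h • x) ?_ ?_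
    · exact measurable_snd.add (measurable_fst.const_smul h)
    · exact Filter.Eventually.of_forall fun x => (measurePreserving_add_right volume (h • x)).map_eq
  exact a.comp (Measure.measurePreserving_swap.comp (b.comp Measure.measurePreserving_swap))

lemma phi_mp (hU : GoodU U gU L m B) (c s : ℝ) (hcs : c ^ 2 + s ^ 2 = 1) :
    MeasurePreserving (fun p : (E × E) × E => (p.1.1, c • p.1.2 + s • p.2))
      ((bol U).prod (stdGaussian E)) (bol U) := by
  have a : MeasurePreserving (fun p : E × E => c • p.1 + s • p.2)
      ((stdGaussian E).prod (stdGaussian E)) (stdGaussian E) := ⟨by fun_prop, gauss_conv c s hcs⟩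
  unfold bol
  exact ((MeasurePreserving.id _).prod a).comp (measurePreserving_prodAssoc _ _ _)

end Bias

end EM




namespace EM

section Bias2

variable {E : Type*} [NormedAddCommGroup E] [InnerProductSpace ℝ E] [FiniteDimensional ℝ E]
  [MeasurableSpace E] [BorelSpace E]

variable {U : E → ℝ} {gU : E → E} {L m B γ h : ℝ}

lemma sym_grad (hG : Good gU L m B) (hh : 0 < h) (hh1 : h ≤ 1) (z : E × E) :
    ‖gU (z.1 + h • z.2)‖ ≤ 2 * L * (1 + ‖z‖) := by
  have h1 := norm_fst_le z
  have h2 := norm_snd_le z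
  have hL := hG.Lpos
  have a : ‖z.1 + h • z.2‖ ≤ ‖z‖ + 1 * ‖z‖ := by
    refine (norm_add_le _ _).trans ?_
    rw [norm_smul, Real.norm_eq_abs, abs_of_pos hh]
    gcongr
  calc ‖gU (z.1 + h • z.2)‖ ≤ L * (‖z.1 + h • z.2‖ + 1) := hG.gr _
    _ ≤ L * (2 * (1 + ‖z‖)) := by gcongr; linarith
    _ = _ := by ring

lemma energy (hG : Good gU L m B) (hU : GoodU U gU L m B) (hh : 0 < h) (hh1 : h ≤ 1) (z : E × E) :
    |rho U (sym gU h z) - rho U z| ≤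
      (h ^ 2 * ((4 * L ^ 2 + L) * (1 + ‖z‖ ^ 2))) *
        Real.exp (h ^ 2 * ((4 * L ^ 2 + L) * (1 + ‖z‖ ^ 2))) * rho U z := by
  have hL := hG.Lpos
  have h2 := norm_snd_le z
  have g1 := sym_grad hG hh hh1 z
  set x1 := z.1 + h • z.2 with hx1
  set g := gU x1 with hg
  set t := (‖z.2 - h • g‖ ^ 2 / 2 + U x1) - (‖z.2‖ ^ 2 / 2 + U z.1) with ht
  set K := h ^ 2 * ((4 * L ^ 2 + L) * (1 + ‖z‖ ^ 2)) with hK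
  have tay := hU.tay z.1 x1
  have e1 : x1 - z.1 = h • z.2 := by rw [hx1]; abel
  rw [e1, inner_smul_right, norm_smul, Real.norm_eq_abs, abs_of_pos hh, mul_pow] at tay
  have e2 : ‖z.2 - h • g‖ ^ 2 = ‖z.2‖ ^ 2 - 2 * (h * inner ℝ g z.2) + h ^ 2 * ‖g‖ ^ 2 := by
    rw [norm_sub_sq_real, inner_smul_right, norm_smul, Real.norm_eq_abs, abs_of_pos hh, mul_pow,
      real_inner_comm]
  have tK : |t| ≤ K := by
    have e3 : t = (U x1 - U z.1 - h * inner ℝ g z.2) + h ^ 2 * ‖g‖ ^ 2 / 2 := by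
      rw [ht, e2]; ring
    have a1 : ‖g‖ ^ 2 ≤ (2 * L * (1 + ‖z‖)) ^ 2 := by gcongr
    have a2 : (2 * L * (1 + ‖z‖)) ^ 2 ≤ 8 * L ^ 2 * (1 + ‖z‖ ^ 2) := by
      have : (1 + ‖z‖) ^ 2 ≤ 2 * (1 + ‖z‖ ^ 2) := by nlinarith [sq_nonneg (1 - ‖z‖)]
      calc (2 * L * (1 + ‖z‖)) ^ 2 = 4 * L ^ 2 * (1 + ‖z‖) ^ 2 := by ring
        _ ≤ 4 * L ^ 2 * (2 * (1 + ‖z‖ ^ 2)) := by gcongr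
        _ = _ := by ring
    have a3 : ‖z.2‖ ^ 2 ≤ 1 + ‖z‖ ^ 2 := by
      have : ‖z.2‖ ^ 2 ≤ ‖z‖ ^ 2 := by gcongr
      linarith
    rw [e3]
    refine (abs_add_le _ _).trans ?_
    rw [abs_of_nonneg (by positivity : 0 ≤ h ^ 2 * ‖g‖ ^ 2 / 2)]
    calc _ ≤ L * (h ^ 2 * (1 + ‖z‖ ^ 2)) + h ^ 2 * (8 * L ^ 2 * (1 + ‖z‖ ^ 2)) / 2 := by
          refine add_le_add (tay.trans ?_) ?_
          · gcongr
          · gcongr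
            exact a1.trans a2
      _ = K := by rw [hK]; ring
  have hr := rho_pos (U := U) z
  have e4 : rho U (sym gU h z) = Real.exp (-t) * rho U z := by
    unfold rho sym
    rw [← Real.exp_add]
    congr 1
    simp only [ht]
    ring
  have e5 : rho U (sym gU h z) - rho U z = (Real.exp (-t) - 1) * rho U z := by rw [e4]; ring
  rw [e5, abs_mul, abs_of_pos hr]
  gcongr
  have hK0 : 0 ≤ K := (abs_nonneg _).trans tK
  have b1 := Real.add_one_le_exp (-t)
  have b2 := Real.one_sub_le_exp_neg (-t)
  have b3 : Real.exp (-t) * Real.exp (- -t) = 1 := by rw [← Real.exp_add]; simp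
  have b4 := Real.exp_pos (-t)
  have b5 : Real.exp (-t) ≤ Real.exp K := by gcongr; linarith [neg_abs_le t]
  have b6 : 1 ≤ Real.exp K := Real.one_le_exp hK0
  have b7 := neg_abs_le t
  have b8 := le_abs_self t
  rw [abs_le]
  constructor
  · nlinarith
  · have : Real.exp (-t) - 1 ≤ |t| * Real.exp (-t) := by
      nlinarith [mul_le_mul_of_nonneg_left b2 b4.le, mul_le_mul_of_nonneg_left b7 b4.le]
    refine this.trans ?_
    gcongr

/-- local comparison constants -/
lemma c_bounds {u : ℝ} (hu0 : 0 ≤ u) (hu : 2 * u ≤ 1) :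
    Real.sqrt (1 - 2 * u) ≤ 1 ∧ 1 - Real.sqrt (1 - 2 * u) ≤ 2 * u ∧
      |1 - u - Real.sqrt (1 - 2 * u)| ≤ 2 * u ^ 2 := by
  have h0 := Real.sqrt_nonneg (1 - 2 * u)
  have h1 := Real.sq_sqrt (by linarith : 0 ≤ 1 - 2 * u)
  set c := Real.sqrt (1 - 2 * u)
  have hc : c ≤ 1 := by nlinarith
  refine ⟨hc, by nlinarith, ?_⟩
  have e : (1 - u - c) * (1 - u + c) = u ^ 2 := by nlinarith
  have p : 0 ≤ 1 - u - c := by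
    by_contra q
    push Not at q
    have : 0 < 1 - u + c := by
      nlinarith
    nlinarith [mul_pos (neg_pos.2 q) this, sq_nonneg u]
  rw [abs_of_nonneg p]
  nlinarith

lemma comp_norm (hG : Good gU L m B) (hγ : 0 < γ) (hh : 0 < h) (hh1 : h ≤ 1) (hγh : 2 * (γ * h) ≤ 1)
    (z : E × E) (ξ : E) :
    ‖stp gU γ h z ξ - sym gU h (z.1, Real.sqrt (1 - 2 * (γ * h)) • z.2 + Real.sqrt (2 * γ * h) • ξ)‖ ≤
      (2 * γ + 2 * γ ^ 2 + (L + 1) * (1 + Real.sqrt (2 * γ))) * (h * Real.sqrt h) *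
        ((1 + ‖z‖) * (1 + ‖ξ‖)) := by
  obtain ⟨c1, c2, c3⟩ := c_bounds (u := γ * h) (by positivity) hγh
  have c0 := Real.sqrt_nonneg (1 - 2 * (γ * h))
  set c := Real.sqrt (1 - 2 * (γ * h))
  have s1 : Real.sqrt (2 * γ * h) = Real.sqrt (2 * γ) * Real.sqrt h := Real.sqrt_mul (by positivity) _
  have s0 := Real.sqrt_nonneg (2 * γ)
  rw [s1]
  set q := Real.sqrt (2 * γ)
  have r0 := Real.sqrt_pos.2 hh
  have r2 := Real.sq_sqrt hh.le
  set r := Real.sqrt h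
  have r1 : r ≤ 1 := by nlinarith
  have hr : h ≤ r := by nlinarith
  have hL := hG.Lpos
  have h2 := norm_snd_le z
  have hz := norm_nonneg z
  have hx := norm_nonneg ξ
  set w := c • z.2 + (q * r) • ξ with hw
  set Y := (1 + ‖z‖) * (1 + ‖ξ‖) with hY
  have Y1 : ‖z.2‖ ≤ Y := by nlinarith [mul_nonneg hz hx]
  have Y2 : ‖ξ‖ ≤ Y := by nlinarith [mul_nonneg hz hx]
  have Y0 : 0 ≤ Y := by positivity
  have wn : ‖w‖ ≤ (1 + q) * Y := by
    calc ‖w‖ ≤ c * ‖z.2‖ + (q * r) * ‖ξ‖ := by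
          refine (norm_add_le _ _).trans ?_
          rw [norm_smul, norm_smul, Real.norm_eq_abs, Real.norm_eq_abs, abs_of_nonneg c0,
            abs_of_nonneg (by positivity : 0 ≤ q * r)]
      _ ≤ 1 * Y + (q * 1) * Y := by gcongr
      _ = _ := by ring
  have vw : ‖z.2 - w‖ ≤ (2 * γ + q) * r * Y := by
    have e : z.2 - w = (1 - c) • z.2 - (q * r) • ξ := by rw [hw, sub_smul, one_smul]; abel
    rw [e]
    calc _ ≤ (1 - c) * ‖z.2‖ + (q * r) * ‖ξ‖ := by
          refine (norm_sub_le _ _).trans ?_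
          rw [norm_smul, norm_smul, Real.norm_eq_abs, Real.norm_eq_abs, abs_of_nonneg (by linarith : 0 ≤ 1 - c),
            abs_of_nonneg (by positivity : 0 ≤ q * r)]
      _ ≤ (2 * (γ * r)) * Y + (q * r) * Y := by
          gcongr
          exact c2.trans (by gcongr)
      _ = _ := by ring
  have e : stp gU γ h z ξ - sym gU h (z.1, w) =
      (h • (z.2 - w), (1 - γ * h - c) • z.2 + h • (gU (z.1 + h • w) - gU z.1)) := by
    ext1
    · simp [stp, sym, smul_sub]
    · simp only [stp, sym, Prod.snd_sub, s1, hw, sub_smul, smul_sub, one_smul]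
      abel
  rw [e, Prod.norm_def]
  refine max_le ?_ ?_
  · dsimp only
    rw [norm_smul, Real.norm_eq_abs, abs_of_pos hh]
    calc h * ‖z.2 - w‖ ≤ h * ((2 * γ + q) * r * Y) := by gcongr
      _ = (2 * γ + q) * (h * r) * Y := by ring
      _ ≤ _ := by
        gcongr ?_ * (h * r) * Y
        nlinarith [mul_nonneg hL.le s0, sq_nonneg γ]
  · dsimp only
    calc _ ≤ |1 - γ * h - c| * ‖z.2‖ + h * (L * (h * ‖w‖)) := by
          refine (norm_add_le _ _).trans ?_
          rw [norm_smul, norm_smul, Real.norm_eq_abs, Real.norm_eq_abs, abs_of_pos hh]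
          gcongr
          have := hG.lip (z.1 + h • w) z.1
          rwa [add_sub_cancel_left, norm_smul, Real.norm_eq_abs, abs_of_pos hh] at this
      _ ≤ (2 * (γ * h) ^ 2) * Y + h * (L * (r * ((1 + q) * Y))) := by gcongr
      _ = (2 * γ ^ 2) * (h * h) * Y + L * (1 + q) * (h * r) * Y := by ring
      _ ≤ (2 * γ ^ 2) * (h * r) * Y + L * (1 + q) * (h * r) * Y := by gcongr
      _ = (2 * γ ^ 2 + L * (1 + q)) * (h * r) * Y := by ring
      _ ≤ _ := by
        gcongr ?_ * (h * r) * Y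
        nlinarith [mul_nonneg hL.le s0, sq_nonneg γ]

end Bias2

end EM




namespace EM

section Bias3

variable {E : Type*} [NormedAddCommGroup E] [InnerProductSpace ℝ E] [FiniteDimensional ℝ E]
  [MeasurableSpace E] [BorelSpace E]

variable {U : E → ℝ} {gU : E → E} {L m B γ h : ℝ}

lemma int_rho_sq (hU : GoodU U gU L m B) (hm : 0 < m) :
    Integrable (fun z : E × E => (1 + ‖z‖) ^ 2 * rho U z) := by
  obtain ⟨δ, hδ, hi⟩ := dom hU hm
  have := rho_cont hU
  refine hi.mono' (Continuous.aestronglyMeasurable (by fun_prop)) (Filter.Eventually.of_forall fun z => ?_)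
  have hr := rho_pos (U := U) z
  rw [Real.norm_eq_abs, abs_of_nonneg (by positivity)]
  gcongr
  calc (1 + ‖z‖) ^ 2 ≤ (1 + ‖z‖) ^ 4 :=
        pow_le_pow_right₀ (by linarith [norm_nonneg z]) (by norm_num)
    _ = (1 + ‖z‖) ^ 4 * 1 := by ring
    _ ≤ _ := by gcongr; exact Real.one_le_exp (by positivity)

lemma int_bol_sq (hU : GoodU U gU L m B) (hm : 0 < m) :
    Integrable (fun z : E × E => (1 + ‖z‖) ^ 2) (bol U) :=
  (integrable_bol_iff hU _).2 (int_rho_sq hU hm)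

lemma Cls.int_bol {g : E × E → ℝ} (hg : Cls g) (hU : GoodU U gU L m B) (hm : 0 < m) :
    Integrable g (bol U) := by
  obtain ⟨A, hA0, hA⟩ := hg.bd
  refine ((int_bol_sq hU hm).const_mul A).mono' hg.1.aestronglyMeasurable
    (Filter.Eventually.of_forall fun z => ?_)
  rw [Real.norm_eq_abs]
  refine (hA z).trans ?_
  gcongr
  nlinarith [norm_nonneg z]

lemma int_std_sq : Integrable (fun ξ : E => (1 + ‖ξ‖) ^ 2) (stdGaussian E) := by
  have a := ((integrable_const (1 : ℝ)).add ((integrable_pow_norm_std (E := E) 1).const_mul 2)).add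
    (integrable_pow_norm_std (E := E) 2)
  refine a.congr (Filter.Eventually.of_forall fun x => ?_)
  simp only [Pi.add_apply]
  ring

lemma sym_norm (hG : Good gU L m B) (hh : 0 < h) (hh1 : h ≤ 1) (z : E × E) :
    1 + ‖sym gU h z‖ ≤ (2 + 2 * L) * (1 + ‖z‖) := by
  have h1 := norm_fst_le z
  have h2 := norm_snd_le z
  have hL := hG.Lpos
  have hz := norm_nonneg z
  have g := sym_grad hG hh hh1 z
  have : ‖sym gU h z‖ ≤ (1 + 2 * ‖z‖) + 2 * L * (1 + ‖z‖) := by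
    unfold sym
    rw [Prod.norm_def]
    refine max_le ?_ ?_
    · dsimp only
      calc ‖z.1 + h • z.2‖ ≤ ‖z‖ + 1 * ‖z‖ := by
            refine (norm_add_le _ _).trans ?_
            rw [norm_smul, Real.norm_eq_abs, abs_of_pos hh]
            gcongr
        _ ≤ _ := by nlinarith [mul_nonneg hL.le hz]
    · dsimp only
      calc _ ≤ ‖z‖ + 1 * (2 * L * (1 + ‖z‖)) := by
            refine (norm_sub_le _ _).trans ?_
            rw [norm_smul, Real.norm_eq_abs, abs_of_pos hh]
            gcongr
        _ ≤ _ := by linarith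
  linarith

lemma sym_bias (hG : Good gU L m B) (hU : GoodU U gU L m B) :
    ∃ K > (0 : ℝ), ∃ h₀ > (0 : ℝ), h₀ ≤ 1 / 2 ∧ ∀ h : ℝ, 0 < h → h ≤ h₀ → ∀ ψ : E × E → ℝ, Cls ψ →
      ∀ C : ℝ, 0 ≤ C → (∀ z, |ψ z| ≤ C * (1 + ‖z‖) ^ 2) →
      |∫ z, ψ (sym gU h z) ∂(bol U) - ∫ z, ψ z ∂(bol U)| ≤ C * K * h ^ 2 := by
  obtain ⟨δ, hδ, hi⟩ := dom hU hG.mpos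
  have hL := hG.Lpos
  have hgc := gc_pos E
  set D := ∫ z : E × E, (1 + ‖z‖) ^ 4 * Real.exp (δ * (1 + ‖z‖ ^ 2)) * rho U z with hD
  have D0 : 0 ≤ D := integral_nonneg fun z => by
    have hr := rho_pos (U := U) z
    simp only [Pi.zero_apply]; positivity
  have l1 : 0 < 4 * L ^ 2 + L := by positivity
  refine ⟨gc E * ((2 + 2 * L) ^ 2 * (4 * L ^ 2 + L) * D) + 1, by positivity,
    min (1 / 2) (δ / (4 * L ^ 2 + L)), by positivity, min_le_left _ _, ?_⟩
  intro h hh hh0 ψ hψ C hC hb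
  have hh1 : h ≤ 1 := (hh0.trans (min_le_left _ _)).trans (by norm_num)
  have hhδ : h ^ 2 * (4 * L ^ 2 + L) ≤ δ := by
    have : h * (4 * L ^ 2 + L) ≤ δ := (le_div_iff₀ l1).1 (hh0.trans (min_le_right _ _))
    calc h ^ 2 * (4 * L ^ 2 + L) = h * (h * (4 * L ^ 2 + L)) := by ring
      _ ≤ 1 * (h * (4 * L ^ 2 + L)) := by gcongr
      _ ≤ δ := by linarith
  have mp := sym_mp (h := h) hG.cont
  have hψr : Integrable (fun z => ψ z * rho U z) := (integrable_bol_iff hU _).1 (hψ.int_bol hU hG.mpos)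
  have i1 : Integrable (fun z => ψ (sym gU h z) * rho U (sym gU h z)) :=
    mp.integrable_comp_of_integrable hψr
  have e1 : ∫ z, ψ z * rho U z = ∫ z, ψ (sym gU h z) * rho U (sym gU h z) := by
    have := integral_map mp.measurable.aemeasurable (f := fun z => ψ z * rho U z)
      (by rw [mp.map_eq]; exact hψr.aestronglyMeasurable)
    rw [mp.map_eq] at this
    exact this
  have pb : ∀ z, |ψ (sym gU h z)| ≤ C * ((2 + 2 * L) * (1 + ‖z‖)) ^ 2 := fun z => by
    refine (hb _).trans ?_
    have := sym_norm hG hh hh1 z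
    gcongr
  have i2 : Integrable (fun z => ψ (sym gU h z) * rho U z) := by
    refine (integrable_bol_iff hU _).1 ?_
    refine ((int_bol_sq hU hG.mpos).const_mul (C * (2 + 2 * L) ^ 2)).mono'
      (hψ.1.comp mp.measurable).aestronglyMeasurable (Filter.Eventually.of_forall fun z => ?_)
    rw [Real.norm_eq_abs]
    exact (pb z).trans (le_of_eq (by ring))
  rw [integral_bol hU, integral_bol hU, e1, ← mul_sub, ← integral_sub i2 i1, abs_mul, abs_of_pos hgc]
  have key : |∫ z, (ψ (sym gU h z) * rho U z - ψ (sym gU h z) * rho U (sym gU h z))| ≤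
      (C * (2 + 2 * L) ^ 2 * (4 * L ^ 2 + L) * h ^ 2) * D := by
    rw [hD, ← integral_const_mul]
    have := norm_integral_le_of_norm_le (hi.const_mul (C * (2 + 2 * L) ^ 2 * (4 * L ^ 2 + L) * h ^ 2))
      (f := fun z => ψ (sym gU h z) * rho U z - ψ (sym gU h z) * rho U (sym gU h z))
      (Filter.Eventually.of_forall fun z => ?_)
    · exact this
    rw [← mul_sub, Real.norm_eq_abs, abs_mul, abs_sub_comm]
    have en := energy hG hU hh hh1 z
    have hr := rho_pos (U := U) z
    calc |ψ (sym gU h z)| * |rho U (sym gU h z) - rho U z|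
        ≤ (C * ((2 + 2 * L) * (1 + ‖z‖)) ^ 2) * ((h ^ 2 * ((4 * L ^ 2 + L) * (1 + ‖z‖ ^ 2))) *
        Real.exp (h ^ 2 * ((4 * L ^ 2 + L) * (1 + ‖z‖ ^ 2))) * rho U z) := by
          gcongr
          exact pb z
      _ ≤ (C * ((2 + 2 * L) * (1 + ‖z‖)) ^ 2) * ((h ^ 2 * ((4 * L ^ 2 + L) * (1 + ‖z‖) ^ 2)) *
        Real.exp (δ * (1 + ‖z‖ ^ 2)) * rho U z) := by
          gcongr ?_ * (h ^ 2 * (?_ * ?_) * Real.exp ?_ * ?_)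
          · nlinarith [norm_nonneg z]
          · rw [← mul_assoc]; gcongr
      _ = _ := by ring
  have q : 0 ≤ C * h ^ 2 := by positivity
  calc _ ≤ gc E * ((C * (2 + 2 * L) ^ 2 * (4 * L ^ 2 + L) * h ^ 2) * D) := by gcongr
    _ = C * (gc E * ((2 + 2 * L) ^ 2 * (4 * L ^ 2 + L) * D)) * h ^ 2 := by ring
    _ ≤ _ := by gcongr; linarith

set_option maxHeartbeats 1000000 in
lemma bias_core (hG : Good gU L m B) (hU : GoodU U gU L m B) (hγ : 0 < γ) :
    ∃ K > (0 : ℝ), ∃ h₀ > (0 : ℝ), h₀ ≤ 1 / 2 ∧ ∀ h : ℝ, 0 < h → h ≤ h₀ → ∀ ψ : E × E → ℝ, Cls ψ →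
      ψ 0 = 0 → ∀ C : ℝ, 0 ≤ C → (∀ z z', |ψ z - ψ z'| ≤ C * (1 + ‖z‖ + ‖z'‖) * ‖z - z'‖) →
      |∫ z, Pop gU γ h ψ z ∂(bol U) - ∫ z, ψ z ∂(bol U)| ≤ C * K * (h * Real.sqrt h) := by
  obtain ⟨Ks, hKs, h₀, hh₀, hh₀1, hs⟩ := sym_bias hG hU
  have hL := hG.Lpos
  set K1 := 2 * γ + 2 * γ ^ 2 + (L + 1) * (1 + Real.sqrt (2 * γ)) with hK1
  have K10 : 0 < K1 := by positivity
  set K2 := 2 * (2 + L + γ) + 2 * Real.sqrt (2 * γ) + K1 with hK2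
  have K20 : 0 < K2 := by positivity
  have im := (int_bol_sq hU hG.mpos).mul_prod (int_std_sq (E := E))
  set M := ∫ p : (E × E) × E, (1 + ‖p.1‖) ^ 2 * (1 + ‖p.2‖) ^ 2 ∂((bol U).prod (stdGaussian E)) with hM
  have M0 : 0 ≤ M := integral_nonneg fun z => by simp only [Pi.zero_apply]; positivity
  refine ⟨K2 * K1 * M + Ks, by positivity, min h₀ (1 / (2 * γ)), by positivity,
    (min_le_left _ _).trans hh₀1, ?_⟩
  intro h hh hhm ψ hψ hψ0 C hC hlip
  have hh0 : h ≤ h₀ := hhm.trans (min_le_left _ _)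
  have hh1 : h ≤ 1 := by linarith
  have hγh : 2 * (γ * h) ≤ 1 := by
    have := (le_div_iff₀ (by positivity)).1 (hhm.trans (min_le_right _ _))
    linarith
  have hb : ∀ z, |ψ z| ≤ C * (1 + ‖z‖) ^ 2 := fun z => by
    have := hlip z 0
    simp only [hψ0, sub_zero, norm_zero, add_zero] at this
    refine this.trans ?_
    rw [mul_assoc, sq]
    gcongr
    linarith
  have s3 := hs h hh hh0 ψ hψ C hC hb
  set c := Real.sqrt (1 - 2 * (γ * h)) with hc
  set s := Real.sqrt (2 * γ * h) with hsd
  have hcs : c ^ 2 + s ^ 2 = 1 := by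
    rw [hc, hsd, Real.sq_sqrt (by linarith), Real.sq_sqrt (by positivity)]; ring
  have mp := phi_mp hU c s hcs
  have msym := (sym_mp (h := h) hG.cont).measurable
  set Φ : (E × E) × E → E × E := fun p => (p.1.1, c • p.1.2 + s • p.2) with hΦ
  have r0 := Real.sqrt_nonneg h
  have r1 : Real.sqrt h ≤ 1 := Real.sqrt_le_one.2 hh1
  have cn : ∀ p : (E × E) × E, ‖stp gU γ h p.1 p.2 - sym gU h (Φ p)‖ ≤
      K1 * (h * Real.sqrt h) * ((1 + ‖p.1‖) * (1 + ‖p.2‖)) := fun p =>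
    comp_norm hG hγ hh hh1 hγh p.1 p.2
  have na : ∀ p : (E × E) × E, 1 + ‖stp gU γ h p.1 p.2‖ + ‖sym gU h (Φ p)‖ ≤
      K2 * ((1 + ‖p.1‖) * (1 + ‖p.2‖)) := fun p => by
    have a := stp_norm hG hγ hh hh1 p.1 p.2
    have b := cn p
    have d : ‖sym gU h (Φ p)‖ ≤ ‖stp gU γ h p.1 p.2‖ + ‖stp gU γ h p.1 p.2 - sym gU h (Φ p)‖ := by
      have := norm_sub_norm_le (sym gU h (Φ p)) (stp gU γ h p.1 p.2)
      rw [norm_sub_rev] at this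
      linarith
    have hx := norm_nonneg p.1
    have hy := norm_nonneg p.2
    have q0 := Real.sqrt_nonneg (2 * γ)
    set Y := (1 + ‖p.1‖) * (1 + ‖p.2‖) with hY
    have Y1 : 1 + ‖p.1‖ ≤ Y := by nlinarith [mul_nonneg hx hy]
    have Y2 : ‖p.2‖ ≤ Y := by nlinarith [mul_nonneg hx hy]
    have Y0 : 0 ≤ Y := by positivity
    have b' : K1 * (h * Real.sqrt h) * Y ≤ K1 * Y := by
      have : h * Real.sqrt h ≤ 1 := by nlinarith
      calc K1 * (h * Real.sqrt h) * Y ≤ K1 * 1 * Y := by gcongr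
        _ = _ := by ring
    have a1 : (2 + L + γ) * (1 + ‖p.1‖) ≤ (2 + L + γ) * Y := by gcongr
    have a2 : Real.sqrt (2 * γ) * ‖p.2‖ ≤ Real.sqrt (2 * γ) * Y := by gcongr
    have e : K2 * Y = 2 * ((2 + L + γ) * Y) + 2 * (Real.sqrt (2 * γ) * Y) + K1 * Y := by
      rw [hK2]; ring
    rw [e]
    linarith
  have bd : ∀ (p : (E × E) × E) (y : E × E), 1 + ‖y‖ ≤ K2 * ((1 + ‖p.1‖) * (1 + ‖p.2‖)) →
      ‖ψ y‖ ≤ C * K2 ^ 2 * ((1 + ‖p.1‖) ^ 2 * (1 + ‖p.2‖) ^ 2) := fun p y hy => by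
    rw [Real.norm_eq_abs]
    refine (hb y).trans ?_
    calc C * (1 + ‖y‖) ^ 2 ≤ C * (K2 * ((1 + ‖p.1‖) * (1 + ‖p.2‖))) ^ 2 := by gcongr
      _ = _ := by ring
  have iA : Integrable (fun p : (E × E) × E => ψ (stp gU γ h p.1 p.2)) ((bol U).prod (stdGaussian E)) := by
    refine (im.const_mul (C * K2 ^ 2)).mono' (hψ.1.comp (stp_meas hG)).aestronglyMeasurable
      (Filter.Eventually.of_forall fun p => bd p _ ?_)
    have := na p
    have := norm_nonneg (sym gU h (Φ p))
    linarith
  have iB : Integrable (fun p : (E × E) × E => ψ (sym gU h (Φ p))) ((bol U).prod (stdGaussian E)) := by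
    refine (im.const_mul (C * K2 ^ 2)).mono'
      (hψ.1.comp (msym.comp mp.measurable)).aestronglyMeasurable
      (Filter.Eventually.of_forall fun p => bd p _ ?_)
    have := na p
    have := norm_nonneg (stp gU γ h p.1 p.2)
    linarith
  have eA : ∫ z, Pop gU γ h ψ z ∂(bol U) =
      ∫ p, ψ (stp gU γ h p.1 p.2) ∂((bol U).prod (stdGaussian E)) := by
    unfold bol at iA ⊢
    rw [integral_prod _ iA]
    rfl
  have eB : ∫ z, ψ (sym gU h z) ∂(bol U) = ∫ p, ψ (sym gU h (Φ p)) ∂((bol U).prod (stdGaussian E)) := by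
    have := integral_map (μ := (bol U).prod (stdGaussian E)) mp.measurable.aemeasurable
      (f := fun z => ψ (sym gU h z))
      (hψ.1.comp msym).aestronglyMeasurable
    rw [mp.map_eq] at this
    exact this
  have s1 : |∫ z, Pop gU γ h ψ z ∂(bol U) - ∫ z, ψ (sym gU h z) ∂(bol U)| ≤
      (C * K2 * K1 * (h * Real.sqrt h)) * M := by
    rw [eA, eB, ← integral_sub iA iB, hM, ← integral_const_mul]
    rw [← Real.norm_eq_abs]
    refine norm_integral_le_of_norm_le (im.const_mul (C * K2 * K1 * (h * Real.sqrt h)))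
      (Filter.Eventually.of_forall fun p => ?_)
    rw [Real.norm_eq_abs]
    refine (hlip _ _).trans ?_
    calc _ ≤ C * (K2 * ((1 + ‖p.1‖) * (1 + ‖p.2‖))) *
          (K1 * (h * Real.sqrt h) * ((1 + ‖p.1‖) * (1 + ‖p.2‖))) := by
          gcongr
          · exact na p
          · exact cn p
      _ = _ := by ring
  have hhr : h ^ 2 ≤ h * Real.sqrt h := by
    rw [sq]
    gcongr
    nlinarith [Real.sq_sqrt hh.le]
  calc _ ≤ |∫ z, Pop gU γ h ψ z ∂(bol U) - ∫ z, ψ (sym gU h z) ∂(bol U)| +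
        |∫ z, ψ (sym gU h z) ∂(bol U) - ∫ z, ψ z ∂(bol U)| := abs_sub_le _ _ _
    _ ≤ (C * K2 * K1 * (h * Real.sqrt h)) * M + C * Ks * h ^ 2 := add_le_add s1 s3
    _ ≤ (C * K2 * K1 * (h * Real.sqrt h)) * M + C * Ks * (h * Real.sqrt h) := by gcongr
    _ = _ := by ring

lemma poisson_bias (hG : Good gU L m B) (hU : GoodU U gU L m B) (hγ : 0 < γ) (h1 : 4 * L ≤ γ)
    (h2 : 4 * L ≤ γ * m) {f : E × E → ℝ} (hf : Cls f) {l : ℝ} (hl : 0 < l)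
    (hfl : ∀ z z', |f z - f z'| ≤ l * ‖z - z'‖) :
    ∃ C > (0 : ℝ), ∃ h₀ > (0 : ℝ), h₀ ≤ 1 / 2 ∧ ∀ h : ℝ, 0 < h → h ≤ h₀ → ∃ ψ e : E × E → ℝ,
      Cls ψ ∧ Cls e ∧ (∀ z, ψ z - Pop gU γ h ψ z = h * (f z - e z)) ∧
      (∀ z z', |ψ z - ψ z'| ≤ C * (1 + ‖z‖ + ‖z'‖)) ∧
      (∀ z z', |ψ z - ψ z'| ≤ C * (1 + ‖z‖ + ‖z'‖) * ‖z - z'‖) ∧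
      (∀ z z', |e z - e z'| ≤ C * h * (1 + ‖z‖ + ‖z'‖)) ∧
      |(∫ z, f z * rho U z) / (∫ z, rho U z) - e 0| ≤ C * Real.sqrt h := by
  obtain ⟨C, hC, h₀, hh₀, hh₀1, hp⟩ := poisson hG hγ h1 h2 hf hl hfl
  obtain ⟨K, hK, h₁, hh₁, hh₁1, hb⟩ := bias_core hG hU hγ
  have iM := int_bol_sq hU hG.mpos
  set M := ∫ z : E × E, (1 + ‖z‖) ^ 2 ∂(bol U) with hM
  have M0 : 0 ≤ M := integral_nonneg fun z => by simp only [Pi.zero_apply]; positivity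
  set Z := ∫ z : E × E, (1 : ℝ) ∂(bol U) with hZ
  have hgc := gc_pos E
  have iρ : Integrable (rho U) := by
    have := (integrable_bol_iff hU _).1 ((Cls.const (S := E × E) 1).int_bol hU hG.mpos)
    simpa using this
  have ρ0 : 0 < ∫ z, rho U z := by
    refine (integral_pos_iff_support_of_nonneg (fun z => (rho_pos z).le) iρ).2 ?_
    have : Function.support (rho U) = Set.univ := by
      ext z; simp [(rho_pos (U := U) z).ne']
    rw [this]
    exact Measure.measure_univ_pos.2 (NeZero.ne _)
  have eZ : Z = gc E * ∫ z, rho U z := by rw [hZ, integral_bol hU]; simp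
  have Z0 : 0 < Z := by rw [eZ]; positivity
  refine ⟨C + (C * K + C * M) / Z, by positivity, min h₀ h₁, by positivity,
    (min_le_left _ _).trans hh₀1, fun h hh hhm => ?_⟩
  obtain ⟨ψ, e, cψ, ce, hpe, b1, b2, b3⟩ := hp h hh (hhm.trans (min_le_left _ _))
  have hle : C ≤ C + (C * K + C * M) / Z := by
    have : 0 ≤ (C * K + C * M) / Z := by positivity
    linarith
  refine ⟨ψ, e, cψ, ce, hpe, fun z z' => (b1 z z').trans (by gcongr),
    fun z z' => (b2 z z').trans (by gcongr), fun z z' => (b3 z z').trans (by gcongr), ?_⟩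
  have hhalf : h ≤ 1 / 2 := (hhm.trans (min_le_left _ _)).trans hh₀1
  have hh1 : h ≤ 1 := by linarith
  have hP := Pop_mk hG hγ hh hh1
  have cψ0 : Cls (fun z => ψ z - ψ 0) := cψ.sub (Cls.const _)
  have hPψ : ∀ z, Pop gU γ h (fun z => ψ z - ψ 0) z = Pop gU γ h ψ z - ψ 0 := fun z => by
    rw [hP.sub cψ (Cls.const _), hP.const]
  have q := hb h hh (hhm.trans (min_le_right _ _)) (fun z => ψ z - ψ 0) cψ0 (by simp) C hC.le
    (fun z z' => by simpa using b2 z z')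
  have if' := hf.int_bol hU hG.mpos
  have ie := ce.int_bol hU hG.mpos
  rw [← integral_sub ((hP.cls _ cψ0).int_bol hU hG.mpos) (cψ0.int_bol hU hG.mpos)] at q
  have e1 : ∀ z, Pop gU γ h (fun z => ψ z - ψ 0) z - (ψ z - ψ 0) = -h * (f z - e z) := fun z => by
    rw [hPψ]; linarith [hpe z]
  simp only [e1] at q
  rw [integral_const_mul, integral_sub if' ie, abs_mul, abs_neg, abs_of_pos hh] at q
  have q1 : |∫ z, f z ∂(bol U) - ∫ z, e z ∂(bol U)| ≤ C * K * Real.sqrt h := by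
    refine le_of_mul_le_mul_left (q.trans (le_of_eq ?_)) hh
    ring
  have q2 : |∫ z, e z ∂(bol U) - e 0 * Z| ≤ C * h * M := by
    have ic : Integrable (fun _ : E × E => e 0) (bol U) := (Cls.const (e 0)).int_bol hU hG.mpos
    have : e 0 * Z = ∫ z : E × E, e 0 ∂(bol U) := by rw [hZ, ← integral_const_mul]; simp
    rw [this, ← integral_sub ie ic, hM, ← integral_const_mul]
    rw [← Real.norm_eq_abs]
    refine norm_integral_le_of_norm_le (iM.const_mul (C * h)) (Filter.Eventually.of_forall fun z => ?_)
    rw [Real.norm_eq_abs]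
    refine (b3 z 0).trans ?_
    gcongr
    simp only [norm_zero, add_zero]
    nlinarith [norm_nonneg z]
  have e2 : (∫ z, f z * rho U z) / (∫ z, rho U z) = (∫ z, f z ∂(bol U)) / Z := by
    rw [integral_bol hU, eZ, mul_div_mul_left _ _ hgc.ne']
  have r0 := Real.sqrt_nonneg h
  have hr : h ≤ Real.sqrt h := by
    have : Real.sqrt h ≤ 1 := Real.sqrt_le_one.2 hh1
    nlinarith [Real.sq_sqrt hh.le]
  have e3 : (∫ z, f z ∂(bol U)) / Z - e 0 =
      ((∫ z, f z ∂(bol U) - ∫ z, e z ∂(bol U)) + (∫ z, e z ∂(bol U) - e 0 * Z)) / Z := by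
    field_simp; ring
  rw [e2, e3, abs_div, abs_of_pos Z0]
  calc _ ≤ (C * K * Real.sqrt h + C * h * M) / Z := by
        gcongr
        exact (abs_add_le _ _).trans (add_le_add q1 q2)
    _ ≤ (C * K * Real.sqrt h + C * Real.sqrt h * M) / Z := by gcongr
    _ = (C * K + C * M) / Z * Real.sqrt h := by ring
    _ ≤ _ := by gcongr; linarith

end Bias3

end EM




namespace EM

section Pot

variable {E : Type*} [NormedAddCommGroup E] [InnerProductSpace ℝ E] [FiniteDimensional ℝ E]
  [MeasurableSpace E] [BorelSpace E]

variable {U : E → ℝ} {C₁ m R : ℝ}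

lemma grad_inner (x y : E) : inner ℝ (gradient U x) y = fderiv ℝ U x y := by
  simp [gradient]

lemma fd2_norm (hU2 : ∀ x, ‖iteratedFDeriv ℝ 2 U x‖ ≤ C₁) (x : E) :
    ‖fderiv ℝ (fderiv ℝ U) x‖ ≤ C₁ := by
  have := hU2 x
  rw [show (2 : ℕ) = 1 + 1 from rfl, ← norm_iteratedFDeriv_fderiv, norm_iteratedFDeriv_one] at this
  exact this

lemma fd_lip (hU : ContDiff ℝ 3 U) (hU2 : ∀ x, ‖iteratedFDeriv ℝ 2 U x‖ ≤ C₁) (x y : E) :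
    ‖fderiv ℝ U x - fderiv ℝ U y‖ ≤ C₁ * ‖x - y‖ := by
  have hd : Differentiable ℝ (fderiv ℝ U) :=
    (hU.fderiv_right (m := 1) (by norm_num)).differentiable (by norm_num)
  exact convex_univ.norm_image_sub_le_of_norm_fderiv_le (fun z _ => hd z)
    (fun z _ => fd2_norm hU2 z) (Set.mem_univ y) (Set.mem_univ x)

lemma grad_lip (hU : ContDiff ℝ 3 U) (hU2 : ∀ x, ‖iteratedFDeriv ℝ 2 U x‖ ≤ C₁) (x y : E) :
    ‖gradient U x - gradient U y‖ ≤ C₁ * ‖x - y‖ := by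
  have : gradient U x - gradient U y = (InnerProductSpace.toDual ℝ E).symm (fderiv ℝ U x - fderiv ℝ U y) := by
    simp [gradient]
  rw [this, LinearIsometryEquiv.norm_map]
  exact fd_lip hU hU2 x y

lemma grad_dis (hC₁ : 0 < C₁) (hm : 0 < m) (hR : 0 < R) (hU : ContDiff ℝ 3 U)
    (hU1 : ∀ x, ‖gradient U x‖ ≤ C₁ * (‖x‖ + 1))
    (hconv : ∀ x, R ≤ ‖x‖ → ∀ y, m * ‖y‖ ^ 2 ≤ iteratedFDeriv ℝ 2 U x ![y, y]) (x : E) :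
    m * ‖x‖ ^ 2 - (m * R + C₁ * (R + 1)) * ‖x‖ ≤ inner ℝ x (gradient U x) := by
  have hx := norm_nonneg x
  have lo : ∀ w : E, ‖w‖ ≤ R → -(C₁ * (R + 1) * ‖x‖) ≤ inner ℝ x (gradient U w) := fun w hw => by
    have a := abs_real_inner_le_norm x (gradient U w)
    have b : ‖x‖ * ‖gradient U w‖ ≤ ‖x‖ * (C₁ * (R + 1)) := by
      gcongr
      exact (hU1 w).trans (by gcongr)
    have c := neg_abs_le (inner ℝ x (gradient U w))
    linarith
  rcases le_or_gt ‖x‖ R with hxR | hxR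
  · have := lo x hxR
    have : m * ‖x‖ ^ 2 ≤ m * R * ‖x‖ := by
      rw [sq, mul_assoc]; gcongr
    linarith
  · have hx0 : 0 < ‖x‖ := hR.trans hxR
    have hd : Differentiable ℝ (fderiv ℝ U) :=
      (hU.fderiv_right (m := 1) (by norm_num)).differentiable (by norm_num)
    have hk : ∀ t : ℝ, HasDerivAt (fun t : ℝ => fderiv ℝ U (t • x) x)
        (fderiv ℝ (fderiv ℝ U) (t • x) x x) t := fun t => by
      have a : HasDerivAt (fun t : ℝ => t • x) x t := by
        simpa using (hasDerivAt_id t).smul_const x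
      have b := (hd (t • x)).hasFDerivAt.comp_hasDerivAt t a
      exact b.clm_apply (hasDerivAt_const t x) |>.congr_deriv (by simp)
    set t0 := R / ‖x‖ with ht0
    have t00 : 0 < t0 := by positivity
    have t01 : t0 ≤ 1 := by rw [ht0, div_le_one hx0]; exact hxR.le
    have e0 : t0 * ‖x‖ = R := by rw [ht0]; field_simp
    have key := (convex_Icc t0 1).mul_sub_le_image_sub_of_le_deriv
      (f := fun t : ℝ => fderiv ℝ U (t • x) x) (C := m * ‖x‖ ^ 2)
      (fun t _ => (hk t).continuousAt.continuousWithinAt)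
      (fun t _ => (hk t).differentiableAt.differentiableWithinAt)
      (fun t ht => by
        rw [interior_Icc] at ht
        rw [(hk t).deriv]
        have := hconv (t • x) (by
          rw [norm_smul, Real.norm_eq_abs, abs_of_pos (t00.trans ht.1), ← e0]
          gcongr
          exact ht.1.le) x
        rwa [iteratedFDeriv_two_apply] at this)
      t0 (Set.left_mem_Icc.2 t01) 1 (Set.right_mem_Icc.2 t01) t01
    simp only [one_smul] at key
    have l0 := lo (t0 • x) (by rw [norm_smul, Real.norm_eq_abs, abs_of_pos t00, e0])
    rw [real_inner_comm, grad_inner] at l0 ⊢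
    have : m * ‖x‖ ^ 2 * (1 - t0) = m * ‖x‖ ^ 2 - m * R * ‖x‖ := by rw [← e0]; ring
    linarith

lemma pot_low {B : ℝ} (hU : ContDiff ℝ 3 U)
    (dis : ∀ x, m * ‖x‖ ^ 2 - B * ‖x‖ ≤ inner ℝ x (gradient U x)) (x : E) :
    U 0 + m / 2 * ‖x‖ ^ 2 - B * ‖x‖ ≤ U x := by
  have hd : Differentiable ℝ U := hU.differentiable (by norm_num)
  have hk : ∀ t : ℝ, HasDerivAt (fun t : ℝ => U (t • x) - (m / 2 * ‖x‖ ^ 2 * t ^ 2 - B * ‖x‖ * t))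
      (fderiv ℝ U (t • x) x - (m * ‖x‖ ^ 2 * t - B * ‖x‖)) t := fun t => by
    have a : HasDerivAt (fun t : ℝ => t • x) x t := by
      simpa using (hasDerivAt_id t).smul_const x
    have b := (hd (t • x)).hasFDerivAt.comp_hasDerivAt t a
    have c := ((hasDerivAt_pow 2 t).const_mul (m / 2 * ‖x‖ ^ 2)).sub
      ((hasDerivAt_id t).const_mul (B * ‖x‖))
    refine (b.sub c).congr_deriv ?_
    simp
    ring
  have mono := monotoneOn_of_deriv_nonneg (convex_Icc (0 : ℝ) 1)
    (f := fun t : ℝ => U (t • x) - (m / 2 * ‖x‖ ^ 2 * t ^ 2 - B * ‖x‖ * t))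
    (fun t _ => (hk t).continuousAt.continuousWithinAt)
    (fun t _ => (hk t).differentiableAt.differentiableWithinAt)
    (fun t ht => by
      rw [interior_Icc] at ht
      rw [(hk t).deriv]
      have := dis (t • x)
      rw [norm_smul, Real.norm_eq_abs, abs_of_pos ht.1, inner_smul_left, real_inner_comm,
        grad_inner] at this
      simp only [conj_trivial] at this
      have t0 := ht.1
      refine le_of_mul_le_mul_left ?_ t0
      linarith)
  have := mono (Set.left_mem_Icc.2 zero_le_one) (Set.right_mem_Icc.2 zero_le_one) zero_le_one
  simp at this
  linarith

lemma good_of (hC₁ : 0 < C₁) (hm : 0 < m) (hR : 0 < R) (hU : ContDiff ℝ 3 U)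
    (hU1 : ∀ x, ‖gradient U x‖ ≤ C₁ * (‖x‖ + 1))
    (hU2 : ∀ x, ‖iteratedFDeriv ℝ 2 U x‖ ≤ C₁)
    (hconv : ∀ x, R ≤ ‖x‖ → ∀ y, m * ‖y‖ ^ 2 ≤ iteratedFDeriv ℝ 2 U x ![y, y]) :
    Good (gradient U) C₁ m (m * R + C₁ * (R + 1)) ∧
      GoodU U (gradient U) C₁ m (m * R + C₁ * (R + 1)) := by
  have hd : Differentiable ℝ U := hU.differentiable (by norm_num)
  have dis := grad_dis hC₁ hm hR hU hU1 hconv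
  refine ⟨⟨grad_lip hU hU2, hU1, dis, hC₁, hm, by positivity⟩, hU.continuous, fun x y => ?_,
    pot_low hU dis⟩
  rw [grad_inner]
  have := (convex_segment x y).norm_image_sub_le_of_norm_fderiv_le' (f := U) (φ := fderiv ℝ U y)
    (C := C₁ * ‖y - x‖) (fun z _ => hd z) (fun z hz => by
      refine (fd_lip hU hU2 z y).trans ?_
      gcongr
      have := norm_sub_le_of_mem_segment (segment_symm ℝ x y ▸ hz)
      rwa [norm_sub_rev y x])
    (left_mem_segment ℝ x y) (right_mem_segment ℝ x y)
  rw [Real.norm_eq_abs] at this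
  refine this.trans (le_of_eq (by ring))

lemma f_lip {f : E × E → ℝ} {C₂ : ℝ} (hf : ContDiff ℝ 3 f)
    (hf1 : ∀ z, ‖iteratedFDeriv ℝ 1 f z‖ ≤ C₂) (z z' : E × E) : |f z - f z'| ≤ C₂ * ‖z - z'‖ := by
  have hd : Differentiable ℝ f := hf.differentiable (by norm_num)
  exact convex_univ.norm_image_sub_le_of_norm_fderiv_le (fun w _ => hd w)
    (fun w _ => by rw [← norm_iteratedFDeriv_one]; exact hf1 w) (Set.mem_univ z') (Set.mem_univ z)

lemma f_cls {f : E × E → ℝ} {C₂ : ℝ} (hC₂ : 0 < C₂) (hf : Continuous f)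
    (hl : ∀ z z', |f z - f z'| ≤ C₂ * ‖z - z'‖) : Cls f := by
  refine ⟨hf.measurable, |f 0| + C₂, fun z => ?_⟩
  have := hl z 0
  rw [sub_zero] at this
  have a : |f z| ≤ |f z - f 0| + |f 0| := by
    have := abs_add_le (f z - f 0) (f 0)
    simpa using this
  have b : ‖z‖ ≤ 1 + ‖z‖ ^ 2 := by nlinarith [sq_nonneg (‖z‖ - 1)]
  have c : C₂ * ‖z‖ ≤ C₂ * (1 + ‖z‖ ^ 2) := by gcongr
  have d : 0 ≤ |f 0| * ‖z‖ ^ 2 := by positivity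
  linarith

end Pot

end EM




namespace EM

section Proc

variable {Ω : Type*} {mΩ : MeasurableSpace Ω} {P : Measure Ω}

lemma J_mono {u v : Ω → ℝ} (h : ∀ ω, u ω ≤ v ω) :
    ∫⁻ ω, ENNReal.ofReal (u ω) ∂P ≤ ∫⁻ ω, ENNReal.ofReal (v ω) ∂P :=
  lintegral_mono fun ω => ENNReal.ofReal_le_ofReal (h ω)

lemma J_smul {a : ℝ} (ha : 0 ≤ a) (u : Ω → ℝ) :
    ∫⁻ ω, ENNReal.ofReal (a * u ω) ∂P = ENNReal.ofReal a * ∫⁻ ω, ENNReal.ofReal (u ω) ∂P := by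
  rw [← lintegral_const_mul' _ _ ENNReal.ofReal_ne_top]
  simp_rw [ENNReal.ofReal_mul ha]

lemma J_add {u v : Ω → ℝ} (hu : Measurable u) :
    ∫⁻ ω, ENNReal.ofReal (u ω + v ω) ∂P ≤
      ∫⁻ ω, ENNReal.ofReal (u ω) ∂P + ∫⁻ ω, ENNReal.ofReal (v ω) ∂P := by
  rw [← lintegral_add_left (by fun_prop)]
  exact lintegral_mono fun ω => ENNReal.ofReal_add_le

lemma J_sum {s : Finset ℕ} {u : ℕ → Ω → ℝ} (hu : ∀ n, Measurable (u n)) (h0 : ∀ n ω, 0 ≤ u n ω) :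
    ∫⁻ ω, ENNReal.ofReal (∑ n ∈ s, u n ω) ∂P = ∑ n ∈ s, ∫⁻ ω, ENNReal.ofReal (u n ω) ∂P := by
  rw [← lintegral_finsetSum _ (fun n _ => by have := hu n; fun_prop)]
  simp_rw [ENNReal.ofReal_sum_of_nonneg (fun n _ => h0 n _)]

/-- if `∫⁻ ofReal u ≤ ofReal a * I` then the same for a multiple. -/
lemma J_bd {u v : Ω → ℝ} {I : ℝ≥0∞} {a k b : ℝ} (hk : 0 ≤ k) (huv : ∀ ω, u ω ≤ k * v ω)
    (hv : ∫⁻ ω, ENNReal.ofReal (v ω) ∂P ≤ ENNReal.ofReal a * I) (hb : k * a ≤ b) :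
    ∫⁻ ω, ENNReal.ofReal (u ω) ∂P ≤ ENNReal.ofReal b * I := by
  refine (J_mono huv).trans ?_
  rw [J_smul hk]
  calc _ ≤ ENNReal.ofReal k * (ENNReal.ofReal a * I) := by gcongr
    _ = ENNReal.ofReal (k * a) * I := by rw [ENNReal.ofReal_mul hk, mul_assoc]
    _ ≤ _ := by gcongr

lemma J_bd_add {u v w : Ω → ℝ} {I : ℝ≥0∞} {a b : ℝ} (ha : 0 ≤ a) (hb : 0 ≤ b)
    (hv : Measurable v) (huv : ∀ ω, u ω ≤ v ω + w ω)
    (h1 : ∫⁻ ω, ENNReal.ofReal (v ω) ∂P ≤ ENNReal.ofReal a * I)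
    (h2 : ∫⁻ ω, ENNReal.ofReal (w ω) ∂P ≤ ENNReal.ofReal b * I) :
    ∫⁻ ω, ENNReal.ofReal (u ω) ∂P ≤ ENNReal.ofReal (a + b) * I := by
  refine (J_mono huv).trans ((J_add hv).trans ?_)
  rw [ENNReal.ofReal_add ha hb, add_mul]
  exact add_le_add h1 h2

/-- independence of the past and of the present noise. -/
lemma past_indep {α F : Type*} {mα : MeasurableSpace α} {mF : MeasurableSpace F}
    {m0 : MeasurableSpace Ω} {ξ : ℕ → Ω → F} (hm0 : m0 ≤ mΩ) (hξ : ∀ n, Measurable[mΩ] (ξ n))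
    (hi : iIndep (fun i : Option ℕ =>
          Option.elim i m0 fun n => MeasurableSpace.comap (ξ n) mF) P)
    {W : ℕ → Ω → α} (hW0 : Measurable[m0] (W 0)) {Ψ : α → F → α}
    (hΨ : Measurable (fun p : α × F => Ψ p.1 p.2)) (hW : ∀ n ω, W (n + 1) ω = Ψ (W n ω) (ξ n ω)) (n : ℕ) :
    IndepFun (W n) (ξ n) P := by
  set mm : Option ℕ → MeasurableSpace Ω := fun i =>
    Option.elim i m0 fun n => MeasurableSpace.comap (ξ n) mF with hmm
  have hle : ∀ i, mm i ≤ mΩ := by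
    rintro (_ | k)
    · exact hm0
    · exact (hξ k).comap_le
  have meas : ∀ k, Measurable[⨆ i ∈ {i : Option ℕ | ∀ j, i = some j → j < k}, mm i] (W k) := by
    intro k
    induction k with
    | zero =>
      have : m0 ≤ ⨆ i ∈ {i : Option ℕ | ∀ j, i = some j → j < 0}, mm i :=
        le_iSup₂_of_le (f := fun i (_ : i ∈ {i : Option ℕ | ∀ j, i = some j → j < 0}) => mm i)
          none (by simp) le_rfl
      exact hW0.mono this le_rfl
    | succ k ih =>
      have a : Measurable[⨆ i ∈ {i : Option ℕ | ∀ j, i = some j → j < k + 1}, mm i] (W k) := by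
        refine ih.mono (biSup_mono fun i hi j hj => ?_) le_rfl
        have := hi j hj
        omega
      have b : Measurable[⨆ i ∈ {i : Option ℕ | ∀ j, i = some j → j < k + 1}, mm i] (ξ k) := by
        have : MeasurableSpace.comap (ξ k) mF ≤ ⨆ i ∈ {i : Option ℕ | ∀ j, i = some j → j < k + 1}, mm i :=
          le_iSup₂_of_le (f := fun i (_ : i ∈ {i : Option ℕ | ∀ j, i = some j → j < k + 1}) => mm i)
            (some k) (by simp) le_rfl
        exact (comap_measurable (ξ k)).mono this le_rfl
      have e : W (k + 1) = fun ω => Ψ (W k ω) (ξ k ω) := funext fun ω => hW k ω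
      rw [e]
      exact hΨ.comp (a.prodMk b)
  have key := indep_iSup_of_disjoint hle hi
    (S := {i : Option ℕ | ∀ j, i = some j → j < n}) (T := {some n}) (by
      rw [Set.disjoint_singleton_right]
      simp)
  rw [IndepFun_iff_Indep]
  refine indep_of_indep_of_le_left (indep_of_indep_of_le_right key ?_) ?_
  · simp [hmm]
  · exact (meas n).comap_le

lemma lint_step {α F : Type*} {mα : MeasurableSpace α} {mF : MeasurableSpace F} {ν : Measure F}
    [IsProbabilityMeasure P]
    {W : Ω → α} {ξ : Ω → F} (hW : Measurable W) (hξ : Measurable ξ) (hi : IndepFun W ξ P)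
    (hν : P.map ξ = ν) {G : α → F → ℝ≥0∞} (hG : Measurable (fun p : α × F => G p.1 p.2)) :
    ∫⁻ ω, G (W ω) (ξ ω) ∂P = ∫⁻ ω, ∫⁻ x, G (W ω) x ∂ν ∂P := by
  have : IsProbabilityMeasure (P.map ξ) := Measure.isProbabilityMeasure_map hξ.aemeasurable
  have e := (indepFun_iff_map_prod_eq_prod_map_map hW.aemeasurable hξ.aemeasurable).1 hi
  have a : ∫⁻ ω, G (W ω) (ξ ω) ∂P = ∫⁻ p, G p.1 p.2 ∂(P.map fun ω => (W ω, ξ ω)) := by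
    rw [lintegral_map hG (hW.prodMk hξ)]
  subst hν
  rw [a, e, lintegral_prod _ hG.aemeasurable, lintegral_map hG.lintegral_prod_right' hW]

end Proc

end EM




namespace EM

section Var

variable {E : Type*} [NormedAddCommGroup E] [InnerProductSpace ℝ E] [FiniteDimensional ℝ E]
  [MeasurableSpace E] [BorelSpace E]

variable {gU : E → E} {L m B γ h : ℝ}

lemma int_std_four : Integrable (fun ξ : E => (1 + ‖ξ‖) ^ 4) (stdGaussian E) := by
  have a := ((((integrable_const (1 : ℝ)).add ((integrable_pow_norm_std (E := E) 1).const_mul 4)).add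
    ((integrable_pow_norm_std (E := E) 2).const_mul 6)).add
    ((integrable_pow_norm_std (E := E) 3).const_mul 4)).add (integrable_pow_norm_std (E := E) 4)
  refine a.congr (Filter.Eventually.of_forall fun x => ?_)
  simp only [Pi.add_apply]
  ring

lemma var_bd (hG : Good gU L m B) (hγ : 0 < γ) :
    ∃ K > (0 : ℝ), ∀ h : ℝ, 0 < h → h ≤ 1 → ∀ ψ : E × E → ℝ, Cls ψ → ∀ C : ℝ, 0 ≤ C →
      (∀ z z', |ψ z - ψ z'| ≤ C * (1 + ‖z‖ + ‖z'‖) * ‖z - z'‖) → ∀ (s : ℝ) (z : E × E),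
      ∫⁻ ξ, ENNReal.ofReal ((s + (ψ (stp gU γ h z ξ) - Pop gU γ h ψ z)) ^ 2) ∂(stdGaussian E) ≤
        ENNReal.ofReal (s ^ 2 + C ^ 2 * K * h * (1 + ‖z‖) ^ 2) := by
  have i4 := int_std_four (E := E)
  set G4 := ∫ ξ : E, (1 + ‖ξ‖) ^ 4 ∂(stdGaussian E) with hG4
  have G40 : 0 ≤ G4 := integral_nonneg fun z => by simp only [Pi.zero_apply]; positivity
  have hL := hG.Lpos
  have q0 := Real.sqrt_nonneg (2 * γ)
  set K2 := 2 * (2 + L + γ) + Real.sqrt (2 * γ) with hK2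
  have K20 : 0 < K2 := by positivity
  refine ⟨K2 ^ 2 * (2 * γ) * G4 + 1, by positivity, ?_⟩
  intro h hh hh1 ψ hψ C hC hlip s z
  set Y : E → ℝ := fun ξ => ψ (stp gU γ h z ξ) - ψ (stp gU γ h z 0) with hY
  have iψ := hψ.integrable_stp hG hγ hh hh1 z
  have iY : Integrable Y (stdGaussian E) := iψ.sub (integrable_const _)
  have mY : Measurable Y := (hψ.1.comp (stp_meas' hG z)).sub measurable_const
  have hz := norm_nonneg z
  have yb : ∀ ξ, Y ξ ^ 2 ≤ C ^ 2 * K2 ^ 2 * (2 * γ) * h * (1 + ‖z‖) ^ 2 * (1 + ‖ξ‖) ^ 4 := fun ξ => by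
    have a := stp_norm hG hγ hh hh1 z ξ
    have b := stp_norm hG hγ hh hh1 z 0
    rw [norm_zero, mul_zero, add_zero] at b
    have hx := norm_nonneg ξ
    have n1 : 1 + ‖stp gU γ h z ξ‖ + ‖stp gU γ h z 0‖ ≤ K2 * ((1 + ‖z‖) * (1 + ‖ξ‖)) := by
      set T := (1 + ‖z‖) * (1 + ‖ξ‖) with hT
      have Y1 : 1 + ‖z‖ ≤ T := by nlinarith [mul_nonneg hz hx]
      have Y2 : ‖ξ‖ ≤ T := by nlinarith [mul_nonneg hz hx]
      have a1 : (2 + L + γ) * (1 + ‖z‖) ≤ (2 + L + γ) * T := by gcongr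
      have a2 : Real.sqrt (2 * γ) * ‖ξ‖ ≤ Real.sqrt (2 * γ) * T := by gcongr
      have e : K2 * T = 2 * ((2 + L + γ) * T) + (Real.sqrt (2 * γ) * T) := by
        rw [hK2]; ring
      rw [e]
      linarith
    have l := hlip (stp gU γ h z ξ) (stp gU γ h z 0)
    rw [stp_norm_sub_zero] at l
    have l2 : |Y ξ| ≤ C * (K2 * ((1 + ‖z‖) * (1 + ‖ξ‖))) * (Real.sqrt (2 * γ * h) * (1 + ‖ξ‖)) := by
      refine l.trans ?_
      gcongr
      linarith
    calc Y ξ ^ 2 = |Y ξ| ^ 2 := (sq_abs _).symm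
      _ ≤ (C * (K2 * ((1 + ‖z‖) * (1 + ‖ξ‖))) * (Real.sqrt (2 * γ * h) * (1 + ‖ξ‖))) ^ 2 := by gcongr
      _ = C ^ 2 * K2 ^ 2 * (Real.sqrt (2 * γ * h)) ^ 2 * (1 + ‖z‖) ^ 2 * (1 + ‖ξ‖) ^ 4 := by ring
      _ = _ := by rw [Real.sq_sqrt (by positivity)]; ring
  have iY2 : Integrable (fun ξ => Y ξ ^ 2) (stdGaussian E) := by
    refine (i4.const_mul (C ^ 2 * K2 ^ 2 * (2 * γ) * h * (1 + ‖z‖) ^ 2)).mono'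
      (by fun_prop) (Filter.Eventually.of_forall fun ξ => ?_)
    rw [Real.norm_eq_abs, abs_of_nonneg (sq_nonneg _)]
    exact yb ξ
  set c := ∫ ξ, Y ξ ∂(stdGaussian E) with hc
  have ec : Pop gU γ h ψ z = c + ψ (stp gU γ h z 0) := by
    rw [hc, hY, integral_sub iψ (integrable_const _)]
    simp [Pop]
  have e1 : ∀ ξ, (s + (ψ (stp gU γ h z ξ) - Pop gU γ h ψ z)) ^ 2 =
      (Y ξ ^ 2 + 2 * (s - c) * Y ξ) + (s - c) ^ 2 := fun ξ => by
    rw [ec, hY]; ring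
  simp only [e1]
  have i1 : Integrable (fun ξ => Y ξ ^ 2 + 2 * (s - c) * Y ξ) (stdGaussian E) :=
    iY2.add (iY.const_mul _)
  have i2 : Integrable (fun ξ => (Y ξ ^ 2 + 2 * (s - c) * Y ξ) + (s - c) ^ 2) (stdGaussian E) :=
    i1.add (integrable_const _)
  rw [← ofReal_integral_eq_lintegral_ofReal i2 (Filter.Eventually.of_forall fun ξ => by
    simp only [Pi.zero_apply]
    rw [← e1]; positivity)]
  apply ENNReal.ofReal_le_ofReal
  rw [integral_add i1 (integrable_const _), integral_add iY2 (iY.const_mul _), integral_const_mul,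
    ← hc]
  have b : ∫ ξ, Y ξ ^ 2 ∂(stdGaussian E) ≤ C ^ 2 * K2 ^ 2 * (2 * γ) * h * (1 + ‖z‖) ^ 2 * G4 := by
    rw [hG4, ← integral_const_mul]
    exact integral_mono iY2 (i4.const_mul _) yb
  have d : 0 ≤ C ^ 2 * h * (1 + ‖z‖) ^ 2 := by positivity
  simp only [integral_const, probReal_univ, one_smul]
  nlinarith [sq_nonneg c]

end Var

section Chain

variable {E : Type*} [NormedAddCommGroup E] [InnerProductSpace ℝ E] [FiniteDimensional ℝ E]
  [MeasurableSpace E] [BorelSpace E]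

variable {gU : E → E} {L m B γ h : ℝ}
variable {Ω : Type*} {mΩ : MeasurableSpace Ω} {P : Measure Ω} {Z : ℕ → Ω → E × E} {ξ : ℕ → Ω → E}

/-- the Euler--Maruyama chain. -/
structure Chain (gU : E → E) (γ h : ℝ) (P : Measure Ω) (Z : ℕ → Ω → E × E) (ξ : ℕ → Ω → E) : Prop where
  prob : IsProbabilityMeasure P
  z0 : Measurable (Z 0)
  xm : ∀ n, Measurable (ξ n)
  law : ∀ n, P.map (ξ n) = stdGaussian E
  ind : iIndep (fun i : Option ℕ =>
          Option.elim i (MeasurableSpace.comap (Z 0) inferInstance)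
            fun n => MeasurableSpace.comap (ξ n) inferInstance) P
  step : ∀ n ω, Z (n + 1) ω = stp gU γ h (Z n ω) (ξ n ω)

lemma Chain.meas (hZ : Chain gU γ h P Z ξ) (hG : Good gU L m B) (n : ℕ) : Measurable (Z n) := by
  induction n with
  | zero => exact hZ.z0
  | succ n ih =>
    have e : Z (n + 1) = fun ω => stp gU γ h (Z n ω) (ξ n ω) := funext fun ω => hZ.step n ω
    rw [e]
    exact (stp_meas hG).comp (ih.prodMk (hZ.xm n))

lemma Chain.pop (hZ : Chain gU γ h P Z ξ) (hG : Good gU L m B) (hγ : 0 < γ) (hh : 0 < h) (hh1 : h ≤ 1)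
    (n : ℕ) (g : E × E → ℝ) (hg : Cls g) (g0 : ∀ z, 0 ≤ g z) :
    ∫⁻ ω, ENNReal.ofReal (g (Z n ω)) ∂P = ∫⁻ ω, ENNReal.ofReal ((Pop gU γ h)^[n] g (Z 0 ω)) ∂P := by
  have := hZ.prob
  have hP := Pop_mk hG hγ hh hh1
  induction n generalizing g with
  | zero => rfl
  | succ n ih =>
    rw [Function.iterate_succ, Function.comp_apply]
    rw [← ih (Pop gU γ h g) (hP.cls g hg) (fun z => integral_nonneg fun ξ => g0 _)]
    have ind := past_indep (hZ.z0.comap_le) hZ.xm hZ.ind (W := Z) (comap_measurable (Z 0))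
      (Ψ := fun z x => stp gU γ h z x) (stp_meas hG) hZ.step n
    simp only [hZ.step]
    have := lint_step (hZ.meas hG n) (hZ.xm n) ind (hZ.law n)
      (G := fun z x => ENNReal.ofReal (g (stp gU γ h z x)))
      (hg.1.comp (stp_meas hG)).ennreal_ofReal
    rw [this]
    refine lintegral_congr fun ω => ?_
    rw [← ofReal_integral_eq_lintegral_ofReal (hg.integrable_stp hG hγ hh hh1 _)
      (Filter.Eventually.of_forall fun x => g0 _)]
    rfl

lemma Chain.mart (hZ : Chain gU γ h P Z ξ) (hG : Good gU L m B) {ψ : E × E → ℝ}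
    (hψ : Measurable ψ) (hPψ : Measurable (Pop gU γ h ψ)) {κ : ℝ} (hκ : 0 ≤ κ)
    (hv : ∀ (s : ℝ) (z : E × E),
      ∫⁻ ξ, ENNReal.ofReal ((s + (ψ (stp gU γ h z ξ) - Pop gU γ h ψ z)) ^ 2) ∂(stdGaussian E) ≤
        ENNReal.ofReal (s ^ 2 + κ * (1 + ‖z‖) ^ 2)) {I : ℝ≥0∞} {k : ℝ} (hk : 0 ≤ k)
    (hI : ∀ n, ∫⁻ ω, ENNReal.ofReal ((1 + ‖Z n ω‖) ^ 2) ∂P ≤ ENNReal.ofReal k * I) (n : ℕ) :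
    ∫⁻ ω, ENNReal.ofReal ((∑ i ∈ Finset.range n, (ψ (Z (i + 1) ω) - Pop gU γ h ψ (Z i ω))) ^ 2) ∂P ≤
      ENNReal.ofReal (n * (κ * k)) * I := by
  have := hZ.prob
  set S : ℕ → Ω → ℝ := fun n ω =>
    ∑ i ∈ Finset.range n, (ψ (Z (i + 1) ω) - Pop gU γ h ψ (Z i ω)) with hS
  have hZm := hZ.meas hG
  have mS : ∀ n, Measurable (S n) := fun n =>
    Finset.measurable_fun_sum _ fun i _ => (hψ.comp (hZm _)).sub (hPψ.comp (hZm _))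
  have hs := stp_meas (γ := γ) (h := h) hG
  induction n with
  | zero => simp
  | succ n ih =>
    have hW0 : Measurable[MeasurableSpace.comap (Z 0) inferInstance] (fun ω => (Z 0 ω, S 0 ω)) := by
      have e0 : (fun ω => (Z 0 ω, S 0 ω)) = (fun z : E × E => (z, (0 : ℝ))) ∘ Z 0 := by
        funext ω; simp [hS]
      rw [e0]
      exact (measurable_id.prodMk measurable_const).comp (comap_measurable (Z 0))
    have ind := past_indep (hZ.z0.comap_le) hZ.xm hZ.ind (W := fun n ω => (Z n ω, S n ω))
      hW0
      (Ψ := fun w x => (stp gU γ h w.1 x, w.2 + (ψ (stp gU γ h w.1 x) - Pop gU γ h ψ w.1)))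
      (by
        have a : Measurable (fun p : ((E × E) × ℝ) × E => stp gU γ h p.1.1 p.2) :=
          hs.comp ((measurable_fst.comp measurable_fst).prodMk measurable_snd)
        exact a.prodMk ((measurable_snd.comp measurable_fst).add
          ((hψ.comp a).sub (hPψ.comp (measurable_fst.comp measurable_fst)))))
      (fun n ω => by
        simp only [hS, Finset.sum_range_succ, hZ.step]) n
    have e : ∀ ω, S (n + 1) ω = S n ω + (ψ (stp gU γ h (Z n ω) (ξ n ω)) - Pop gU γ h ψ (Z n ω)) := fun ω => by
      simp only [hS, Finset.sum_range_succ, hZ.step]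
    have st := lint_step ((hZm n).prodMk (mS n)) (hZ.xm n) ind (hZ.law n)
      (G := fun w x => ENNReal.ofReal ((w.2 + (ψ (stp gU γ h w.1 x) - Pop gU γ h ψ w.1)) ^ 2))
      (by
        have a : Measurable (fun p : ((E × E) × ℝ) × E => stp gU γ h p.1.1 p.2) :=
          hs.comp ((measurable_fst.comp measurable_fst).prodMk measurable_snd)
        exact (((measurable_snd.comp measurable_fst).add
          ((hψ.comp a).sub (hPψ.comp (measurable_fst.comp measurable_fst)))).pow_const 2).ennreal_ofReal)
    have e2 : ∫⁻ ω, ENNReal.ofReal (S (n + 1) ω ^ 2) ∂P ≤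
        ∫⁻ ω, ENNReal.ofReal (S n ω ^ 2 + κ * (1 + ‖Z n ω‖) ^ 2) ∂P := by
      simp only [e]
      rw [st]
      exact lintegral_mono fun ω => hv _ _
    refine e2.trans ((J_add ((mS n).pow_const 2)).trans ?_)
    rw [J_smul hκ]
    have : ((n + 1 : ℕ) : ℝ) * (κ * k) = n * (κ * k) + κ * k := by push_cast; ring
    rw [this, ENNReal.ofReal_add (by positivity) (by positivity), add_mul, ENNReal.ofReal_mul hκ, mul_assoc]
    gcongr
    exact hI n

lemma Chain.mom (hG : Good gU L m B) (hγ : 0 < γ) (h1 : 4 * L ≤ γ) (h2 : 4 * L ≤ γ * m) :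
    ∃ k > (0 : ℝ), ∃ h₀ > (0 : ℝ), h₀ ≤ 1 / 2 ∧ ∀ h : ℝ, 0 < h → h ≤ h₀ →
      ∀ {Ω : Type} {mΩ : MeasurableSpace Ω} {P : Measure Ω} {Z : ℕ → Ω → E × E} {ξ : ℕ → Ω → E},
      Chain gU γ h P Z ξ → ∀ n, ∫⁻ ω, ENNReal.ofReal ((1 + ‖Z n ω‖) ^ 2) ∂P ≤
        ENNReal.ofReal k * ∫⁻ ω, ENNReal.ofReal ((1 + ‖Z 0 ω‖) ^ 2) ∂P := by
  obtain ⟨c, -, K, hK, h₀, hh₀, hh₀1, hq⟩ := Q_lyap hG hγ h1 h2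
  obtain ⟨a, ha, A, hA, hw⟩ := w_bounds (E := E) hγ
  have up : ∀ z : E × E, lyV γ z ≤ A ^ 2 * (1 + ‖z‖) ^ 2 := fun z => by
    have l1 := lyV_one_le hγ z
    rw [← Real.sq_sqrt (by linarith : 0 ≤ lyV γ z), ← mul_pow]
    have := (hw z).2
    gcongr
  have lo : ∀ z : E × E, (1 + ‖z‖) ^ 2 ≤ 2 * (1 + 1 / a ^ 2) * lyV γ z := fun z => by
    have l1 := lyV_one_le hγ z
    have b : a ^ 2 * ‖z‖ ^ 2 ≤ lyV γ z := by
      rw [← Real.sq_sqrt (by linarith : 0 ≤ lyV γ z), ← mul_pow]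
      have := (hw z).1
      gcongr
    have b' : ‖z‖ ^ 2 ≤ 1 / a ^ 2 * lyV γ z := by
      rw [one_div, inv_mul_eq_div, le_div_iff₀ (by positivity)]; linarith
    nlinarith [sq_nonneg (1 - ‖z‖)]
  refine ⟨2 * (1 + 1 / a ^ 2) * (A ^ 2 + K), by positivity, h₀, hh₀, hh₀1, ?_⟩
  intro h hh hhle Ω mΩ P Z ξ hZ n
  refine J_bd (v := fun ω => lyV γ (Z n ω)) (by positivity) (fun ω => lo (Z n ω)) ?_ le_rfl
  rw [hZ.pop hG hγ hh (by linarith) n _ (lyV_cls hγ) (fun z => by linarith [lyV_one_le hγ z])]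
  refine J_bd (v := fun ω => (1 + ‖Z 0 ω‖) ^ 2) (k := A ^ 2 + K) (a := 1) (by positivity)
    (fun ω => ?_) (by simp) (by simp)
  refine ((hq h hh hhle).1 n _).trans ?_
  have := up (Z 0 ω)
  have : K * 1 ≤ K * (1 + ‖Z 0 ω‖) ^ 2 := by
    gcongr
    nlinarith [norm_nonneg (Z 0 ω)]
  linarith

end Chain

end EM




namespace EM

section Final

variable {E : Type*} [NormedAddCommGroup E] [InnerProductSpace ℝ E] [FiniteDimensional ℝ E]
  [MeasurableSpace E] [BorelSpace E]

variable {gU : E → E} {L m B γ h : ℝ}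
variable {Ω : Type*} {mΩ : MeasurableSpace Ω} {P : Measure Ω} {Z : ℕ → Ω → E × E} {ξ : ℕ → Ω → E}

lemma avg_bd (hZm : ∀ n, Measurable (Z n)) {I : ℝ≥0∞} {k : ℝ} (hk : 0 ≤ k)
    (hI : ∀ n, ∫⁻ ω, ENNReal.ofReal ((1 + ‖Z n ω‖) ^ 2) ∂P ≤ ENNReal.ofReal k * I)
    {g : E × E → ℝ} {c : ℝ} (hg : ∀ z, |g z| ≤ c * (1 + ‖z‖)) (N : ℕ) (hN : 1 ≤ N) :
    ∫⁻ ω, ENNReal.ofReal (((N : ℝ)⁻¹ * ∑ n ∈ Finset.range N, g (Z n ω)) ^ 2) ∂P ≤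
      ENNReal.ofReal (c ^ 2 * k) * I := by
  have hN0 : (0 : ℝ) < N := by exact_mod_cast hN
  refine J_bd (v := fun ω => ∑ n ∈ Finset.range N, (1 + ‖Z n ω‖) ^ 2) (k := c ^ 2 / N) (a := N * k)
    (by positivity) (fun ω => ?_) ?_ ?_
  · have a := sq_sum_le_card_mul_sum_sq (s := Finset.range N) (f := fun n => g (Z n ω))
    rw [Finset.card_range] at a
    have b : ∑ n ∈ Finset.range N, g (Z n ω) ^ 2 ≤ c ^ 2 * ∑ n ∈ Finset.range N, (1 + ‖Z n ω‖) ^ 2 := by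
      rw [Finset.mul_sum]
      refine Finset.sum_le_sum fun n _ => ?_
      rw [← sq_abs, ← mul_pow]
      have := hg (Z n ω)
      gcongr
    rw [mul_pow, inv_pow, inv_mul_le_iff₀ (by positivity)]
    refine a.trans ?_
    have e : (N : ℝ) ^ 2 * (c ^ 2 / N * ∑ n ∈ Finset.range N, (1 + ‖Z n ω‖) ^ 2) =
        N * (c ^ 2 * ∑ n ∈ Finset.range N, (1 + ‖Z n ω‖) ^ 2) := by
      field_simp
    rw [e]
    gcongr
  · rw [J_sum (u := fun n ω => (1 + ‖Z n ω‖) ^ 2) (fun n => by have := hZm n; fun_prop)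
      (fun n ω => by positivity)]
    refine (Finset.sum_le_sum fun n _ => hI n).trans ?_
    rw [Finset.sum_const, Finset.card_range, nsmul_eq_mul, ENNReal.ofReal_mul hN0.le,
      ENNReal.ofReal_natCast, mul_assoc]
  · apply le_of_eq
    field_simp

lemma one_le_I (hP : IsProbabilityMeasure P) (u : Ω → ℝ) (hu : ∀ ω, 0 ≤ u ω) :
    1 ≤ ∫⁻ ω, ENNReal.ofReal ((1 + u ω) ^ 2) ∂P := by
  have : ∫⁻ _, (1 : ℝ≥0∞) ∂P ≤ ∫⁻ ω, ENNReal.ofReal ((1 + u ω) ^ 2) ∂P := by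
    refine lintegral_mono fun ω => ?_
    rw [ENNReal.one_le_ofReal]
    nlinarith [hu ω]
  simpa using this

set_option maxHeartbeats 1000000 in
lemma err_large (hZ : Chain gU γ h P Z ξ) (hG : Good gU L m B) (hh : 0 < h) (hh1 : h ≤ 1)
    {f ψ e : E × E → ℝ} (hψ : Measurable ψ) (hPψ : Measurable (Pop gU γ h ψ))
    (hf : Measurable f) (he : Measurable e)
    (hp : ∀ z, ψ z - Pop gU γ h ψ z = h * (f z - e z)) {C K k p : ℝ} (hC : 0 ≤ C) (hK : 0 ≤ K)
    (hψ1 : ∀ z z', |ψ z - ψ z'| ≤ C * (1 + ‖z‖ + ‖z'‖))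
    (hv : ∀ (s : ℝ) (z : E × E),
      ∫⁻ ξ, ENNReal.ofReal ((s + (ψ (stp gU γ h z ξ) - Pop gU γ h ψ z)) ^ 2) ∂(stdGaussian E) ≤
        ENNReal.ofReal (s ^ 2 + C ^ 2 * K * h * (1 + ‖z‖) ^ 2))
    (he1 : ∀ z z', |e z - e z'| ≤ C * h * (1 + ‖z‖ + ‖z'‖)) (hb : |p - e 0| ≤ C * Real.sqrt h)
    {I : ℝ≥0∞} (hk : 0 ≤ k) (hI1 : 1 ≤ I)
    (hI : ∀ n, ∫⁻ ω, ENNReal.ofReal ((1 + ‖Z n ω‖) ^ 2) ∂P ≤ ENNReal.ofReal k * I) 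
    (N : ℕ) (hN : 1 ≤ N) (hNh : 1 ≤ N * h) :
    ∫⁻ ω, ENNReal.ofReal (((N : ℝ)⁻¹ * (∑ n ∈ Finset.range N, f (Z n ω)) - p) ^ 2) ∂P ≤
      ENNReal.ofReal (4 * C ^ 2 * (4 * k + K * k + 1) * (h + 1 / (N * h))) * I := by
  have := hZ.prob
  have hZm := hZ.meas hG
  have hN0 : (0 : ℝ) < N := by exact_mod_cast hN
  have hNh0 : (0 : ℝ) < N * h := by positivity
  set t : ℝ := 1 / (N * h) with ht
  have t0 : 0 < t := by positivity
  have t1 : t ≤ 1 := by rw [ht, div_le_one hNh0]; exact hNh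
  set S : Ω → ℝ := fun ω => ∑ i ∈ Finset.range N, (ψ (Z (i + 1) ω) - Pop gU γ h ψ (Z i ω)) with hS
  set T : Ω → ℝ := fun ω => (N : ℝ)⁻¹ * ∑ n ∈ Finset.range N, (e (Z n ω) - e 0) with hT
  have mS : Measurable S :=
    Finset.measurable_fun_sum _ fun i _ => (hψ.comp (hZm _)).sub (hPψ.comp (hZm _))
  have mT : Measurable T :=
    (Finset.measurable_fun_sum _ fun i _ => (he.comp (hZm _)).sub measurable_const).const_mul _
  have id1 : ∀ ω, (N : ℝ)⁻¹ * (∑ n ∈ Finset.range N, f (Z n ω)) - p =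
      t * (ψ (Z 0 ω) - ψ (Z N ω)) + t * S ω + T ω + (e 0 - p) := fun ω => by
    have a : h * ∑ n ∈ Finset.range N, f (Z n ω) =
        (ψ (Z 0 ω) - ψ (Z N ω)) + S ω + h * ∑ n ∈ Finset.range N, (e (Z n ω) - e 0) + h * N * e 0 := by
      have tel : ∑ i ∈ Finset.range N, (ψ (Z (i + 1) ω) - ψ (Z i ω)) = ψ (Z N ω) - ψ (Z 0 ω) :=
        Finset.sum_range_sub (fun i => ψ (Z i ω)) N
      have s1 : S ω = ∑ i ∈ Finset.range N, (ψ (Z (i + 1) ω) - ψ (Z i ω)) +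
          ∑ i ∈ Finset.range N, h * (f (Z i ω) - e (Z i ω)) := by
        rw [hS, ← Finset.sum_add_distrib]
        refine Finset.sum_congr rfl fun i _ => ?_
        rw [← hp]; ring
      rw [s1, tel, ← Finset.mul_sum, Finset.sum_sub_distrib, Finset.sum_sub_distrib]
      simp only [Finset.sum_const, Finset.card_range, nsmul_eq_mul]
      ring
    rw [hT, ht]
    field_simp
    linear_combination a
  have hA : ∫⁻ ω, ENNReal.ofReal ((t * (ψ (Z 0 ω) - ψ (Z N ω))) ^ 2) ∂P ≤
      ENNReal.ofReal (C ^ 2 * (4 * k) * t) * I := by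
    refine J_bd (v := fun ω => (1 + ‖Z 0 ω‖) ^ 2 + (1 + ‖Z N ω‖) ^ 2) (k := 2 * C ^ 2 * t) (a := k + k)
      (by positivity) (fun ω => ?_) ?_ (le_of_eq (by ring))
    · have q := hψ1 (Z 0 ω) (Z N ω)
      have q2 : (ψ (Z 0 ω) - ψ (Z N ω)) ^ 2 ≤ C ^ 2 * (1 + ‖Z 0 ω‖ + ‖Z N ω‖) ^ 2 := by
        rw [← sq_abs, ← mul_pow]; gcongr
      have q3 : (1 + ‖Z 0 ω‖ + ‖Z N ω‖) ^ 2 ≤ 2 * ((1 + ‖Z 0 ω‖) ^ 2 + (1 + ‖Z N ω‖) ^ 2) := by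
        nlinarith [norm_nonneg (Z 0 ω), norm_nonneg (Z N ω), sq_nonneg (‖Z 0 ω‖ - ‖Z N ω‖)]
      calc _ = t * t * (ψ (Z 0 ω) - ψ (Z N ω)) ^ 2 := by ring
        _ ≤ t * 1 * (C ^ 2 * (2 * ((1 + ‖Z 0 ω‖) ^ 2 + (1 + ‖Z N ω‖) ^ 2))) := by
          have := q2.trans (mul_le_mul_of_nonneg_left q3 (sq_nonneg C))
          gcongr
        _ = _ := by ring
    · exact J_bd_add hk hk (by have := hZm 0; fun_prop) (fun ω => le_rfl) (hI 0) (hI N)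
  have hB : ∫⁻ ω, ENNReal.ofReal ((t * S ω) ^ 2) ∂P ≤ ENNReal.ofReal (C ^ 2 * (K * k) * t) * I := by
    have q := hZ.mart hG hψ hPψ (κ := C ^ 2 * K * h) (by positivity) hv hk hI N
    refine J_bd (k := t ^ 2) (by positivity) (fun ω => le_of_eq (mul_pow _ _ _)) q (le_of_eq ?_)
    rw [ht]; field_simp
  have hTT : ∫⁻ ω, ENNReal.ofReal (T ω ^ 2) ∂P ≤ ENNReal.ofReal (C ^ 2 * k * h) * I := by
    refine (avg_bd hZm hk hI (g := fun z => e z - e 0) (c := C * h) (fun z => ?_) N hN).trans ?_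
    · have := he1 z 0
      rwa [norm_zero, add_zero] at this
    · refine mul_le_mul_left (ENNReal.ofReal_le_ofReal ?_) _
      have : h * h ≤ h * 1 := by gcongr
      nlinarith [mul_nonneg (sq_nonneg C) hk]
  have hD : ∫⁻ _, ENNReal.ofReal ((e 0 - p) ^ 2) ∂P ≤ ENNReal.ofReal (C ^ 2 * h) * I := by
    rw [lintegral_const, measure_univ]
    gcongr
    rw [← sq_abs, abs_sub_comm]
    calc |p - e 0| ^ 2 ≤ (C * Real.sqrt h) ^ 2 := by gcongr
      _ = _ := by rw [mul_pow, Real.sq_sqrt hh.le]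
  have m1 : Measurable (fun ω => (t * (ψ (Z 0 ω) - ψ (Z N ω))) ^ 2) :=
    (((hψ.comp (hZm 0)).sub (hψ.comp (hZm N))).const_mul _).pow_const 2
  have m2 : Measurable (fun ω => (t * S ω) ^ 2) := (mS.const_mul _).pow_const 2
  have m3 : Measurable (fun ω => T ω ^ 2) := mT.pow_const 2
  have all := J_bd_add (by positivity) (by positivity) ((m1.add m2).add m3) (fun ω => le_rfl)
    (J_bd_add (by positivity) (by positivity) (m1.add m2) (fun ω => le_rfl)
      (J_bd_add (by positivity) (by positivity) m1 (fun ω => le_rfl) hA hB) hTT) hD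
  refine J_bd (k := 4) (by norm_num) (fun ω => ?_) all ?_
  · rw [id1]
    simp only [Pi.add_apply]
    set a := t * (ψ (Z 0 ω) - ψ (Z N ω))
    set b := t * S ω
    set c := T ω
    set d := e 0 - p
    nlinarith [sq_nonneg (a - b), sq_nonneg (a - c), sq_nonneg (a - d), sq_nonneg (b - c),
      sq_nonneg (b - d), sq_nonneg (c - d)]
  · have c2 := sq_nonneg C
    have e1 : 0 ≤ C ^ 2 * k * t := by positivity
    have e2 : 0 ≤ C ^ 2 * (K * k) * h := by positivity
    have e3 : 0 ≤ C ^ 2 * t := by positivity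
    have e4 : 0 ≤ C ^ 2 * k * h := by positivity
    nlinarith

theorem chain_err {U : E → ℝ} (hG : Good gU L m B) (hU : GoodU U gU L m B) (hγ : 0 < γ)
    (h1 : 4 * L ≤ γ) (h2 : 4 * L ≤ γ * m) {f : E × E → ℝ} (hf : Cls f) {l : ℝ} (hl : 0 < l)
    (hfl : ∀ z z', |f z - f z'| ≤ l * ‖z - z'‖) :
    ∃ C > (0 : ℝ), ∃ h₀ > (0 : ℝ), ∀ h : ℝ, 0 < h → h ≤ h₀ →
      ∀ {Ω : Type} {_ : MeasurableSpace Ω} {P : Measure Ω} {Z : ℕ → Ω → E × E} {ξ : ℕ → Ω → E},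
      Chain gU γ h P Z ξ → ∀ N : ℕ, 1 ≤ N →
      ∫⁻ ω, ENNReal.ofReal (((N : ℝ)⁻¹ * (∑ n ∈ Finset.range N, f (Z n ω)) -
        (∫ z, f z * rho U z) / (∫ z, rho U z)) ^ 2) ∂P ≤
      ENNReal.ofReal (C * (h + 1 / (N * h))) * ∫⁻ ω, ENNReal.ofReal ((1 + ‖Z 0 ω‖) ^ 2) ∂P := by
  obtain ⟨C, hC, h₀, hh₀, hh₀1, hps⟩ := poisson_bias hG hU hγ h1 h2 hf hl hfl
  obtain ⟨K, hK, hvar⟩ := var_bd (E := E) hG hγ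
  obtain ⟨k, hk, h₁, hh₁, hh₁1, hmom⟩ := Chain.mom hG hγ h1 h2
  set p := (∫ z, f z * rho U z) / (∫ z, rho U z) with hp
  set c := l + |f 0 - p| with hc
  have c0 : 0 < c := by positivity
  have fc : ∀ z, |f z - p| ≤ c * (1 + ‖z‖) := fun z => by
    have a := hfl z 0
    rw [sub_zero] at a
    have b : |f z - p| ≤ |f z - f 0| + |f 0 - p| := abs_sub_le _ _ _
    rw [hc]
    nlinarith [norm_nonneg z, abs_nonneg (f 0 - p), mul_nonneg (abs_nonneg (f 0 - p)) (norm_nonneg z)]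
  refine ⟨4 * C ^ 2 * (4 * k + K * k + 1) + c ^ 2 * k, by positivity, min h₀ h₁, lt_min hh₀ hh₁, ?_⟩
  intro h hh hhle Ω mΩ P Z ξ hZ N hN
  have a0 := hhle.trans (min_le_left _ _)
  have a1 := hhle.trans (min_le_right _ _)
  have hN0 : (0 : ℝ) < N := by exact_mod_cast hN
  have hI := hmom h hh a1 hZ
  have hI1 := one_le_I hZ.prob (fun ω => ‖Z 0 ω‖) (fun ω => norm_nonneg _)
  rcases le_total 1 ((N : ℝ) * h) with hNh | hNh
  · obtain ⟨ψ, e, cψ, ce, e1, e2, e3, e4, e5⟩ := hps h hh a0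
    refine (err_large hZ hG hh (by linarith) cψ.1 ((Pop_mk hG hγ hh (by linarith)).cls ψ cψ).1
      hf.1 ce.1 e1 hC.le hK.le e2 (hvar h hh (by linarith) ψ cψ C hC.le e3) e4 e5 hk.le hI1 hI N hN
      hNh).trans ?_
    gcongr ENNReal.ofReal (?_ * _) * _
    have : 0 ≤ c ^ 2 * k := by positivity
    linarith
  · have q := avg_bd (hZ.meas hG) hk.le hI (g := fun z => f z - p) fc N hN
    have e : ∀ ω, (N : ℝ)⁻¹ * (∑ n ∈ Finset.range N, f (Z n ω)) - p =
        (N : ℝ)⁻¹ * ∑ n ∈ Finset.range N, (f (Z n ω) - p) := fun ω => by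
      rw [Finset.sum_sub_distrib]
      simp only [Finset.sum_const, Finset.card_range, nsmul_eq_mul]
      field_simp
    simp only [e]
    refine q.trans ?_
    refine mul_le_mul_left (ENNReal.ofReal_le_ofReal ?_) _
    have t1 : 1 ≤ 1 / ((N : ℝ) * h) := by
      rw [le_div_iff₀ (by positivity)]; linarith
    have r : c ^ 2 * k * 1 ≤ (4 * C ^ 2 * (4 * k + K * k + 1) + c ^ 2 * k) * (h + 1 / (N * h)) := by
      gcongr
      · have : 0 ≤ 4 * C ^ 2 * (4 * k + K * k + 1) := by positivity
        linarith
      · linarith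
    linarith

end Final

end EM

theorem statement12 (d : ℕ) (hd : 1 ≤ d) (U : EuclideanSpace ℝ (Fin d) → ℝ)
    (f : EuclideanSpace ℝ (Fin d) × EuclideanSpace ℝ (Fin d) → ℝ)
    (C₁ m R C₂ : ℝ) (hC₁ : 0 < C₁) (hm : 0 < m) (hR : 0 < R) (hC₂ : 0 < C₂)
    -- A1
    (hU : ContDiff ℝ 3 U)
    (hU0 : ∀ x, |U x| ≤ C₁ * (‖x‖ + 1) ^ 2)
    (hU1 : ∀ x, ‖gradient U x‖ ≤ C₁ * (‖x‖ + 1))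
    (hU2 : ∀ x, ‖iteratedFDeriv ℝ 2 U x‖ ≤ C₁)
    (hU3 : ∀ x, ‖iteratedFDeriv ℝ 3 U x‖ ≤ C₁)
    -- A2
    (hconv : ∀ x, R ≤ ‖x‖ → ∀ y, m * ‖y‖ ^ 2 ≤ iteratedFDeriv ℝ 2 U x ![y, y])
    -- A3
    (hf : ContDiff ℝ 3 f)
    (hf1 : ∀ z, ‖iteratedFDeriv ℝ 1 f z‖ ≤ C₂)
    (hf2 : ∀ z, ‖iteratedFDeriv ℝ 2 f z‖ ≤ C₂)
    (hf3 : ∀ z, ‖iteratedFDeriv ℝ 3 f z‖ ≤ C₂)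
    -- the ensemble average π(f) of f under the Boltzmann distribution
    (πf : ℝ)
    (hπf : πf = (∫ z : EuclideanSpace ℝ (Fin d) × EuclideanSpace ℝ (Fin d),
          f z * Real.exp (-(‖z.2‖ ^ 2 / 2 + U z.1))) /
        (∫ z : EuclideanSpace ℝ (Fin d) × EuclideanSpace ℝ (Fin d),
          Real.exp (-(‖z.2‖ ^ 2 / 2 + U z.1)))) :
    ∃ γ₀ > (0 : ℝ), ∀ γ ≥ γ₀, ∃ C > (0 : ℝ), ∃ h₀ > (0 : ℝ), ∀ h : ℝ, 0 < h → h ≤ h₀ →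
      ∀ (Ω : Type) (_ : MeasurableSpace Ω) (P : Measure Ω), IsProbabilityMeasure P →
      ∀ X V ξ : ℕ → Ω → EuclideanSpace ℝ (Fin d),
        Measurable (X 0) → Measurable (V 0) →
        (∀ n, Measurable (ξ n)) →
        -- each ξ_n is a standard Gaussian random vector in ℝ^d
        (∀ n, Measure.map (fun ω i => ξ n ω i) P =
          Measure.pi fun _ : Fin d => gaussianReal 0 1) →
        -- (X₀,V₀), ξ₀, ξ₁, … are mutually independent
        iIndep (fun i : Option ℕ =>
          Option.elim i (MeasurableSpace.comap (fun ω => (X 0 ω, V 0 ω)) inferInstance)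
            fun n => MeasurableSpace.comap (ξ n) inferInstance) P →
        -- Euler–Maruyama recursion
        (∀ n ω, X (n + 1) ω = X n ω + h • V n ω) →
        (∀ n ω, V (n + 1) ω = V n ω - h • gradient U (X n ω) - (γ * h) • V n ω
            + Real.sqrt (2 * γ * h) • ξ n ω) →
        -- finite initial second moment
        (∫⁻ ω, ENNReal.ofReal ((‖X 0 ω‖ + ‖V 0 ω‖ + 1) ^ 2) ∂P) < ∞ →
        ∀ N : ℕ, 1 ≤ N →
          (∫⁻ ω, ENNReal.ofReal
              ((((N : ℝ))⁻¹ * (∑ n ∈ Finset.range N, f (X n ω, V n ω)) - πf) ^ 2) ∂P) ≤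
            ENNReal.ofReal (C * (h + 1 / (N * h))) *
              ∫⁻ ω, ENNReal.ofReal ((‖X 0 ω‖ + ‖V 0 ω‖ + 1) ^ 2) ∂P := by
  obtain ⟨hG, hGU⟩ := EM.good_of hC₁ hm hR hU hU1 hU2 hconv
  have fl := EM.f_lip hf hf1
  have fc := EM.f_cls hC₂ hf.continuous fl
  refine ⟨4 * C₁ + 4 * C₁ / m, by positivity, fun γ hγ => ?_⟩
  have hγ0 : 0 < γ := lt_of_lt_of_le (by positivity) hγ
  have q1 : 0 < 4 * C₁ / m := by positivity
  have g1 : 4 * C₁ ≤ γ := by linarith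
  have g2 : 4 * C₁ ≤ γ * m := by
    rw [← div_le_iff₀ hm]
    linarith
  obtain ⟨C, hC, h₀, hh₀, H⟩ := EM.chain_err hG hGU hγ0 g1 g2 fc hC₂ fl
  refine ⟨C, hC, h₀, hh₀, ?_⟩
  intro h hh hhle Ω mΩ P hP X V ξ mX mV mξ lξ hind hX hV _ N hN
  have hZ : EM.Chain (gradient U) γ h P (fun n ω => (X n ω, V n ω)) ξ := by
    refine ⟨hP, mX.prodMk mV, mξ, fun n => ?_, hind, fun n ω => ?_⟩
    · rw [← map_pi_eq_stdGaussian, ← lξ n, Measure.map_map (by fun_prop)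
        (measurable_pi_lambda _ fun i => by have := mξ n; fun_prop)]
      rfl
    · simp only [EM.stp, hX, hV]
  have := H h hh hhle hZ N hN
  rw [hπf]
  refine this.trans ?_
  refine mul_le_mul_right (lintegral_mono fun ω => ENNReal.ofReal_le_ofReal ?_) _
  have a := norm_nonneg (X 0 ω)
  have b := norm_nonneg (V 0 ω)
  have : ‖(X 0 ω, V 0 ω)‖ ≤ ‖X 0 ω‖ + ‖V 0 ω‖ := by
    rw [Prod.norm_def]
    exact max_le (by simp) (by simp)
  refine pow_le_pow_left₀ (by positivity) ?_ 2
  show 1 + ‖(X 0 ω, V 0 ω)‖ ≤ _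
  linarith
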